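/- arXiv:1504.06213 — 2 statements merged into one kernel-verified Lean document; each statement's English description precedes it below -/
import Mathlib

section
/- Let 0 ≤ μ < 1, δ = (1−μ)/2, p = N^{−μ−δ}, and let F be a field of characteristic zero. Let P ∈ F[X_1,…,X_N] be of degree n with P = ∑_{i=1}^{T} α_i ∏_{j=1}^{d} Q_{ij} where each Q_{ij} depends on at most N^μ variables. Let m, r, s be positive integers satisfying m + r·s ≤ N/2, and let M be any set of multilinear monomials of degree exactly r. If T·d ≤ N^{s·δ/4}, then there is an absolute constant c such that with probability at least 1 − N^{−(3/4)·δ·s} over V ← D_p, Φ_{M,m}(P|_V) ≤ T·d²·n³ · r·s · 2^{c·√n} · binom(N, m + r·s) · binom(n+r, r). -/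
open MvPolynomial

/-- Projection of a polynomial onto the multilinear monomials in its support. -/
noncomputable def mlProj {F : Type*} [Field F] {σ : Type*} [Fintype σ] [DecidableEq σ]
    (P : MvPolynomial σ F) : MvPolynomial σ F :=
  ∑ m ∈ P.support.filter (fun m => ∀ v, m v ≤ 1), monomial m (coeff m P)

/-- Partial derivative of `P` with respect to the monomial `γ` (iterating `∂/∂X_v`
according to the exponents of `γ`). -/
noncomputable def monDeriv {F : Type*} [Field F] {σ : Type*} [Fintype σ] [DecidableEq σ]
    (γ : σ →₀ ℕ) (P : MvPolynomial σ F) : MvPolynomial σ F :=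
  (Finset.univ : Finset σ).toList.foldr (fun v Q => (fun R => pderiv v R)^[γ v] Q) P

/-- The dimension of the space of `(M, m)`-projected shifted partial derivatives of `P`. -/
noncomputable def Phi {σ : Type*} [Fintype σ] [DecidableEq σ] (F : Type*) [Field F]
    (M : Set (σ →₀ ℕ)) (m : ℕ) (P : MvPolynomial σ F) : ℕ :=
  Module.finrank F (Submodule.span F
    {q : MvPolynomial σ F | ∃ γ ∈ M, ∃ S : Finset σ, S.card = m ∧
      q = mlProj ((∏ i ∈ S, X i) * monDeriv γ P)})

/-- Restriction of `P`: substitute `0` for every variable outside `V`. -/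
noncomputable def restrictPoly {F : Type*} [Field F] {σ : Type*} [DecidableEq σ]
    (V : Finset σ) (P : MvPolynomial σ F) : MvPolynomial σ F :=
  aeval (fun v => if v ∈ V then X v else 0) P

/-- Probability, under the product distribution where each variable is kept alive
independently with probability `p`, of the event `E` of subsets of the variables. -/
noncomputable def restrictProb (σ : Type*) [Fintype σ] (p : ℝ) (E : Finset σ → Prop) : ℝ := by
  classical
  exact ∑ V : Finset σ, if E V then p ^ V.card * (1 - p) ^ (Fintype.card σ - V.card) else 0

/-- Multiplicity functions of the partitions of the numbers at most `n`: the part `a + 1`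
occurs `f a` times. -/
def partMults (n : ℕ) : Finset (Fin n → ℕ) :=
  (Fintype.piFinset fun _ => Finset.range (n + 1)).filter
    fun f => ∑ a : Fin n, ((a : ℕ) + 1) * f a ≤ n

lemma mem_partMults {n : ℕ} {f : Fin n → ℕ} :
    f ∈ partMults n ↔ ∑ a : Fin n, ((a : ℕ) + 1) * f a ≤ n := by
  simp only [partMults, Finset.mem_filter, Fintype.mem_piFinset, Finset.mem_range,
    and_iff_right_iff_imp]
  intro h a
  have := Finset.single_le_sum (f := fun a : Fin n => ((a : ℕ) + 1) * f a)
    (fun _ _ => Nat.zero_le _) (Finset.mem_univ a)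
  nlinarith

lemma card_partMults_mul_pow_le (n : ℕ) {x : ℝ} (hx0 : 0 < x) (hx1 : x < 1) :
    (partMults n).card * x ^ n ≤ ∏ a ∈ Finset.range n, (1 - x ^ (a + 1))⁻¹ := by
  calc (partMults n).card * x ^ n = ∑ f ∈ partMults n, x ^ n := by simp
    _ ≤ ∑ f ∈ partMults n, ∏ a : Fin n, (x ^ ((a : ℕ) + 1)) ^ f a := by
        refine Finset.sum_le_sum fun f hf => ?_
        simp only [← pow_mul, Finset.prod_pow_eq_pow_sum]
        exact pow_le_pow_of_le_one hx0.le hx1.le (mem_partMults.1 hf)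
    _ ≤ ∑ f ∈ Fintype.piFinset fun _ : Fin n => Finset.range (n + 1),
          ∏ a : Fin n, (x ^ ((a : ℕ) + 1)) ^ f a :=
        Finset.sum_le_sum_of_subset_of_nonneg (Finset.filter_subset _ _)
          fun _ _ _ => by positivity
    _ = ∏ a : Fin n, ∑ i ∈ Finset.range (n + 1), (x ^ ((a : ℕ) + 1)) ^ i :=
        (Finset.prod_univ_sum _ _).symm
    _ ≤ ∏ a : Fin n, (1 - x ^ ((a : ℕ) + 1))⁻¹ := by
        refine Finset.prod_le_prod (fun _ _ => by positivity) fun a _ => ?_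
        have h1 : x ^ ((a : ℕ) + 1) < 1 := pow_lt_one₀ hx0.le hx1 (by omega)
        rw [← tsum_geometric_of_lt_one (by positivity) h1]
        exact (summable_geometric_of_lt_one (by positivity) h1).sum_le_tsum _
          fun _ _ => by positivity
    _ = _ := Fin.prod_univ_eq_prod_range (fun a => (1 - x ^ (a + 1))⁻¹) n

lemma inv_one_sub_inv_pow_le {y t : ℝ} {k : ℕ} (ht : 0 < t) (h : 1 + t ≤ y ^ k) :
    (1 - (y⁻¹) ^ k)⁻¹ ≤ 1 + t⁻¹ := by
  have hy : 0 < y ^ k := by linarith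
  rw [inv_pow]
  have h1 : (1 : ℝ) - (y ^ k)⁻¹ = (y ^ k - 1) / y ^ k := by field_simp
  rw [h1, inv_div, div_le_iff₀ (by linarith)]
  have : t⁻¹ * t = 1 := inv_mul_cancel₀ ht.ne'
  have : t⁻¹ * t ≤ t⁻¹ * (y ^ k - 1) := by gcongr; linarith
  nlinarith

lemma prod_inv_one_sub_le_choose {q : ℕ} (hq : 0 < q) (k : ℕ) :
    ∏ a ∈ Finset.range k, (1 - ((1 + 1 / (q : ℝ))⁻¹) ^ (a + 1))⁻¹ ≤ (q + k).choose k := by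
  have hq' : (0 : ℝ) < q := by exact_mod_cast hq
  induction k with
  | zero => simp
  | succ k ih =>
    rw [Finset.prod_range_succ]
    have hb : 1 + ((k : ℝ) + 1) / q ≤ (1 + 1 / (q : ℝ)) ^ (k + 1) := by
      have := one_add_mul_le_pow (a := 1 / (q : ℝ)) (by have : 0 < 1 / (q : ℝ) := by positivity
                                                        linarith) (k + 1)
      push_cast at this
      calc _ = _ := by ring
        _ ≤ _ := this
    have h1 := inv_one_sub_inv_pow_le (by positivity) hb
    have h2 : ((q + (k + 1)).choose (k + 1) : ℝ)
        = (q + k).choose k * (1 + (((k : ℝ) + 1) / q)⁻¹) := by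
      have := Nat.add_one_mul_choose_eq (q + k) k
      have h3 : ((q : ℝ) + k + 1) * (q + k).choose k = (q + k + 1).choose (k + 1) * (k + 1) := by
        exact_mod_cast this
      rw [← add_assoc]
      field_simp
      linarith
    rw [h2]
    refine mul_le_mul ih h1 ?_ (by positivity)
    rw [inv_nonneg, sub_nonneg]
    exact pow_le_one₀ (by positivity) (inv_le_one_of_one_le₀ (by
      have : 0 < 1 / (q : ℝ) := by positivity
      linarith))

lemma one_add_choose_two_le_pow {t : ℝ} (ht : 0 ≤ t) (k : ℕ) :
    1 + (k + 1) * k / 2 * t ^ 2 ≤ (1 + t) ^ (k + 1) := by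
  induction k with
  | zero => simp; exact ht
  | succ k ih =>
    have h := one_add_mul_le_pow (a := t) (by linarith) (k + 1)
    rw [pow_succ _ (k + 1)]
    push_cast at h ⊢
    nlinarith [mul_le_mul_of_nonneg_left h ht]

lemma prod_inv_one_sub_le_exp {q : ℕ} (hq : 0 < q) (j : ℕ) :
    ∏ a ∈ Finset.range (q + j), (1 - ((1 + 1 / (q : ℝ))⁻¹) ^ (a + 1))⁻¹ ≤
      4 ^ q * Real.exp (2 * q - 2 * q ^ 2 / (q + j)) := by
  have hq' : (0 : ℝ) < q := by exact_mod_cast hq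
  induction j with
  | zero =>
    refine (prod_inv_one_sub_le_choose hq q).trans ?_
    have h1 : (2 * (q : ℝ) - 2 * q ^ 2 / (q + (0 : ℕ))) = 0 := by
      push_cast; field_simp; ring
    rw [h1, Real.exp_zero, mul_one, ← two_mul]
    have h2 : (2 * q).choose q ≤ 2 ^ (2 * q) := Nat.choose_le_two_pow _ _
    rw [pow_mul] at h2
    exact_mod_cast h2
  | succ j ih =>
    rw [← add_assoc, Finset.prod_range_succ]
    have hb := one_add_choose_two_le_pow (t := 1 / (q : ℝ)) (by positivity) (q + j)
    push_cast at hb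
    have h1 := inv_one_sub_inv_pow_le (by positivity) hb
    have h2 : (2 * (q : ℝ) - 2 * q ^ 2 / (q + (j + 1 : ℕ))) =
        (2 * q - 2 * q ^ 2 / (q + j)) +
          ((((q : ℝ) + j) + 1) * (q + j) / 2 * (1 / (q : ℝ)) ^ 2)⁻¹ := by
      push_cast
      field_simp
      ring
    rw [h2, Real.exp_add, ← mul_assoc]
    refine mul_le_mul ih (h1.trans ?_) ?_ (by positivity)
    · rw [add_comm]; exact Real.add_one_le_exp _
    rw [inv_nonneg, sub_nonneg]
    exact pow_le_one₀ (by positivity) (inv_le_one_of_one_le₀ (by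
      have : 0 < 1 / (q : ℝ) := by positivity
      linarith))

lemma card_partMults_le {n : ℕ} (hn : 0 < n) :
    ((partMults n).card : ℝ) ≤ 2 ^ (16 * Real.sqrt n) := by
  set q := Nat.sqrt n + 1 with hq
  have hq0 : 0 < q := by omega
  have hq' : (0 : ℝ) < q := by exact_mod_cast hq0
  have hnq : n ≤ q * q := (Nat.lt_succ_sqrt n).le
  have hinv : 0 < 1 / (q : ℝ) := by positivity
  have hx0 : 0 < (1 + 1 / (q : ℝ))⁻¹ := by positivity
  have hx1 : (1 + 1 / (q : ℝ))⁻¹ < 1 := inv_lt_one_of_one_lt₀ (by linarith)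
  have hfac : ∀ a : ℕ, 1 ≤ (1 - ((1 + 1 / (q : ℝ))⁻¹) ^ (a + 1))⁻¹ := fun a => by
    have h1 : ((1 + 1 / (q : ℝ))⁻¹) ^ (a + 1) < 1 := pow_lt_one₀ hx0.le hx1 (by omega)
    have h2 : 0 < ((1 + 1 / (q : ℝ))⁻¹) ^ (a + 1) := by positivity
    exact (one_le_inv₀ (by linarith)).2 (by linarith)
  have h1 : ∏ a ∈ Finset.range n, (1 - ((1 + 1 / (q : ℝ))⁻¹) ^ (a + 1))⁻¹ ≤
      4 ^ q * Real.exp (2 * q) := by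
    calc _ ≤ ∏ a ∈ Finset.range (q + n), (1 - ((1 + 1 / (q : ℝ))⁻¹) ^ (a + 1))⁻¹ := by
          rw [add_comm q n, Finset.prod_range_add]
          refine le_mul_of_one_le_right (Finset.prod_nonneg fun a _ => zero_le_one.trans (hfac a)) ?_
          exact Finset.one_le_prod fun a _ => hfac (n + a)
      _ ≤ _ := prod_inv_one_sub_le_exp hq0 n
      _ ≤ _ := by
          gcongr
          have : 0 ≤ 2 * (q : ℝ) ^ 2 / (q + n) := by positivity
          linarith
  have h2 := (card_partMults_mul_pow_le n hx0 hx1).trans h1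
  have h3 : (1 + 1 / (q : ℝ)) ^ n ≤ Real.exp q := by
    calc (1 + 1 / (q : ℝ)) ^ n ≤ (1 + 1 / (q : ℝ)) ^ (q * q) :=
          pow_le_pow_right₀ (by linarith) hnq
      _ ≤ (Real.exp (1 / q)) ^ (q * q) := by
          gcongr; rw [add_comm]; exact Real.add_one_le_exp _
      _ = Real.exp q := by
          rw [← Real.exp_nat_mul]; congr 1; push_cast; field_simp
  have h4 : ((partMults n).card : ℝ) ≤ 4 ^ q * Real.exp (2 * q) * Real.exp q := by
    rw [inv_pow, ← div_eq_mul_inv, div_le_iff₀ (by positivity)] at h2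
    exact h2.trans (by gcongr)
  have h5 : Real.exp q ≤ 4 ^ q := by
    have := Real.exp_one_lt_d9
    calc Real.exp q = Real.exp 1 ^ q := by rw [← Real.exp_nat_mul]; simp
      _ ≤ 4 ^ q := by gcongr; linarith
  have h6 : Real.exp (2 * q) = Real.exp q * Real.exp q := by rw [← Real.exp_add, two_mul]
  have h7 : (q : ℝ) ≤ 2 * Real.sqrt n := by
    have h8 : (Nat.sqrt n : ℝ) ≤ Real.sqrt n := Real.nat_sqrt_le_real_sqrt
    have h9 : 1 ≤ Real.sqrt n := Real.one_le_sqrt.2 (by exact_mod_cast hn)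
    rw [hq]; push_cast; linarith
  calc ((partMults n).card : ℝ) ≤ 4 ^ q * Real.exp (2 * q) * Real.exp q := h4
    _ ≤ 4 ^ q * (4 ^ q * 4 ^ q) * 4 ^ q := by rw [h6]; gcongr
    _ = (2 : ℝ) ^ (8 * (q : ℝ)) := by
        rw [Real.rpow_mul (by norm_num), Real.rpow_natCast,
          show (4 : ℝ) ^ q * (4 ^ q * 4 ^ q) * 4 ^ q = (4 ^ 4) ^ q by rw [← pow_mul]; ring]
        norm_num
    _ ≤ _ := Real.rpow_le_rpow_of_exponent_le (by norm_num) (by linarith)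

/-- Binomial coefficients `N.choose (m + t)` with `t ≤ k`, summed below the middle. -/
lemma sum_choose_le_mul_choose {N m k : ℕ} (h : m + k ≤ N / 2) :
    ∑ t ∈ Finset.range (k + 1), N.choose (m + t) ≤ (k + 1) * N.choose (m + k) := by
  have hmono : ∀ t ≤ k, N.choose (m + t) ≤ N.choose (m + k) := by
    intro t ht
    induction k, ht using Nat.le_induction with
    | base => rfl
    | succ j hj ih =>
      exact (ih (by omega)).trans (Nat.choose_le_succ_of_lt_half_left (r := m + j) (by omega))
  calc _ ≤ ∑ t ∈ Finset.range (k + 1), N.choose (m + k) :=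
        Finset.sum_le_sum fun t ht => hmono t (by simpa [Nat.lt_succ_iff] using ht)
    _ = _ := by simp

lemma card_filter_card_mem_Icc_le {σ : Type*} [Fintype σ] {m k : ℕ}
    (h : m + k ≤ Fintype.card σ / 2) :
    ((Finset.univ : Finset (Finset σ)).filter fun D => m ≤ D.card ∧ D.card ≤ m + k).card ≤
      (k + 1) * (Fintype.card σ).choose (m + k) := by
  classical
  refine le_trans ?_ (sum_choose_le_mul_choose h)
  calc _ ≤ ((Finset.range (k + 1)).biUnion fun t =>
          Finset.powersetCard (m + t) (Finset.univ : Finset σ)).card := by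
        refine Finset.card_le_card fun D hD => ?_
        simp only [Finset.mem_filter, Finset.mem_univ, true_and] at hD
        simp only [Finset.mem_biUnion, Finset.mem_range, Finset.mem_powersetCard,
          Finset.subset_univ, true_and]
        exact ⟨D.card - m, by omega, by omega⟩
    _ ≤ _ := Finset.card_biUnion_le
    _ = _ := by simp

lemma card_powerset_filter_card_le {J : Type*} {Z : Finset J} {n r : ℕ}
    (hZ : Z.card ≤ n) : (Z.powerset.filter fun B => B.card ≤ r).card ≤ (n + r).choose r := by
  classical
  calc _ ≤ ((Finset.range (r + 1)).biUnion fun t => Finset.powersetCard t Z).card := by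
        refine Finset.card_le_card fun D hD => ?_
        simp only [Finset.mem_filter, Finset.mem_powerset] at hD
        simp only [Finset.mem_biUnion, Finset.mem_range, Finset.mem_powersetCard]
        exact ⟨D.card, by omega, hD.1, rfl⟩
    _ ≤ _ := Finset.card_biUnion_le
    _ ≤ ∑ t ∈ Finset.range (r + 1), n.choose t * r.choose (r - t) := by
        refine Finset.sum_le_sum fun t ht => ?_
        rw [Finset.card_powersetCard]
        exact (Nat.choose_le_choose t hZ).trans
          (Nat.le_mul_of_pos_right _ (Nat.choose_pos (Nat.sub_le _ _)))
    _ = (n + r).choose r := by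
        rw [Nat.add_choose_eq, Finset.Nat.sum_antidiagonal_eq_sum_range_succ_mk]

section Restriction

variable {σ : Type*} [Fintype σ] [DecidableEq σ]

lemma sum_weight_superset (p : ℝ) (B : Finset σ) :
    ∑ V : Finset σ, (if B ⊆ V then p ^ V.card * (1 - p) ^ (Fintype.card σ - V.card) else 0) =
      p ^ B.card := by
  rw [← Finset.sum_filter]
  have h := Finset.sum_pow_mul_eq_add_pow p (1 - p) Bᶜ
  rw [add_sub_cancel p 1, one_pow] at h
  trans p ^ B.card * ∑ t ∈ Bᶜ.powerset, p ^ t.card * (1 - p) ^ (Bᶜ.card - t.card)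
  swap
  · rw [h, mul_one]
  rw [Finset.mul_sum]
  symm
  refine Finset.sum_bij' (fun W _ => B ∪ W) (fun V _ => V \ B) ?_ ?_ ?_ ?_ ?_
  · intro W hW; simp
  · intro V hV
    simp only [Finset.mem_powerset]
    intro x hx
    simp_all
  · intro W hW
    rw [Finset.mem_powerset] at hW
    exact Finset.union_sdiff_cancel_left (disjoint_compl_right.mono_right hW)
  · intro V hV
    simp only [Finset.mem_filter, Finset.mem_univ, true_and] at hV
    exact Finset.union_sdiff_of_subset hV
  · intro W hW
    rw [Finset.mem_powerset] at hW
    rw [Finset.card_union_of_disjoint (disjoint_compl_right.mono_right hW), Finset.card_compl,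
      pow_add, Nat.sub_sub, mul_assoc]

/-- Union bound: under the restriction, all of finitely many small sets of variables keep at
most `s` variables, except with small probability. -/
lemma one_sub_le_restrictProb {I : Type*} [Fintype I] (A : I → Finset σ) {p K : ℝ} (hp0 : 0 ≤ p)
    (hp1 : p ≤ 1) {s : ℕ} (hA : ∀ i, ((A i).card : ℝ) ≤ K) (E : Finset σ → Prop)
    (hE : ∀ V, (∀ i, (A i ∩ V).card ≤ s) → E V) :
    1 - Fintype.card I * (K * p) ^ s ≤ restrictProb σ p E := by
  classical
  set w : Finset σ → ℝ := fun V => p ^ V.card * (1 - p) ^ (Fintype.card σ - V.card) with hw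
  have hw0 : ∀ V, 0 ≤ w V := fun V => by
    have : 0 ≤ 1 - p := by linarith
    positivity
  have htot : ∑ V, w V = 1 := by simpa using sum_weight_superset (σ := σ) p ∅
  have hsup : ∀ B : Finset σ, ∑ V, (if B ⊆ V then w V else 0) = p ^ B.card :=
    sum_weight_superset p
  have hpt : ∀ V, w V ≤ (if E V then w V else 0) +
      ∑ i, ∑ B ∈ (A i).powersetCard s, if B ⊆ V then w V else 0 := by
    intro V
    have hnn : ∀ i, 0 ≤ ∑ B ∈ (A i).powersetCard s, if B ⊆ V then w V else 0 := fun i =>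
      Finset.sum_nonneg fun B _ => by split_ifs <;> simp [hw0]
    by_cases hV : E V
    · rw [if_pos hV]
      linarith [Finset.sum_nonneg fun i (_ : i ∈ Finset.univ) => hnn i]
    · obtain ⟨i, hi⟩ : ∃ i, s < (A i ∩ V).card := by
        by_contra! hcon
        exact hV (hE V hcon)
      obtain ⟨B, hB, hBs⟩ := Finset.exists_subset_card_eq hi.le
      rw [if_neg hV, zero_add]
      refine le_trans ?_ (Finset.single_le_sum (fun i _ => hnn i) (Finset.mem_univ i))
      refine le_trans ?_ (Finset.single_le_sum
        (f := fun B => if B ⊆ V then w V else 0)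
        (fun B _ => by split_ifs <;> simp [hw0])
        (Finset.mem_powersetCard.2 ⟨hB.trans Finset.inter_subset_left, hBs⟩))
      rw [if_pos (hB.trans Finset.inter_subset_right)]
  have hsum := Finset.sum_le_sum fun V (_ : V ∈ Finset.univ) => hpt V
  rw [htot, Finset.sum_add_distrib, Finset.sum_comm] at hsum
  have hbound : ∀ i, ∑ V, ∑ B ∈ (A i).powersetCard s, (if B ⊆ V then w V else 0) ≤
      (K * p) ^ s := by
    intro i
    rw [Finset.sum_comm]
    calc _ = ∑ B ∈ (A i).powersetCard s, p ^ s := Finset.sum_congr rfl fun B hB => by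
          rw [hsup, (Finset.mem_powersetCard.1 hB).2]
      _ = ((A i).card.choose s : ℝ) * p ^ s := by simp
      _ ≤ K ^ s * p ^ s := by
          gcongr
          calc ((A i).card.choose s : ℝ) ≤ (A i).card ^ s := by
                exact_mod_cast Nat.choose_le_pow _ _
            _ ≤ K ^ s := by gcongr; exact hA i
      _ = _ := (mul_pow _ _ _).symm
  have hfin := Finset.sum_le_sum fun i (_ : i ∈ Finset.univ) => hbound i
  have hE' : restrictProb σ p E = ∑ V, if E V then w V else 0 := rfl
  rw [Finset.sum_const, nsmul_eq_mul, Finset.card_univ] at hfin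
  rw [hE']
  linarith

end Restriction

section Newton

variable {F A J : Type*} [Field F] [CommRing A] [Algebra F A] [Fintype J]

lemma mul_mem_span_prod_pow {n : ℕ} (p : Fin n → A) {l : ℕ} (a : Fin n) {x : A}
    (hx : x ∈ Submodule.span F {x | ∃ f : Fin n → ℕ, ∑ a : Fin n, ((a : ℕ) + 1) * f a = l ∧
      x = ∏ a, p a ^ f a}) :
    x * p a ∈ Submodule.span F {x | ∃ f : Fin n → ℕ,
      ∑ a : Fin n, ((a : ℕ) + 1) * f a = l + (a + 1) ∧ x = ∏ a, p a ^ f a} := by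
  induction hx using Submodule.span_induction with
  | mem x hx =>
    obtain ⟨f, hf, rfl⟩ := hx
    refine Submodule.subset_span ⟨f + Pi.single a 1, ?_, ?_⟩
    · simp only [Pi.add_apply, mul_add, Finset.sum_add_distrib, hf]
      simp [Pi.single_apply]
    · simp only [Pi.add_apply, pow_add, Finset.prod_mul_distrib]
      simp [Pi.single_apply, pow_ite]
  | zero => simp
  | add x y _ _ hx hy => rw [add_mul]; exact add_mem hx hy
  | smul c x _ hx => rw [smul_mul_assoc]; exact Submodule.smul_mem _ _ hx

/-- In characteristic zero, elementary symmetric polynomials are combinations of products of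
power sums. -/
lemma aeval_esymm_mem_span_prod_pow [CharZero F] (y : J → A) (n l : ℕ) (hl : l ≤ n) :
    aeval y (esymm J F l) ∈ Submodule.span F {x | ∃ f : Fin n → ℕ,
      ∑ a : Fin n, ((a : ℕ) + 1) * f a = l ∧
        x = ∏ a : Fin n, (∑ j, y j ^ ((a : ℕ) + 1)) ^ f a} := by
  induction l using Nat.strong_induction_on with
  | _ l ih =>
    rcases Nat.eq_zero_or_pos l with rfl | hpos
    · exact Submodule.subset_span ⟨0, by simp, by simp⟩
    have hl0 : (l : F) ≠ 0 := by exact_mod_cast hpos.ne'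
    have key : aeval y (esymm J F l) = (l : F)⁻¹ • (aeval y ((l : MvPolynomial J F) *
        esymm J F l)) := by
      rw [map_mul, map_natCast, ← nsmul_eq_mul, ← Nat.cast_smul_eq_nsmul F, smul_smul,
        inv_mul_cancel₀ hl0, one_smul]
    rw [key, mul_esymm_eq_sum]
    refine Submodule.smul_mem _ _ ?_
    rw [map_mul, map_sum, Finset.mul_sum]
    refine Submodule.sum_mem _ fun b hb => ?_
    obtain ⟨hb1, hb2⟩ := Finset.mem_filter.1 hb
    rw [Finset.HasAntidiagonal.mem_antidiagonal] at hb1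
    have hmem := mul_mem_span_prod_pow (F := F)
      (fun a : Fin n => ∑ j, y j ^ ((a : ℕ) + 1)) ⟨b.2 - 1, by omega⟩ (ih b.1 hb2 (by omega))
    have h2 : b.2 - 1 + 1 = b.2 := by omega
    simp only [h2, hb1] at hmem
    have h3 : aeval y ((-1) ^ (l + 1) : MvPolynomial J F) *
        aeval y ((-1) ^ b.1 * esymm J F b.1 * psum J F b.2) =
        ((-1 : F) ^ (l + 1) * (-1) ^ b.1) •
          (aeval y (esymm J F b.1) * ∑ j, y j ^ b.2) := by
      simp only [psum, map_mul, map_pow, map_neg, map_one, map_sum, aeval_X, Algebra.smul_def]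
      ring
    rw [h3]
    exact Submodule.smul_mem _ _ hmem

lemma prod_one_add_eq_sum_aeval_esymm (y : J → A) :
    ∏ j, (1 + y j) = ∑ l ∈ Finset.range (Fintype.card J + 1), aeval y (esymm J F l) := by
  rw [Finset.prod_one_add, Finset.sum_powerset]
  simp [esymm, map_sum, map_prod]

end Newton

section Support

variable {F σ : Type*} [Field F]

open scoped Pointwise in
lemma mul_mem_restrictSupport {A B D : Set (σ →₀ ℕ)} (h : ∀ a ∈ A, ∀ b ∈ B, a + b ∈ D)
    {P Q : MvPolynomial σ F} (hP : P ∈ restrictSupport F A) (hQ : Q ∈ restrictSupport F B) :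
    P * Q ∈ restrictSupport F D := by
  refine restrictSupport_mono F (s := A + B) ?_ ?_
  · rintro _ ⟨a, ha, b, hb, rfl⟩
    exact h a ha b hb
  · rw [restrictSupport_add]
    exact Submodule.mul_mem_mul hP hQ

lemma pderiv_mem_restrictSupport {A B : Set (σ →₀ ℕ)} {v : σ}
    (h : ∀ e ∈ A, e v ≠ 0 → e - Finsupp.single v 1 ∈ B) {P : MvPolynomial σ F}
    (hP : P ∈ restrictSupport F A) : pderiv v P ∈ restrictSupport F B := by
  rw [restrictSupport_eq_span] at hP
  induction hP using Submodule.span_induction with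
  | mem x hx =>
    obtain ⟨e, he, rfl⟩ := hx
    rw [pderiv_monomial]
    by_cases hev : e v = 0
    · simp [hev]
    · exact (monomial_mem_restrictSupport F).2 (Or.inl (h e he hev))
  | zero => simp
  | add x y _ _ hx hy => rw [map_add]; exact add_mem hx hy
  | smul c x _ hx => rw [Derivation.map_smul]; exact Submodule.smul_mem _ _ hx

/-- Polynomials all of whose monomials involve at most `k` variables. -/
noncomputable def fewVars (F σ : Type*) [Field F] (k : ℕ) : Submodule F (MvPolynomial σ F) :=
  restrictSupport F {e | e.support.card ≤ k}

lemma fewVars_mono {k l : ℕ} (h : k ≤ l) : fewVars F σ k ≤ fewVars F σ l :=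
  restrictSupport_mono F fun _ (he : _ ≤ k) => he.trans h

lemma mem_fewVars_of_card_vars_le {k : ℕ} {P : MvPolynomial σ F} (h : P.vars.card ≤ k) :
    P ∈ fewVars F σ k := by
  rw [fewVars, mem_restrictSupport_iff]
  intro e he
  refine (Finset.card_le_card fun v hv => ?_).trans h
  exact (mem_vars_iff_mem_support v).2 ⟨e, he, hv⟩

lemma mul_mem_fewVars {k l : ℕ} {P Q : MvPolynomial σ F} (hP : P ∈ fewVars F σ k)
    (hQ : Q ∈ fewVars F σ l) : P * Q ∈ fewVars F σ (k + l) := by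
  classical
  refine mul_mem_restrictSupport (fun a ha b hb => ?_) hP hQ
  exact (Finset.card_le_card Finsupp.support_add).trans
    ((Finset.card_union_le _ _).trans (add_le_add ha hb))

lemma pderiv_mem_fewVars {k : ℕ} {P : MvPolynomial σ F} (hP : P ∈ fewVars F σ k) (v : σ) :
    pderiv v P ∈ fewVars F σ k :=
  pderiv_mem_restrictSupport (fun _ (he : _ ≤ k) _ =>
    (Finset.card_le_card (Finsupp.support_mono tsub_le_self)).trans he) hP

lemma degree_sub_single_add_one {e : σ →₀ ℕ} {v : σ} (h : e v ≠ 0) :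
    (e - Finsupp.single v 1).degree + 1 = e.degree := by
  have : e - Finsupp.single v 1 + Finsupp.single v 1 = e :=
    tsub_add_cancel_of_le (Finsupp.single_le_iff.2 (Nat.one_le_iff_ne_zero.2 h))
  conv_rhs => rw [← this]
  simp

/-- Polynomials all of whose monomials have degree at least `k - l`. -/
noncomputable def highDegree (F σ : Type*) [Field F] (k l : ℕ) : Submodule F (MvPolynomial σ F) :=
  restrictSupport F {e | k ≤ e.degree + l}

lemma pderiv_mem_highDegree {k l : ℕ} {P : MvPolynomial σ F} (hP : P ∈ highDegree F σ k l)
    (v : σ) : pderiv v P ∈ highDegree F σ k (l + 1) :=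
  pderiv_mem_restrictSupport (fun e (he : k ≤ _) hev => by
    have := degree_sub_single_add_one hev
    change k ≤ _
    omega) hP

lemma mul_mem_highDegree {k l : ℕ} {P Q : MvPolynomial σ F} (hP : P ∈ highDegree F σ k 0)
    (hQ : Q ∈ highDegree F σ l 0) : P * Q ∈ highDegree F σ (k + l) 0 :=
  mul_mem_restrictSupport (fun a (ha : k ≤ _) b (hb : l ≤ _) => by
    change k + l ≤ _
    rw [map_add]
    omega) hP hQ

lemma mem_highDegree_zero (P : MvPolynomial σ F) : P ∈ highDegree F σ 0 0 := by
  rw [highDegree, mem_restrictSupport_iff]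
  intro e _
  exact Nat.zero_le _

lemma highDegree_anti {k k' : ℕ} (l : ℕ) (h : k ≤ k') : highDegree F σ k' l ≤ highDegree F σ k l :=
  restrictSupport_mono F fun _ (he : k' ≤ _) => h.trans he

lemma prod_mem_highDegree {J : Type*} {y : J → MvPolynomial σ F} {t : Finset J}
    (h : ∀ j ∈ t, constantCoeff (y j) = 0) : ∏ j ∈ t, y j ∈ highDegree F σ t.card 0 := by
  classical
  induction t using Finset.induction_on with
  | empty => exact mem_highDegree_zero _
  | insert j t hj ih =>
    rw [Finset.prod_insert hj, Finset.card_insert_of_notMem hj, add_comm]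
    refine mul_mem_highDegree ?_ (ih fun i hi => h i (Finset.mem_insert_of_mem hi))
    rw [highDegree, mem_restrictSupport_iff]
    intro e he
    change 1 ≤ e.degree + 0
    by_contra hcon
    have he0 : e = 0 := by
      rw [← Finsupp.degree_eq_zero_iff]
      omega
    have h0 := h j (Finset.mem_insert_self _ _)
    rw [constantCoeff_eq] at h0
    rw [he0] at he
    exact (mem_support_iff.1 he) h0

lemma pderiv_prod {J : Type*} [DecidableEq J] (v : σ) (g : J → MvPolynomial σ F) (S : Finset J) :
    pderiv v (∏ j ∈ S, g j) = ∑ j ∈ S, (∏ i ∈ S.erase j, g i) * pderiv v (g j) := by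
  induction S using Finset.induction_on with
  | empty => simp
  | insert j S hj ih =>
    rw [Finset.prod_insert hj, pderiv_mul, ih, Finset.sum_insert hj, Finset.erase_insert hj,
      Finset.mul_sum]
    congr 1
    · ring
    · refine Finset.sum_congr rfl fun i hi => ?_
      have hij : j ≠ i := fun h => hj (h ▸ hi)
      rw [Finset.erase_insert_of_ne hij,
        Finset.prod_insert fun h => hj (Finset.mem_of_mem_erase h)]
      ring

end Support

section Truncation

variable {F σ : Type*} [Field F]

open Classical in
/-- The part of a polynomial with exponents in `A`. -/
noncomputable def exponentPart (F : Type*) {σ : Type*} [Field F] (A : Set (σ →₀ ℕ)) :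
    MvPolynomial σ F →ₗ[F] MvPolynomial σ F :=
  (basisMonomials σ F).constr F fun e => if e ∈ A then monomial e 1 else 0

open Classical in
lemma coeff_exponentPart (A : Set (σ →₀ ℕ)) (P : MvPolynomial σ F) (e : σ →₀ ℕ) :
    coeff e (exponentPart F A P) = if e ∈ A then coeff e P else 0 := by
  induction P using MvPolynomial.induction_on' with
  | monomial u a =>
    have h1 : exponentPart F A (monomial u a) = a • if u ∈ A then monomial u 1 else 0 := by
      have h2 := (basisMonomials σ F).constr_basis F
        (fun e => if e ∈ A then monomial e (1 : F) else 0) u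
      rw [coe_basisMonomials] at h2
      rw [← mul_one a, ← smul_eq_mul, ← smul_monomial, map_smul, exponentPart, h2, smul_eq_mul,
        mul_one]
    rw [h1, coeff_smul, coeff_monomial]
    by_cases hu : u = e
    · subst hu; split_ifs <;> simp_all
    · split_ifs <;> simp [coeff_monomial, hu]
  | add p q hp hq => rw [map_add, coeff_add, hp, hq, coeff_add]; split_ifs <;> simp

lemma exponentPart_eq_zero {A B : Set (σ →₀ ℕ)} (h : Disjoint A B) {P : MvPolynomial σ F}
    (hP : P ∈ restrictSupport F B) : exponentPart F A P = 0 := by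
  classical
  ext e
  rw [coeff_exponentPart, coeff_zero]
  split_ifs with he
  · by_contra hcon
    exact Set.disjoint_left.1 h he ((mem_restrictSupport_iff F).1 hP (mem_support_iff.2 hcon))
  · rfl

end Truncation

section Products

variable {F σ : Type*} [Field F]

/-- A nonzero constant term is scaled to `1` and then removed. -/
noncomputable def normalizedTail (q : MvPolynomial σ F) : MvPolynomial σ F :=
  open Classical in if constantCoeff q = 0 then 0 else C (constantCoeff q)⁻¹ * q - 1

lemma constantCoeff_normalizedTail (q : MvPolynomial σ F) :
    constantCoeff (normalizedTail q) = 0 := by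
  unfold normalizedTail
  split_ifs with h
  · simp
  · simp [h]

lemma mul_one_add_normalizedTail {q : MvPolynomial σ F}
    (h : constantCoeff q = 0) : q * (1 + normalizedTail q) = q := by
  simp [normalizedTail, h]

lemma C_mul_one_add_normalizedTail {q : MvPolynomial σ F} (h : constantCoeff q ≠ 0) :
    C (constantCoeff q) * (1 + normalizedTail q) = q := by
  rw [normalizedTail, if_neg h, add_sub_cancel, ← mul_assoc, ← C_mul, mul_inv_cancel₀ h, C_1,
    one_mul]

lemma normalizedTail_pow_mem_fewVars {q : MvPolynomial σ F} {s : ℕ} (h : q.vars.card ≤ s)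
    (k : ℕ) : normalizedTail q ^ k ∈ fewVars F σ s := by
  classical
  refine mem_fewVars_of_card_vars_le ((Finset.card_le_card ?_).trans h)
  refine (vars_pow _ _).trans ?_
  unfold normalizedTail
  split_ifs with h0
  · simp
  · refine (vars_sub_subset (p := C (constantCoeff q)⁻¹ * q) (q := 1)).trans ?_
    rw [vars_C_mul _ (inv_ne_zero h0)]
    simp

lemma prod_X_eq_monomial (S : Finset σ) :
    ∏ v ∈ S, (X v : MvPolynomial σ F) = monomial (∑ v ∈ S, Finsupp.single v 1) 1 := by
  rw [monomial_sum_one]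
  rfl

lemma sum_single_apply [DecidableEq σ] (S : Finset σ) (w : σ) :
    (∑ v ∈ S, Finsupp.single v 1 : σ →₀ ℕ) w = if w ∈ S then 1 else 0 := by
  simp [Finsupp.finsetSum_apply, Finsupp.single_apply]

lemma degree_sum_single (S : Finset σ) :
    (∑ v ∈ S, Finsupp.single v 1 : σ →₀ ℕ).degree = S.card := by
  simp

variable {I J : Type*} [DecidableEq J] {n : ℕ}

/-- The product of the `q j` with `j ∈ D` and the powers `p a ^ f a`. -/
noncomputable def prodPow (q : J → MvPolynomial σ F) (p : Fin n → MvPolynomial σ F)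
    (D : Finset J) (f : Fin n → ℕ) : MvPolynomial σ F :=
  (∏ j ∈ D, q j) * ∏ a, p a ^ f a

/-- Combinations of products of the `q i j` and `p i a` in which at most `k` of the `q i j` are
omitted, with coefficients in few variables. -/
noncomputable def prodPowSpan (Z : I → Finset J) (q : I → J → MvPolynomial σ F)
    (p : I → Fin n → MvPolynomial σ F) (s k : ℕ) : Submodule F (MvPolynomial σ F) :=
  Submodule.span F {x | ∃ i, (Z i).card ≤ n ∧ ∃ B ⊆ Z i, B.card ≤ k ∧ ∃ f ∈ partMults n,
    ∃ g ∈ fewVars F σ (k * s), x = g * prodPow (q i) (p i) (Z i \ B) f}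

lemma pderiv_mem_prodPowSpan {Z : I → Finset J} {q : I → J → MvPolynomial σ F}
    {p : I → Fin n → MvPolynomial σ F} {s : ℕ} (hq : ∀ i j, q i j ∈ fewVars F σ s)
    (hp : ∀ i a, p i a ∈ fewVars F σ s) (k : ℕ) (v : σ) {P : MvPolynomial σ F}
    (hP : P ∈ prodPowSpan Z q p s k) : pderiv v P ∈ prodPowSpan Z q p s (k + 1) := by
  induction hP using Submodule.span_induction with
  | zero => simp
  | add x y _ _ hx hy => rw [map_add]; exact add_mem hx hy
  | smul c x _ hx => rw [Derivation.map_smul]; exact Submodule.smul_mem _ _ hx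
  | mem x hx =>
    obtain ⟨i, hi, B, hB, hBk, f, hf, g, hg, rfl⟩ := hx
    rw [pderiv_mul]
    refine add_mem (Submodule.subset_span ⟨i, hi, B, hB, by omega, f, hf, _,
      fewVars_mono (by nlinarith) (pderiv_mem_fewVars hg v), rfl⟩) ?_
    have hmul : ∀ h ∈ fewVars F σ s, g * h ∈ fewVars F σ ((k + 1) * s) := fun h hh => by
      rw [add_one_mul]
      exact mul_mem_fewVars hg hh
    rw [prodPow, pderiv_mul, pderiv_prod, pderiv_prod, mul_add, Finset.sum_mul, Finset.mul_sum,
      Finset.mul_sum, Finset.mul_sum]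
    refine add_mem (Submodule.sum_mem _ fun j hj => ?_) (Submodule.sum_mem _ fun a _ => ?_)
    · rw [Finset.mem_sdiff] at hj
      refine Submodule.subset_span ⟨i, hi, insert j B, Finset.insert_subset hj.1 hB,
        (Finset.card_insert_le _ _).trans (by omega), f, hf, g * pderiv v (q i j),
        hmul _ (pderiv_mem_fewVars (hq i j) v), ?_⟩
      rw [prodPow, Finset.sdiff_insert]
      ring
    · have hf' : Function.update f a (f a - 1) ∈ partMults n := by
        rw [mem_partMults] at hf ⊢
        refine (Finset.sum_le_sum fun b _ => Nat.mul_le_mul_left _ ?_).trans hf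
        rcases eq_or_ne b a with rfl | hb
        · simp
        · simp [hb]
      have hprod : ∏ b, p i b ^ Function.update f a (f a - 1) b =
          (∏ b ∈ Finset.univ.erase a, p i b ^ f b) * p i a ^ (f a - 1) := by
        rw [← Finset.prod_erase_mul _ _ (Finset.mem_univ a), Function.update_self]
        congr 1
        refine Finset.prod_congr rfl fun b hb => ?_
        rw [Function.update_of_ne (Finset.ne_of_mem_erase hb)]
      have hmem : g * pderiv v (p i a) * prodPow (q i) (p i) (Z i \ B)
          (Function.update f a (f a - 1)) ∈ prodPowSpan Z q p s (k + 1) :=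
        Submodule.subset_span ⟨i, hi, B, hB, by omega, _, hf', g * pderiv v (p i a),
          hmul _ (pderiv_mem_fewVars (hp i a) v), rfl⟩
      convert Submodule.smul_mem _ (f a : F) hmem using 1
      rw [prodPow, hprod, pderiv_pow, smul_eq_C_mul, map_natCast]
      ring

end Products

section ShiftedDerivatives

variable {F σ : Type*} [Field F] [Fintype σ] [DecidableEq σ]

lemma coeff_mlProj (P : MvPolynomial σ F) (e : σ →₀ ℕ) :
    coeff e (mlProj P) = if ∀ v, e v ≤ 1 then coeff e P else 0 := by
  classical
  simp only [mlProj, coeff_sum, coeff_monomial, Finset.sum_ite_eq', Finset.mem_filter,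
    mem_support_iff]
  by_cases h : coeff e P = 0 <;> simp [h]

lemma monDeriv_mem {W : ℕ → Submodule F (MvPolynomial σ F)}
    (hW : ∀ k v, ∀ P ∈ W k, pderiv v P ∈ W (k + 1)) (γ : σ →₀ ℕ) {P : MvPolynomial σ F}
    (hP : P ∈ W 0) : monDeriv γ P ∈ W (∑ v, γ v) := by
  have hiter : ∀ (v : σ) (j k : ℕ), ∀ R ∈ W k, (fun R => pderiv v R)^[j] R ∈ W (j + k) := by
    intro v j k R hR
    induction j with
    | zero => simpa using hR
    | succ j ih =>
      rw [Function.iterate_succ_apply', add_right_comm]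
      exact hW _ v _ ih
  have hlist : ∀ l : List σ,
      l.foldr (fun v Q => (fun R => pderiv v R)^[γ v] Q) P ∈ W (l.map γ).sum := by
    intro l
    induction l with
    | nil => simpa using hP
    | cons v l ih => simpa using hiter v (γ v) _ _ ih
  have := hlist Finset.univ.toList
  rwa [Finset.sum_map_toList] at this

variable {I J : Type*} [DecidableEq J] {n : ℕ}

open Classical in
/-- The projected shifts spanning the space of projected shifted partial derivatives. -/
noncomputable def projectedShifts [Fintype I] (K : Set (σ →₀ ℕ)) (Z : I → Finset J)
    (q : I → J → MvPolynomial σ F) (p : I → Fin n → MvPolynomial σ F) (m k r : ℕ) :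
    Finset (MvPolynomial σ F) :=
  (Finset.univ.filter fun i => (Z i).card ≤ n).biUnion fun i =>
    ((((Z i).powerset.filter fun B => B.card ≤ r) ×ˢ partMults n) ×ˢ
      ((Finset.univ : Finset (Finset σ)).filter fun D => m ≤ D.card ∧ D.card ≤ m + k)).image
        fun t => exponentPart F K ((∏ v ∈ t.2, X v) * prodPow (q i) (p i) (Z i \ t.1.1) t.1.2)

lemma card_projectedShifts_le [Fintype I] (K : Set (σ →₀ ℕ)) (Z : I → Finset J)
    (q : I → J → MvPolynomial σ F) (p : I → Fin n → MvPolynomial σ F) {m k : ℕ} (r : ℕ)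
    (h : m + k ≤ Fintype.card σ / 2) :
    (projectedShifts K Z q p m k r).card ≤ Fintype.card I * ((n + r).choose r *
      (partMults n).card * ((k + 1) * (Fintype.card σ).choose (m + k))) := by
  classical
  refine (Finset.card_biUnion_le_card_mul _ _ ((n + r).choose r *
      (partMults n).card * ((k + 1) * (Fintype.card σ).choose (m + k))) fun i hi => ?_).trans ?_
  · rw [Finset.mem_filter] at hi
    refine Finset.card_image_le.trans ?_
    rw [Finset.card_product, Finset.card_product]
    exact Nat.mul_le_mul (Nat.mul_le_mul_right _ (card_powerset_filter_card_le hi.2))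
      (card_filter_card_mem_Icc_le h)
  · exact Nat.mul_le_mul_right _ (Finset.card_le_univ _)

lemma exponentPart_prod_X_mul_mem_span [Fintype I] {K : Set (σ →₀ ℕ)}
    (hK : ∀ e ∈ K, ∀ v, e v ≤ 1) {Z : I → Finset J} {q : I → J → MvPolynomial σ F}
    {p : I → Fin n → MvPolynomial σ F} {s r : ℕ} (S : Finset σ) {P : MvPolynomial σ F}
    (hP : P ∈ prodPowSpan Z q p s r) :
    exponentPart F K ((∏ v ∈ S, X v) * P) ∈
      Submodule.span F (projectedShifts K Z q p S.card (r * s) r : Set (MvPolynomial σ F)) := by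
  classical
  induction hP using Submodule.span_induction with
  | zero => simp
  | add x y _ _ hx hy => rw [mul_add, map_add]; exact add_mem hx hy
  | smul c x _ hx => rw [mul_smul_comm, map_smul]; exact Submodule.smul_mem _ _ hx
  | mem x hx =>
    obtain ⟨i, hi, B, hB, hBr, f, hf, g, hg, rfl⟩ := hx
    rw [fewVars, restrictSupport_eq_span] at hg
    induction hg using Submodule.span_induction with
    | zero => simp
    | add x y _ _ hx hy => rw [add_mul, mul_add, map_add]; exact add_mem hx hy
    | smul c x _ hx =>
      rw [smul_mul_assoc, mul_smul_comm, map_smul]; exact Submodule.smul_mem _ _ hx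
    | mem x hx =>
      obtain ⟨e, he, rfl⟩ := hx
      dsimp only
      rw [← mul_assoc, prod_X_eq_monomial, monomial_mul, one_mul]
      set u := ∑ v ∈ S, Finsupp.single v 1 + e with hu
      have huv : ∀ v, u v = (if v ∈ S then 1 else 0) + e v := fun v => by
        rw [hu, Finsupp.add_apply, sum_single_apply]
      by_cases hml : ∀ v, u v ≤ 1
      · have hD : u = ∑ v ∈ u.support, Finsupp.single v 1 := by
          ext v
          rw [sum_single_apply]
          have := hml v
          by_cases h0 : u v = 0
          · simp [h0]
          · simp only [Finsupp.mem_support_iff, ne_eq, h0, not_false_eq_true, if_true]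
            omega
        rw [hD, ← prod_X_eq_monomial]
        refine Submodule.subset_span (Finset.mem_coe.2 (Finset.mem_biUnion.2 ⟨i, by simp [hi],
          Finset.mem_image.2 ⟨((B, f), u.support), ?_, rfl⟩⟩))
        simp only [Finset.mem_product, Finset.mem_filter, Finset.mem_powerset, Finset.mem_univ,
          true_and]
        refine ⟨⟨⟨hB, hBr⟩, hf⟩, Finset.card_le_card fun v hv => ?_, ?_⟩
        · rw [Finsupp.mem_support_iff, huv, if_pos hv]
          omega
        · have hsub : u.support ⊆ S ∪ e.support := fun v hv => by
            rw [Finsupp.mem_support_iff, huv] at hv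
            rw [Finset.mem_union, Finsupp.mem_support_iff]
            by_contra! hcon
            simp [hcon.1, hcon.2] at hv
          exact (Finset.card_le_card hsub).trans
            ((Finset.card_union_le _ _).trans (Nat.add_le_add_left he _))
      · push Not at hml
        obtain ⟨v, hv⟩ := hml
        have h0 : exponentPart F K (monomial u 1 * prodPow (q i) (p i) (Z i \ B) f) = 0 := by
          refine exponentPart_eq_zero (B := {e | 1 < e v}) ?_
            (mul_mem_restrictSupport (A := {u}) (B := Set.univ) ?_
              ((monomial_mem_restrictSupport F).2 (Or.inl rfl)) (by simp))
          · rw [Set.disjoint_left]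
            intro e heK hev
            exact absurd (hK e heK v) (not_le.2 hev)
          · rintro _ rfl b _
            change 1 < u v + b v
            omega
        rw [h0]
        exact zero_mem _

end ShiftedDerivatives
section Main

variable {F σ I J : Type*} [Field F] [Fintype J]

open Classical in
/-- The factors of the `i`-th product without constant term. -/
noncomputable def vanishingFactors (Q : I → J → MvPolynomial σ F) (i : I) : Finset J :=
  Finset.univ.filter fun j => constantCoeff (Q i j) = 0

/-- Power sums of the normalized tails of the factors of the `i`-th product. -/
noncomputable def tailPowerSum (n : ℕ) (Q : I → J → MvPolynomial σ F) (i : I) (a : Fin n) :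
    MvPolynomial σ F :=
  ∑ j, normalizedTail (Q i j) ^ ((a : ℕ) + 1)

lemma prod_eq_mul_prod_one_add_normalizedTail (Q : I → J → MvPolynomial σ F) (i : I) :
    ∃ c : F, ∏ j, Q i j =
      c • ((∏ j ∈ vanishingFactors Q i, Q i j) * ∏ j, (1 + normalizedTail (Q i j))) := by
  classical
  refine ⟨∏ j ∈ Finset.univ.filter fun j => ¬ constantCoeff (Q i j) = 0,
    constantCoeff (Q i j), ?_⟩
  rw [smul_eq_C_mul, map_prod,
    ← Finset.prod_filter_mul_prod_filter_not Finset.univ (fun j => constantCoeff (Q i j) = 0)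
      fun j => Q i j,
    ← Finset.prod_filter_mul_prod_filter_not Finset.univ (fun j => constantCoeff (Q i j) = 0)
      fun j => 1 + normalizedTail (Q i j)]
  have h1 : ∏ j ∈ Finset.univ.filter fun j => constantCoeff (Q i j) = 0, Q i j =
      (∏ j ∈ Finset.univ.filter fun j => constantCoeff (Q i j) = 0, Q i j) *
        ∏ j ∈ Finset.univ.filter fun j => constantCoeff (Q i j) = 0,
          (1 + normalizedTail (Q i j)) := by
    rw [← Finset.prod_mul_distrib]
    refine Finset.prod_congr rfl fun j hj => ?_
    rw [mul_one_add_normalizedTail (Finset.mem_filter.1 hj).2]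
  have h2 : ∏ j ∈ Finset.univ.filter fun j => ¬ constantCoeff (Q i j) = 0, Q i j =
      (∏ j ∈ Finset.univ.filter fun j => ¬ constantCoeff (Q i j) = 0,
        C (constantCoeff (Q i j))) *
        ∏ j ∈ Finset.univ.filter fun j => ¬ constantCoeff (Q i j) = 0,
          (1 + normalizedTail (Q i j)) := by
    rw [← Finset.prod_mul_distrib]
    refine Finset.prod_congr rfl fun j hj => ?_
    rw [C_mul_one_add_normalizedTail (Finset.mem_filter.1 hj).2]
  rw [h2]
  nth_rw 1 [h1]
  rw [vanishingFactors]
  ring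

variable [DecidableEq J]

lemma prod_mem_prodPowSpan_sup_highDegree [CharZero F] (n s : ℕ) (Q : I → J → MvPolynomial σ F)
    (i : I) : ∏ j, Q i j ∈
      prodPowSpan (vanishingFactors Q) Q (tailPowerSum n Q) s 0 ⊔ highDegree F σ (n + 1) 0 := by
  obtain ⟨c, hc⟩ := prod_eq_mul_prod_one_add_normalizedTail Q i
  have hvan : ∏ j ∈ vanishingFactors Q i, Q i j ∈
      highDegree F σ (vanishingFactors Q i).card 0 :=
    prod_mem_highDegree fun j hj => by simpa [vanishingFactors] using hj
  rw [hc]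
  refine Submodule.smul_mem _ _ ?_
  by_cases hZ : (vanishingFactors Q i).card ≤ n
  · rw [prod_one_add_eq_sum_aeval_esymm (F := F), Finset.mul_sum]
    refine Submodule.sum_mem _ fun l _ => ?_
    by_cases hl : l ≤ n
    · refine Submodule.mem_sup_left ?_
      have hmem := aeval_esymm_mem_span_prod_pow (F := F) (fun j => normalizedTail (Q i j)) n l hl
      generalize aeval (fun j => normalizedTail (Q i j)) (esymm J F l) = x at hmem ⊢
      induction hmem using Submodule.span_induction with
      | zero => simp
      | add x y _ _ hx hy => rw [mul_add]; exact add_mem hx hy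
      | smul c x _ hx => rw [mul_smul_comm]; exact Submodule.smul_mem _ _ hx
      | mem x hx =>
        obtain ⟨f, hf, rfl⟩ := hx
        refine Submodule.subset_span ⟨i, hZ, ∅, Finset.empty_subset _, le_rfl, f,
          mem_partMults.2 (hf.trans_le hl), 1, mem_fewVars_of_card_vars_le (by simp), ?_⟩
        rw [one_mul, prodPow, Finset.sdiff_empty]
        rfl
    · refine Submodule.mem_sup_right (highDegree_anti 0 (by omega : n + 1 ≤ 0 + l)
        (mul_mem_highDegree (mem_highDegree_zero _) ?_))
      rw [esymm, map_sum]
      refine Submodule.sum_mem _ fun t ht => ?_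
      rw [map_prod]
      simp only [aeval_X]
      rw [← (Finset.mem_powersetCard.1 ht).2]
      exact prod_mem_highDegree fun j _ => constantCoeff_normalizedTail _
  · exact Submodule.mem_sup_right (highDegree_anti 0 (by omega)
      (mul_mem_highDegree hvan (mem_highDegree_zero _)))

variable [Fintype σ] [DecidableEq σ] [Fintype I]

/-- Projected shifted partial derivatives of a sum of products of polynomials in at most `s`
variables span a space of small dimension. -/
theorem Phi_sum_prod_le [CharZero F] {n s m r : ℕ} {M : Set (σ →₀ ℕ)} (α : I → F)
    (Q : I → J → MvPolynomial σ F) (hQ : ∀ i j, (Q i j).vars.card ≤ s)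
    {P : MvPolynomial σ F} (hP : P = ∑ i, C (α i) * ∏ j, Q i j) (hdeg : P.totalDegree ≤ n)
    (hM : ∀ γ ∈ M, ∑ v, γ v = r) (hmr : m + r * s ≤ Fintype.card σ / 2) :
    Phi F M m P ≤ Fintype.card I * ((n + r).choose r * (partMults n).card *
      ((r * s + 1) * (Fintype.card σ).choose (m + r * s))) := by
  classical
  set K : Set (σ →₀ ℕ) := {e | (∀ v, e v ≤ 1) ∧ e.degree + r ≤ n + m} with hK
  set Z := vanishingFactors Q
  set p := tailPowerSum n Q
  have hp : ∀ i a, p i a ∈ fewVars F σ s := fun i a =>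
    Submodule.sum_mem _ fun j _ => normalizedTail_pow_mem_fewVars (hQ i j) _
  have hq : ∀ i j, Q i j ∈ fewVars F σ s := fun i j => mem_fewVars_of_card_vars_le (hQ i j)
  have hsplit : ∀ γ ∈ M, monDeriv γ P ∈ prodPowSpan Z Q p s r ⊔ highDegree F σ (n + 1) r := by
    intro γ hγ
    have := monDeriv_mem (W := fun k => prodPowSpan Z Q p s k ⊔ highDegree F σ (n + 1) k)
      (fun k v R hR => ?_) γ (P := P) ?_
    · rwa [hM γ hγ] at this
    · obtain ⟨a, ha, b, hb, rfl⟩ := Submodule.mem_sup.1 hR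
      rw [map_add]
      exact Submodule.add_mem_sup (pderiv_mem_prodPowSpan hq hp k v ha)
        (pderiv_mem_highDegree hb v)
    · rw [hP]
      refine Submodule.sum_mem _ fun i _ => ?_
      rw [← smul_eq_C_mul]
      exact Submodule.smul_mem _ _ (prod_mem_prodPowSpan_sup_highDegree n s Q i)
  have hlow : ∀ γ ∈ M, monDeriv γ P ∈ restrictSupport F {e : σ →₀ ℕ | e.degree + r ≤ n} := by
    intro γ hγ
    have := monDeriv_mem (W := fun k => restrictSupport F {e : σ →₀ ℕ | e.degree + k ≤ n})
      (fun k v R hR => ?_) γ (P := P) ?_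
    · rwa [hM γ hγ] at this
    · refine pderiv_mem_restrictSupport (fun e he hev => ?_) hR
      have := degree_sub_single_add_one hev
      change e.degree + k ≤ n at he
      change _ ≤ n
      omega
    · rw [mem_restrictSupport_iff]
      exact fun e he => (le_totalDegree he).trans hdeg
  have hX : ∀ S : Finset σ, ∏ v ∈ S, (X v : MvPolynomial σ F) ∈
      restrictSupport F {e | e.degree = S.card} := fun S => by
    rw [prod_X_eq_monomial]
    exact (monomial_mem_restrictSupport F).2 (Or.inl (degree_sum_single S))
  refine (Submodule.finrank_mono (t := Submodule.span F
    (projectedShifts K Z Q p m (r * s) r : Set (MvPolynomial σ F))) ?_).trans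
    ((finrank_span_finset_le_card _).trans (card_projectedShifts_le K Z Q p r hmr))
  rw [Submodule.span_le]
  rintro _ ⟨γ, hγ, S, rfl, rfl⟩
  have hproj : mlProj ((∏ i ∈ S, X i) * monDeriv γ P) =
      exponentPart F K ((∏ i ∈ S, X i) * monDeriv γ P) := by
    ext e
    rw [coeff_mlProj, coeff_exponentPart]
    by_cases he : e.degree + r ≤ n + S.card
    · simp [hK, he]
    · have h0 : coeff e ((∏ i ∈ S, X i) * monDeriv γ P) = 0 := by
        by_contra hcon
        have hmem := mul_mem_restrictSupport (D := {e : σ →₀ ℕ | e.degree + r ≤ n + S.card})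
          (fun a (ha : _ = _) b (hb : _ ≤ n) => by
            change (a + b).degree + r ≤ _
            rw [map_add]
            omega) (hX S) (hlow γ hγ)
        exact he ((mem_restrictSupport_iff F).1 hmem (mem_support_iff.2 hcon))
      simp [h0]
  rw [hproj]
  obtain ⟨a, ha, b, hb, hab⟩ := Submodule.mem_sup.1 (hsplit γ hγ)
  have hb0 : exponentPart F K ((∏ i ∈ S, X i) * b) = 0 := by
    refine exponentPart_eq_zero (B := {e | n + S.card < e.degree + r}) ?_
      (mul_mem_restrictSupport (fun a (ha : _ = _) b (hb : n + 1 ≤ _) => ?_) (hX S) hb)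
    · rw [Set.disjoint_left]
      intro e he hlt
      exact absurd he.2 (not_le.2 hlt)
    · change _ < (a + b).degree + r
      rw [map_add]
      omega
  rw [← hab, mul_add, map_add, hb0, add_zero]
  exact exponentPart_prod_X_mul_mem_span (fun e he => he.1) S ha

end Main
section Restriction

variable {F σ : Type*} [Field F] [DecidableEq σ]

lemma coeff_restrictPoly (V : Finset σ) (P : MvPolynomial σ F) (e : σ →₀ ℕ) :
    coeff e (restrictPoly V P) = if e.support ⊆ V then coeff e P else 0 := by
  induction P using MvPolynomial.induction_on' with
  | monomial u a =>
    have h : restrictPoly V (monomial u a) = if u.support ⊆ V then monomial u a else 0 := by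
      rw [restrictPoly, aeval_monomial, algebraMap_eq]
      split_ifs with hu
      · rw [monomial_eq]
        congr 1
        exact Finsupp.prod_congr fun v hv => by rw [if_pos (hu hv)]
      · obtain ⟨v, hv, hvV⟩ := Finset.not_subset.1 hu
        rw [Finsupp.prod, Finset.prod_eq_zero hv, mul_zero]
        rw [if_neg hvV, zero_pow (Finsupp.mem_support_iff.1 hv)]
    rw [h]
    by_cases hue : u = e
    · subst hue
      split_ifs <;> simp
    · split_ifs <;> simp [coeff_monomial, hue]
  | add P Q hP hQ =>
    have h : restrictPoly V (P + Q) = restrictPoly V P + restrictPoly V Q := map_add _ _ _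
    rw [h, coeff_add, hP, hQ]
    split_ifs <;> simp

lemma support_restrictPoly_subset (V : Finset σ) (P : MvPolynomial σ F) :
    (restrictPoly V P).support ⊆ P.support := fun e he => by
  rw [mem_support_iff, coeff_restrictPoly] at he
  exact mem_support_iff.2 (ite_ne_right_iff.1 he).2

lemma vars_restrictPoly_subset (V : Finset σ) (P : MvPolynomial σ F) :
    (restrictPoly V P).vars ⊆ P.vars ∩ V := fun v hv => by
  obtain ⟨e, he, hve⟩ := (mem_vars_iff_mem_support v).1 hv
  refine Finset.mem_inter.2 ⟨(mem_vars_iff_mem_support v).2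
    ⟨e, support_restrictPoly_subset V P he, hve⟩, ?_⟩
  rw [mem_support_iff, coeff_restrictPoly] at he
  exact (ite_ne_right_iff.1 he).1 hve

lemma totalDegree_restrictPoly_le (V : Finset σ) (P : MvPolynomial σ F) :
    (restrictPoly V P).totalDegree ≤ P.totalDegree :=
  Finset.sup_mono (support_restrictPoly_subset V P)

lemma restrictPoly_sum_prod {I J : Type*} [Fintype I] [Fintype J] (V : Finset σ) (α : I → F)
    (Q : I → J → MvPolynomial σ F) :
    restrictPoly V (∑ i, C (α i) * ∏ j, Q i j) =
      ∑ i, C (α i) * ∏ j, restrictPoly V (Q i j) := by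
  simp [restrictPoly, map_sum, map_mul, map_prod]

/-- Derivatives of order larger than the degree vanish. -/
lemma Phi_eq_zero_of_totalDegree_lt [Fintype σ] {m r : ℕ} {M : Set (σ →₀ ℕ)}
    (hM : ∀ γ ∈ M, ∑ v, γ v = r) {P : MvPolynomial σ F} (hP : P.totalDegree < r) :
    Phi F M m P = 0 := by
  rw [Phi, Submodule.span_eq_bot.2, finrank_bot]
  rintro _ ⟨γ, hγ, S, -, rfl⟩
  have hmem := monDeriv_mem
    (W := fun k => restrictSupport F {e : σ →₀ ℕ | e.degree + k ≤ P.totalDegree})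
    (fun k v R hR => pderiv_mem_restrictSupport (fun e he hev => by
      have := degree_sub_single_add_one hev
      change e.degree + k ≤ _ at he
      change _ ≤ P.totalDegree
      omega) hR) γ (P := P) ((mem_restrictSupport_iff F).2 fun e he => le_totalDegree he)
  rw [hM γ hγ, mem_restrictSupport_iff] at hmem
  have h0 : monDeriv γ P = 0 := by
    rw [← support_eq_empty, Finset.eq_empty_iff_forall_notMem]
    intro e he
    have : e.degree + r ≤ P.totalDegree := hmem he
    omega
  simp [h0, mlProj]

end Restriction
/-- The numerical factors are absorbed into the bound of the theorem. -/
lemma card_mul_choose_mul_partMults_le {T d n r s A B : ℕ} (hd : 0 < d) (hn : 0 < n)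
    (hr : 0 < r) (hs : 0 < s) :
    ((T * (A * (partMults n).card * ((r * s + 1) * B)) : ℕ) : ℝ) ≤
      (T : ℝ) * d ^ 2 * n ^ 3 * (r * s) * (2 : ℝ) ^ (17 * Real.sqrt n) * B * A := by
  have hsqrt : 1 ≤ Real.sqrt n := Real.one_le_sqrt.2 (by exact_mod_cast hn)
  have hpow : (2 : ℝ) ^ (17 * Real.sqrt n) = 2 ^ (16 * Real.sqrt n) * 2 ^ Real.sqrt n := by
    rw [← Real.rpow_add two_pos]
    ring_nf
  have h2 : (2 : ℝ) ≤ 2 ^ Real.sqrt n := by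
    simpa using Real.rpow_le_rpow_of_exponent_le one_le_two hsqrt
  have hrs : (1 : ℝ) ≤ r * s := by exact_mod_cast Nat.mul_pos hr hs
  have hdn : (1 : ℝ) ≤ d ^ 2 * n ^ 3 := by exact_mod_cast Nat.mul_pos (pow_pos hd 2) (pow_pos hn 3)
  have hrs' : (r * s + 1 : ℝ) ≤ r * s * 2 ^ Real.sqrt n := by nlinarith
  calc ((T * (A * (partMults n).card * ((r * s + 1) * B)) : ℕ) : ℝ)
      = T * A * B * (1 * (((partMults n).card : ℝ) * (r * s + 1))) := by push_cast; ring
    _ ≤ T * A * B * (d ^ 2 * n ^ 3 *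
          (2 ^ (16 * Real.sqrt n) * (r * s * 2 ^ Real.sqrt n))) := by
        gcongr
        exact card_partMults_le hn
    _ = _ := by rw [hpow]; ring

/-- Let `0 ≤ μ < 1`, `δ = (1-μ)/2`, `p = N^{-μ-δ}`. Let
`P ∈ F[X_1,…,X_N]` have degree `n` with `P = ∑_{i=1}^T α_i ∏_{j=1}^d Q_{ij}`, each `Q_{ij}`
depending on at most `N^μ` variables. Let `m, r, s` be positive with `m + r·s ≤ N/2` and
let `M` consist of multilinear monomials of degree exactly `r`. If `T·d ≤ N^{sδ/4}`, then
for an absolute constant `c`, with probability at least `1 - N^{-(3/4)δs}` over `V ← D_p`,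
`Φ_{M,m}(P|_V) ≤ T·d²·n³·r·s·2^{c√n}·binom(N, m+rs)·binom(n+r, r)`. -/
theorem stmt11 :
    ∃ c : ℝ, ∀ (F : Type*) [Field F] [CharZero F], ∀ N n T d : ℕ, ∀ μ : ℝ,
      0 ≤ μ → μ < 1 →
      ∀ (α : Fin T → F) (Q : Fin T → Fin d → MvPolynomial (Fin N) F)
        (P : MvPolynomial (Fin N) F) (m r s : ℕ) (M : Set (Fin N →₀ ℕ)),
      0 < m → 0 < r → 0 < s →
      P.totalDegree = n →
      (∀ i j, ((Q i j).vars.card : ℝ) ≤ (N : ℝ) ^ μ) →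
      P = ∑ i, C (α i) * ∏ j, Q i j →
      ((m + r * s : ℕ) : ℝ) ≤ (N : ℝ) / 2 →
      (∀ γ ∈ M, (∀ v, γ v ≤ 1) ∧ ∑ v, γ v = r) →
      ((T * d : ℕ) : ℝ) ≤ (N : ℝ) ^ ((s : ℝ) * ((1 - μ) / 2) / 4) →
      1 - (N : ℝ) ^ (-(3 / 4 : ℝ) * ((1 - μ) / 2) * s) ≤
        restrictProb (Fin N) ((N : ℝ) ^ (-μ - (1 - μ) / 2)) (fun V =>
          (Phi F M m (restrictPoly V P) : ℝ) ≤
            (T : ℝ) * d ^ 2 * n ^ 3 * (r * s) * (2 : ℝ) ^ (c * Real.sqrt n) *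
              N.choose (m + r * s) * (n + r).choose r) := by
  refine ⟨17, fun F _ _ N n T d μ hμ0 hμ1 α Q P m r s M hm hr hs hPn hQ hP hmrs hM hTd => ?_⟩
  have hrs : 0 < r * s := Nat.mul_pos hr hs
  have hmr : m + r * s ≤ N / 2 := by
    rw [Nat.le_div_iff_mul_le two_pos]
    have : ((m + r * s : ℕ) : ℝ) * 2 ≤ N := by linarith
    exact_mod_cast this
  have hN : (1 : ℝ) ≤ N := by exact_mod_cast (by omega : 1 ≤ N)
  have hN0 : (0 : ℝ) < N := one_pos.trans_le hN
  set δ := (1 - μ) / 2 with hδ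
  have hprob := one_sub_le_restrictProb (fun t : Fin T × Fin d => (Q t.1 t.2).vars)
    (p := (N : ℝ) ^ (-μ - δ)) (K := (N : ℝ) ^ μ) (s := s) (Real.rpow_nonneg hN0.le _)
    (Real.rpow_le_one_of_one_le_of_nonpos hN (by linarith)) (fun t => hQ t.1 t.2)
    (fun V => (Phi F M m (restrictPoly V P) : ℝ) ≤ (T : ℝ) * d ^ 2 * n ^ 3 * (r * s) *
      (2 : ℝ) ^ (17 * Real.sqrt n) * N.choose (m + r * s) * (n + r).choose r) fun V hV => ?_
  · refine le_trans (sub_le_sub_left ?_ 1) hprob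
    rw [← Real.rpow_add hN0, ← Real.rpow_natCast, ← Real.rpow_mul hN0.le, Fintype.card_prod,
      Fintype.card_fin, Fintype.card_fin]
    refine (mul_le_mul_of_nonneg_right hTd (Real.rpow_nonneg hN0.le _)).trans_eq ?_
    rw [← Real.rpow_add hN0]
    ring_nf
  · have hdeg : (restrictPoly V P).totalDegree ≤ n :=
      (totalDegree_restrictPoly_le V P).trans hPn.le
    rcases Nat.eq_zero_or_pos n with rfl | hn
    · rw [Phi_eq_zero_of_totalDegree_lt (fun γ hγ => (hM γ hγ).2) (hdeg.trans_lt hr),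
        Nat.cast_zero]
      positivity
    · have hd : 0 < d := by
        rcases Nat.eq_zero_or_pos d with rfl | hd
        · have hC : P = C (∑ i, α i) := by simp [hP]
          rw [hC, totalDegree_C] at hPn
          omega
        · exact hd
      have hbound := Phi_sum_prod_le (F := F) (s := s) (m := m) α
        (fun i j => restrictPoly V (Q i j))
        (fun i j => (Finset.card_le_card (vars_restrictPoly_subset V (Q i j))).trans (hV (i, j)))
        (P := restrictPoly V P) (by rw [hP, restrictPoly_sum_prod]) hdeg
        (fun γ hγ => (hM γ hγ).2) (by rwa [Fintype.card_fin])
      rw [Fintype.card_fin, Fintype.card_fin] at hbound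
      exact (Nat.cast_le.2 hbound).trans (card_mul_choose_mul_partMults_le hd hn hr hs)
end

section
/- Let F be a field of characteristic zero, 0 ≤ μ < 1 a constant, δ = (1−μ)/2, and let NW_{n,μ} be the Nisan–Wigderson polynomial in N variables. Choose r = ⌊ε₁·√n⌋ and s = ⌊ε₂·√n⌋ for sufficiently small positive constants ε₁, ε₂ with ε₁·ε₂ ≤ 0.001, let m = ⌊(N/2)·(1 − r·(ln n)/n)⌋, let p = N^{−(μ+δ)}, and let M be the set of all multilinear monomials of degree r. Then there exist constants c₁, c₂ > 0 such that for all sufficiently large n, with probability at least 1 − n^{−c₂} over V ← D_p, Φ_{M,m}(NW_{n,μ}|_V) ≥ n^{−c₁} · min( (p^r / 4^r) · binom(N, r) · binom(N, m), binom(N, m + n − r) ). -/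
open MvPolynomial

/-- The parameter `γ` in the definition of the Nisan–Wigderson polynomial,
with `δ = (1-μ)/2`. -/
noncomputable def nwGamma (μ : ℝ) : ℝ :=
  (2 * (μ + (1 - μ) / 2) + 1) / (1 - (μ + (1 - μ) / 2))

/-- The degree parameter `D` of the Nisan–Wigderson polynomial `NW_{n,μ}`:
`D = ((γ+ρ)/(2(1+γ)))·n` with `ρ = (μ+δ)·log N/log n`. -/
noncomputable def nwDreal (μ : ℝ) (n N : ℕ) : ℝ :=
  (nwGamma μ + (μ + (1 - μ) / 2) * Real.log N / Real.log n) / (2 * (1 + nwGamma μ)) * n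

/-- The Nisan–Wigderson polynomial `NW_{n,μ}` on the variables `X_{i,j}`,
`i ∈ [n]`, `j ∈ F_ψ`. -/
noncomputable def NWpoly (F : Type*) [Field F] (μ : ℝ) (n ψ : ℕ) [NeZero ψ] :
    MvPolynomial (Fin n × ZMod ψ) F :=
  ∑ c : Fin ⌊nwDreal μ n (n * ψ)⌋₊ → ZMod ψ,
    ∏ i : Fin n, X (i, ∑ k : Fin ⌊nwDreal μ n (n * ψ)⌋₊, c k * ((i : ℕ) : ZMod ψ) ^ (k : ℕ))

theorem sq_sum_sq_le_rank_mul {ι κ : Type*} [Fintype ι] [Fintype κ] [DecidableEq κ]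
    (M : Matrix ι κ ℝ) :
    (∑ i, ∑ j, M i j ^ 2) ^ 2 ≤ (M.rank : ℝ) * ∑ j, ∑ j', ((M.transpose * M) j j') ^ 2 := by
  classical
  have hB : (M.transpose * M).IsHermitian := by
    have := Matrix.isHermitian_conjTranspose_mul_self M
    simpa [Matrix.conjTranspose_eq_transpose_of_trivial] using this
  set B := M.transpose * M with hBdef
  have htr : ∑ i, ∑ j, M i j ^ 2 = ∑ j, hB.eigenvalues j := by
    have h := hB.trace_eq_sum_eigenvalues
    rw [Finset.sum_comm]
    simp only [RCLike.ofReal_real_eq_id, id] at h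
    rw [← h, Matrix.trace]
    simp [hBdef, Matrix.mul_apply, sq]
  have htr2 : ∑ j, ∑ j', (B j j') ^ 2 = ∑ j, hB.eigenvalues j ^ 2 := by
    have h1 : (B * B).trace = ∑ j, ∑ j', (B j j') ^ 2 := by
      simp only [Matrix.trace, Matrix.diag, Matrix.mul_apply]
      refine Finset.sum_congr rfl fun j _ => Finset.sum_congr rfl fun j' _ => ?_
      have : B j' j = B j j' := by
        have := hB.apply j j'
        simpa using this
      rw [this, sq]
    rw [← h1]
    conv_lhs => rw [hB.spectral_theorem]
    rw [← map_mul, Matrix.diagonal_mul_diagonal]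
    simp only [Unitary.conjStarAlgAut_apply]
    rw [Matrix.trace_mul_comm, ← mul_assoc]
    simp [sq]
  have hrank : (M.rank : ℝ) = ((Finset.univ.filter fun j => hB.eigenvalues j ≠ 0).card : ℝ) := by
    rw [← Matrix.rank_transpose_mul_self M, ← hBdef, hB.rank_eq_card_non_zero_eigs,
      Fintype.card_subtype]
  rw [htr, htr2, hrank]
  have e1 : ∑ j, hB.eigenvalues j
      = ∑ j ∈ Finset.univ.filter (fun j => hB.eigenvalues j ≠ 0), hB.eigenvalues j := by
    rw [Finset.sum_filter_ne_zero]
  have e2 : ∑ j ∈ Finset.univ.filter (fun j => hB.eigenvalues j ≠ 0), hB.eigenvalues j ^ 2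
      ≤ ∑ j, hB.eigenvalues j ^ 2 :=
    Finset.sum_le_sum_of_subset_of_nonneg (Finset.subset_univ _) fun _ _ _ => sq_nonneg _
  rw [e1]
  exact sq_sum_le_card_mul_sum_sq.trans (mul_le_mul_of_nonneg_left e2 (Nat.cast_nonneg _))

theorem rank_le_finrank_span_rows {ι κ : Type*} [Fintype ι] [Fintype κ] (F : Type*)
    [Field F] [CharZero F] (M : ι → κ → ℕ) :
    (Matrix.of fun i j => (M i j : ℝ)).rank ≤
      Module.finrank F (Submodule.span F (Set.range fun i j => (M i j : F))) := by
  classical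
  rw [Matrix.rank_eq_finrank_span_row]
  obtain ⟨κ', a, _, hspan, hli⟩ := exists_linearIndependent' ℝ
    (Matrix.of fun i j => (M i j : ℝ)).row
  have hfin : Finite κ' := hli.finite
  have := Fintype.ofFinite κ'
  have hliZ : LinearIndependent ℤ (fun (x : κ') (j : κ) => (M (a x) j : ℤ)) := by
    rw [← linearIndependent_algebraMap_comp_iff (S := ℝ)]
    have e : (fun x => algebraMap ℤ ℝ ∘ fun j : κ => (M (a x) j : ℤ))
        = (Matrix.of fun i j => (M i j : ℝ)).row ∘ a := by
      ext x j
      exact Int.cast_natCast _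
    exact e ▸ hli
  have hliF : LinearIndependent F (fun (x : κ') (j : κ) => (M (a x) j : F)) := by
    rw [← linearIndependent_algebraMap_comp_iff (S := F)] at hliZ
    have e : (fun x => algebraMap ℤ F ∘ fun j : κ => (M (a x) j : ℤ))
        = fun x j => (M (a x) j : F) := by
      ext x j
      simp
    exact e ▸ hliZ
  rw [← hspan, finrank_span_eq_card hli, ← finrank_span_eq_card hliF]
  refine Submodule.finrank_mono (Submodule.span_mono ?_)
  rintro _ ⟨x, rfl⟩
  exact ⟨a x, rfl⟩

/-- The exponent vector of the multilinear monomial supported on `A`. -/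
noncomputable def indExp {σ : Type*} [DecidableEq σ] (A : Finset σ) : σ →₀ ℕ :=
  ∑ v ∈ A, Finsupp.single v 1

theorem indExp_apply {σ : Type*} [DecidableEq σ] (A : Finset σ) (v : σ) :
    indExp A v = if v ∈ A then 1 else 0 := by
  simp [indExp, Finsupp.finsetSum_apply, Finsupp.single_apply]

theorem prod_X_eq_monomial_indExp {F σ : Type*} [Field F] [DecidableEq σ] (A : Finset σ) :
    (∏ v ∈ A, X v : MvPolynomial σ F) = monomial (indExp A) 1 := by
  rw [indExp, monomial_sum_one]
  rfl

theorem indExp_add_eq_iff {σ : Type*} [DecidableEq σ] (A B T : Finset σ) :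
    indExp A + indExp B = indExp T ↔ Disjoint A B ∧ T = A ∪ B := by
  constructor
  · intro h
    have h' : ∀ v, (if v ∈ A then 1 else 0) + (if v ∈ B then 1 else 0)
        = if v ∈ T then 1 else 0 := by
      intro v
      have := DFunLike.congr_fun h v
      simpa [indExp_apply] using this
    constructor
    · rw [Finset.disjoint_left]
      intro v hA hB
      have := h' v
      simp only [hA, hB, if_true] at this
      split_ifs at this
      omega
    · ext v
      have := h' v
      rw [Finset.mem_union]
      by_cases hA : v ∈ A <;> by_cases hB : v ∈ B <;> by_cases hT : v ∈ T <;> simp_all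
  · rintro ⟨hd, rfl⟩
    ext v
    rw [Finsupp.add_apply, indExp_apply, indExp_apply, indExp_apply]
    have := fun h : v ∈ A => Finset.disjoint_left.mp hd h
    by_cases hA : v ∈ A <;> by_cases hB : v ∈ B <;> simp_all

theorem restrictPoly_prod_X {F σ : Type*} [Field F] [DecidableEq σ] (V A : Finset σ) :
    restrictPoly V (∏ v ∈ A, X v : MvPolynomial σ F)
      = if A ⊆ V then ∏ v ∈ A, X v else 0 := by
  rw [restrictPoly, map_prod]
  simp only [aeval_X]
  split_ifs with h
  · exact Finset.prod_congr rfl fun v hv => if_pos (h hv)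
  · obtain ⟨v, hv, hv'⟩ := Finset.not_subset.mp h
    exact Finset.prod_eq_zero hv (if_neg hv')

section
variable {F : Type*} [Field F] {σ : Type*} [Fintype σ] [DecidableEq σ]

theorem coeff_mlProj_indExp (P : MvPolynomial σ F) (T : Finset σ) :
    coeff (indExp T) (mlProj P) = coeff (indExp T) P := by
  have hT : ∀ v, indExp T v ≤ 1 := by
    intro v
    rw [indExp_apply]
    split_ifs <;> simp
  simp only [mlProj, coeff_sum, coeff_monomial, Finset.sum_ite_eq', Finset.mem_filter,
    mem_support_iff, ite_eq_left_iff]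
  intro h
  by_contra h2
  exact h ⟨fun h3 => h2 h3.symm, hT⟩

theorem monDeriv_sum {ι : Type*} (s : Finset ι) (γ : σ →₀ ℕ) (f : ι → MvPolynomial σ F) :
    monDeriv γ (∑ i ∈ s, f i) = ∑ i ∈ s, monDeriv γ (f i) := by
  have key : ∀ (l : List σ), l.foldr (fun v Q => (fun R => pderiv v R)^[γ v] Q) (∑ i ∈ s, f i)
      = ∑ i ∈ s, l.foldr (fun v Q => (fun R => pderiv v R)^[γ v] Q) (f i) := by
    intro l
    induction l with
    | nil => rfl
    | cons v l ih =>
      simp only [List.foldr_cons]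
      rw [ih]
      generalize γ v = k
      induction k with
      | zero => rfl
      | succ k ihk => simp only [Function.iterate_succ_apply', ihk, map_sum]
  exact key _

theorem monDeriv_zero_right (γ : σ →₀ ℕ) : monDeriv γ (0 : MvPolynomial σ F) = 0 := by
  simpa using monDeriv_sum (F := F) (∅ : Finset ℕ) γ (fun _ => 0)

theorem monDeriv_indExp (G A : Finset σ) :
    monDeriv (indExp G) (monomial (indExp A) (1 : F))
      = if G ⊆ A then monomial (indExp (A \ G)) 1 else 0 := by
  have key : ∀ (l : List σ), l.Nodup →
      l.foldr (fun v Q => (fun R => pderiv v R)^[indExp G v] Q) (monomial (indExp A) (1 : F))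
      = if G.filter (· ∈ l) ⊆ A then monomial (indExp (A \ G.filter (· ∈ l))) 1 else 0 := by
    intro l hl
    induction l with
    | nil => simp
    | cons v l ih =>
      rw [List.nodup_cons] at hl
      rw [List.foldr_cons, ih hl.2]
      by_cases hG : v ∈ G
      · have hf : G.filter (· ∈ v :: l) = insert v (G.filter (· ∈ l)) := by
          ext w
          simp only [Finset.mem_filter, List.mem_cons, Finset.mem_insert]
          constructor
          · rintro ⟨h, rfl | h'⟩
            · exact Or.inl rfl
            · exact Or.inr ⟨h, h'⟩
          · rintro (rfl | h)
            · exact ⟨hG, Or.inl rfl⟩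
            · exact ⟨h.1, Or.inr h.2⟩
        rw [hf, indExp_apply, if_pos hG, Function.iterate_one]
        by_cases h1 : G.filter (· ∈ l) ⊆ A
        · rw [if_pos h1, pderiv_monomial, indExp_apply]
          by_cases hA : v ∈ A
          · have hv : v ∈ A \ G.filter (· ∈ l) := by
              simp [hA, hl.1]
            rw [if_pos hv, if_pos (Finset.insert_subset hA h1)]
            have e : indExp (A \ G.filter (· ∈ l)) - Finsupp.single v 1
                = indExp (A \ insert v (G.filter (· ∈ l))) := by
              ext w
              simp only [Finsupp.tsub_apply, indExp_apply, Finsupp.single_apply, Finset.mem_sdiff,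
                Finset.mem_insert]
              by_cases hw : v = w
              · subst hw
                rw [if_neg fun h : v ∈ A ∧ ¬(v = v ∨ v ∈ _) => h.2 (Or.inl rfl), if_pos rfl]
                exact Nat.sub_eq_zero_of_le (by split_ifs <;> simp)
              · have hw' : w ≠ v := fun h => hw h.symm
                simp [hw, hw']
            rw [e]
            simp
          · have hv : v ∉ A \ G.filter (· ∈ l) := by
              simp [hA]
            rw [if_neg hv, if_neg (fun h => hA (h (Finset.mem_insert_self _ _)))]
            simp
        · rw [if_neg h1, map_zero, if_neg]
          exact fun h => h1 ((Finset.subset_insert _ _).trans h)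
      · have hf : G.filter (· ∈ v :: l) = G.filter (· ∈ l) := by
          ext w
          simp only [Finset.mem_filter, List.mem_cons]
          constructor
          · rintro ⟨h, rfl | h'⟩
            · exact absurd h hG
            · exact ⟨h, h'⟩
          · exact fun h => ⟨h.1, Or.inr h.2⟩
        rw [hf, indExp_apply, if_neg hG, Function.iterate_zero_apply]
  have := key Finset.univ.toList (Finset.nodup_toList _)
  simpa [monDeriv] using this

/-- `T` is the support of the shift by `S` of the derivative of `∏ v ∈ A, X v` along `G`. -/
def Incid (r m : ℕ) (A G S T : Finset σ) : Prop :=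
  G.card = r ∧ S.card = m ∧ G ⊆ A ∧ Disjoint S (A \ G) ∧ T = S ∪ (A \ G)

open Classical in
/-- Coefficient matrix of the projected shifted derivatives of `∑ c, ∏ v ∈ gr c, X v`
restricted to `V`. -/
noncomputable def entCount {K : Type*} [Fintype K] (gr : K → Finset σ) (r m : ℕ) (V : Finset σ)
    (R : Finset σ × Finset σ) (T : Finset σ) : ℕ :=
  ∑ c : K, if gr c ⊆ V ∧ Incid r m (gr c) R.1 R.2 T then 1 else 0

theorem coeff_shifted_deriv {K : Type*} [Fintype K] (gr : K → Finset σ) {r m : ℕ}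
    (V G S T : Finset σ) (hG : G.card = r) (hS : S.card = m) :
    coeff (indExp T) (mlProj ((∏ i ∈ S, X i) * monDeriv (indExp G)
      (restrictPoly V (∑ c : K, ∏ v ∈ gr c, (X v : MvPolynomial σ F)))))
      = (entCount gr r m V (G, S) T : F) := by
  classical
  rw [coeff_mlProj_indExp]
  have h1 : restrictPoly V (∑ c : K, ∏ v ∈ gr c, (X v : MvPolynomial σ F))
      = ∑ c : K, restrictPoly V (∏ v ∈ gr c, (X v : MvPolynomial σ F)) := by
    simp only [restrictPoly, map_sum]
  rw [h1, monDeriv_sum, Finset.mul_sum, coeff_sum, entCount, Nat.cast_sum]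
  refine Finset.sum_congr rfl fun c _ => ?_
  rw [restrictPoly_prod_X]
  by_cases hV : gr c ⊆ V
  · rw [if_pos hV, prod_X_eq_monomial_indExp, prod_X_eq_monomial_indExp, monDeriv_indExp]
    by_cases hGc : G ⊆ gr c
    · rw [if_pos hGc, monomial_mul, coeff_monomial, mul_one]
      simp only [indExp_add_eq_iff, Incid, hG, hS, hV, hGc, true_and, Nat.cast_ite, Nat.cast_one,
        Nat.cast_zero]
    · rw [if_neg hGc, mul_zero, coeff_zero, if_neg, Nat.cast_zero]
      exact fun h => hGc h.2.2.2.1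
  · rw [if_neg hV, monDeriv_zero_right, mul_zero, coeff_zero, if_neg, Nat.cast_zero]
    exact fun h => hV h.1

theorem rank_le_Phi [CharZero F] {K : Type*} [Fintype K] (gr : K → Finset σ) (r m : ℕ)
    (V : Finset σ) :
    (Matrix.of fun R T => (entCount gr r m V R T : ℝ)).rank ≤
      Phi F {γ : σ →₀ ℕ | (∀ v, γ v ≤ 1) ∧ (∑ v, γ v) = r} m
        (restrictPoly V (∑ c : K, ∏ v ∈ gr c, (X v : MvPolynomial σ F))) := by
  classical
  refine (rank_le_finrank_span_rows F (entCount gr r m V)).trans ?_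
  set P := restrictPoly V (∑ c : K, ∏ v ∈ gr c, (X v : MvPolynomial σ F)) with hP
  set gens : Set (MvPolynomial σ F) :=
    {q | ∃ γ ∈ {γ : σ →₀ ℕ | (∀ v, γ v ≤ 1) ∧ (∑ v, γ v) = r}, ∃ S : Finset σ, S.card = m ∧
      q = mlProj ((∏ i ∈ S, X i) * monDeriv γ P)} with hgens
  have hind : ∀ γ : σ →₀ ℕ, (∀ v, γ v ≤ 1) → γ = indExp (Finset.univ.filter fun v => γ v = 1) := by
    intro γ h
    ext v
    rw [indExp_apply]
    have := h v
    by_cases h1 : γ v = 1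
    · simp [h1]
    · simp [h1]
      omega
  have hfin : gens.Finite := by
    refine (Set.finite_range fun R : Finset σ × Finset σ =>
      mlProj ((∏ i ∈ R.2, X i) * monDeriv (indExp R.1) P)).subset ?_
    rintro q ⟨γ, ⟨h1, _⟩, S, _, rfl⟩
    refine ⟨(Finset.univ.filter fun v => γ v = 1, S), ?_⟩
    simp only
    rw [← hind γ h1]
  have : Module.Finite F (Submodule.span F gens) := FiniteDimensional.span_of_finite F hfin
  let L : MvPolynomial σ F →ₗ[F] (Finset σ → F) := LinearMap.pi fun T => lcoeff F (indExp T)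
  have hle : Submodule.span F (Set.range fun R T => (entCount gr r m V R T : F)) ≤
      (Submodule.span F gens).map L := by
    rw [Submodule.span_le]
    rintro _ ⟨⟨G, S⟩, rfl⟩
    by_cases h : G.card = r ∧ S.card = m
    · refine ⟨mlProj ((∏ i ∈ S, X i) * monDeriv (indExp G) P), Submodule.subset_span ?_, ?_⟩
      · refine ⟨indExp G, ⟨fun v => ?_, ?_⟩, S, h.2, rfl⟩
        · rw [indExp_apply]
          split_ifs <;> simp
        · simp [indExp_apply, h.1]
      · ext T
        exact coeff_shifted_deriv gr V G S T h.1 h.2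
    · have : (fun T => (entCount gr r m V (G, S) T : F)) = 0 := by
        ext T
        simp only [entCount, Pi.zero_apply, Nat.cast_eq_zero]
        refine Finset.sum_eq_zero fun c _ => if_neg ?_
        exact fun h' => h ⟨h'.2.1, h'.2.2.1⟩
      simp only [this]
      exact Submodule.zero_mem _
  exact (Submodule.finrank_mono hle).trans (Submodule.finrank_map_le _ _)

end

/-- The weight of `V` under the product distribution with parameter `p`. -/
noncomputable def bernWeight {σ : Type*} [Fintype σ] (p : ℝ) (V : Finset σ) : ℝ :=
  p ^ V.card * (1 - p) ^ (Fintype.card σ - V.card)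

theorem bernWeight_nonneg {σ : Type*} [Fintype σ] {p : ℝ} (h0 : 0 ≤ p) (h1 : p ≤ 1)
    (V : Finset σ) : 0 ≤ bernWeight p V :=
  mul_nonneg (pow_nonneg h0 _) (pow_nonneg (sub_nonneg.mpr h1) _)

theorem sum_bernWeight_of_subset {σ : Type*} [Fintype σ] [DecidableEq σ] (p : ℝ)
    (A : Finset σ) : ∑ V, bernWeight p V * (if A ⊆ V then 1 else 0) = p ^ A.card := by
  have h := Finset.prod_add (fun _ : σ => p) (fun v => if v ∈ A then 0 else 1 - p) Finset.univ
  have hl : ∏ v : σ, (p + if v ∈ A then 0 else 1 - p) = p ^ A.card := by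
    have : ∀ v : σ, (p + if v ∈ A then 0 else 1 - p) = if v ∈ A then p else 1 := by
      intro v
      split_ifs <;> ring
    simp only [this, Finset.prod_ite_mem, Finset.univ_inter, Finset.prod_const]
  rw [← hl, h, Finset.powerset_univ]
  refine Finset.sum_congr rfl fun V _ => ?_
  rw [Finset.prod_const]
  by_cases hV : A ⊆ V
  · rw [if_pos hV, mul_one, bernWeight]
    congr 1
    rw [← Finset.card_univ, ← Finset.card_sdiff_of_subset (Finset.subset_univ V),
      ← Finset.prod_const]
    refine Finset.prod_congr rfl fun v hv => ?_
    rw [if_neg]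
    exact fun h => (Finset.mem_sdiff.mp hv).2 (hV h)
  · rw [if_neg hV, mul_zero]
    obtain ⟨v, hv, hv'⟩ := Finset.not_subset.mp hV
    rw [Finset.prod_eq_zero (i := v), mul_zero]
    · simp [hv']
    · rw [if_pos hv]

theorem sum_bernWeight {σ : Type*} [Fintype σ] [DecidableEq σ] (p : ℝ) :
    ∑ V : Finset σ, bernWeight p V = 1 := by
  simpa using sum_bernWeight_of_subset p (∅ : Finset σ)

/-- Markov's inequality for the random restriction. -/
theorem le_restrictProb_of_markov {σ : Type*} [Fintype σ] [DecidableEq σ] {p : ℝ} (h0 : 0 ≤ p)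
    (h1 : p ≤ 1) (E : Finset σ → Prop) (Y : Finset σ → ℝ) (hY0 : ∀ V, 0 ≤ Y V)
    (hY : ∀ V, Y V < 1 → E V) {ε : ℝ} (hε : ∑ V, bernWeight p V * Y V ≤ ε) :
    1 - ε ≤ restrictProb σ p E := by
  classical
  have h2 : restrictProb σ p E = ∑ V : Finset σ, if E V then bernWeight p V else 0 := by
    simp only [restrictProb, bernWeight]
  rw [h2, ← sum_bernWeight (σ := σ) p, sub_le_iff_le_add]
  refine le_trans ?_ (add_le_add_right hε _)
  rw [← Finset.sum_add_distrib]
  refine Finset.sum_le_sum fun V _ => ?_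
  have hw := bernWeight_nonneg h0 h1 V
  by_cases hE : E V
  · rw [if_pos hE]
    exact le_add_of_nonneg_right (mul_nonneg hw (hY0 V))
  · rw [if_neg hE, zero_add]
    exact le_mul_of_one_le_right hw (not_lt.mp fun h => hE (hY V h))

/-- Evaluation of the polynomial with coefficients `c` at the points `0, …, n - 1`. -/
def evalPts (n ψ d : ℕ) : (Fin d → ZMod ψ) →+ (Fin n → ZMod ψ) where
  toFun c i := ∑ k : Fin d, c k * ((i : ℕ) : ZMod ψ) ^ (k : ℕ)
  map_zero' := by
    ext i
    simp
  map_add' c c' := by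
    ext i
    simp [add_mul, Finset.sum_add_distrib]

/-- The coordinates at which `f` vanishes. -/
def zeroSet {n : ℕ} {A : Type*} [Zero A] [DecidableEq A] (f : Fin n → A) : Finset (Fin n) :=
  Finset.univ.filter fun i => f i = 0

theorem evalPts_eq_zero {n ψ d : ℕ} (hψ : ψ.Prime) (hn : n ≤ ψ) {c : Fin d → ZMod ψ}
    {J : Finset (Fin n)} (hJ : d ≤ J.card) (h : ∀ i ∈ J, evalPts n ψ d c i = 0) : c = 0 := by
  have := Fact.mk hψ
  obtain ⟨J', hJ', hcard⟩ := Finset.exists_subset_card_eq hJ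
  let e := J'.orderEmbOfFin hcard
  refine Matrix.eq_zero_of_forall_index_sum_mul_pow_eq_zero
    (f := fun k : Fin d => (((e k : Fin n) : ℕ) : ZMod ψ)) ?_ fun j => ?_
  · intro a b hab
    have h1 : ((e a : Fin n) : ℕ) ≡ (e b : Fin n) [MOD ψ] := (ZMod.natCast_eq_natCast_iff _ _ _).mp hab
    have h2 := Nat.ModEq.eq_of_lt_of_lt h1 ((e a).2.trans_le hn) ((e b).2.trans_le hn)
    exact e.injective (Fin.ext h2)
  · exact h _ (hJ' (J'.orderEmbOfFin_mem hcard j))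

theorem card_evalPts_eq_zero_le {n ψ d : ℕ} [NeZero ψ] (hψ : ψ.Prime) (hn : n ≤ ψ) (hd : d ≤ n)
    (J : Finset (Fin n)) (hJ : J.card ≤ d) :
    (Finset.univ.filter fun c : Fin d → ZMod ψ => ∀ i ∈ J, evalPts n ψ d c i = 0).card
      ≤ ψ ^ (d - J.card) := by
  obtain ⟨J', hJ', -, hcard⟩ := Finset.exists_subsuperset_card_eq (Finset.subset_univ J) hJ
    (by simpa using hd)
  have hc : Fintype.card ((J' \ J : Finset (Fin n)) → ZMod ψ) = ψ ^ (d - J.card) := by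
    rw [Fintype.card_fun, ZMod.card, Fintype.card_coe, Finset.card_sdiff_of_subset hJ', hcard]
  rw [← hc, ← Finset.card_univ]
  refine Finset.card_le_card_of_injOn (fun c i => evalPts n ψ d c i) (fun _ _ => by simp) ?_
  intro c hc c' hc' hcc
  simp only [Finset.coe_filter, Finset.mem_univ, true_and, Set.mem_ofPred_eq] at hc hc'
  rw [← sub_eq_zero]
  refine evalPts_eq_zero hψ hn hcard.ge fun i hi => ?_
  rw [map_sub, Pi.sub_apply, sub_eq_zero]
  by_cases hiJ : i ∈ J
  · rw [hc i hiJ, hc' i hiJ]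
  · exact congrFun hcc ⟨i, Finset.mem_sdiff.mpr ⟨hi, hiJ⟩⟩

theorem sum_zeroSet_evalPts_le {n ψ d : ℕ} [NeZero ψ] (hψ : ψ.Prime) (hn : n ≤ ψ) (hd : d ≤ n)
    (φ : Finset (Fin n) → ℝ) (hφ : ∀ J, 0 ≤ φ J) :
    ∑ c : Fin d → ZMod ψ, (if c = 0 then 0 else φ (zeroSet (evalPts n ψ d c)))
      ≤ ∑ J : Finset (Fin n), (ψ : ℝ) ^ ((d : ℤ) - (J.card : ℤ)) * φ J := by
  classical
  have hψ0 : (0 : ℝ) < ψ := by exact_mod_cast hψ.pos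
  rw [← Finset.sum_fiberwise (g := fun c : Fin d → ZMod ψ => zeroSet (evalPts n ψ d c))]
  refine Finset.sum_le_sum fun J _ => ?_
  rw [Finset.sum_filter]
  rcases le_or_gt J.card d with hJ | hJ
  · have h1 : ∀ c : Fin d → ZMod ψ, (if zeroSet (evalPts n ψ d c) = J then
        (if c = 0 then 0 else φ (zeroSet (evalPts n ψ d c))) else 0)
        ≤ if (∀ i ∈ J, evalPts n ψ d c i = 0) then φ J else 0 := by
      intro c
      by_cases h : zeroSet (evalPts n ψ d c) = J
      · have hz : ∀ i ∈ J, evalPts n ψ d c i = 0 := by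
          intro i hi
          rw [← h] at hi
          exact (Finset.mem_filter.mp hi).2
        rw [if_pos h, h, if_pos hz]
        split_ifs
        · exact hφ J
        · exact le_rfl
      · rw [if_neg h]
        split_ifs
        · exact hφ J
        · exact le_rfl
    refine (Finset.sum_le_sum fun c _ => h1 c).trans ?_
    rw [← Finset.sum_filter, Finset.sum_const, nsmul_eq_mul]
    refine mul_le_mul_of_nonneg_right ?_ (hφ J)
    have h2 : ((d : ℤ) - (J.card : ℤ)) = ((d - J.card : ℕ) : ℤ) := by omega
    rw [h2, zpow_natCast]
    exact_mod_cast card_evalPts_eq_zero_le hψ hn hd J hJ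
  · refine (Finset.sum_eq_zero fun c _ => ?_).trans_le
      (mul_nonneg (zpow_nonneg hψ0.le _) (hφ J))
    split_ifs with h1 h2
    · rfl
    · refine absurd (evalPts_eq_zero hψ hn hJ.le fun i hi => ?_) h2
      rw [← h1] at hi
      exact (Finset.mem_filter.mp hi).2
    · rfl

section
variable {σ : Type*} [Fintype σ] [DecidableEq σ]

open Classical in
/-- The number of pairs `(G, S)` incident both to `(A, T)` and to `(A', T')`. -/
noncomputable def pairInc (r m : ℕ) (A A' T T' : Finset σ) : ℕ :=
  (Finset.univ.filter fun R : Finset σ × Finset σ =>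
    Incid r m A R.1 R.2 T ∧ Incid r m A' R.1 R.2 T').card

/-- The number of `k`-subsets containing `A` and avoiding `B`. -/
def tcount (k : ℕ) (A B : Finset σ) : ℕ :=
  (Finset.univ.filter fun T : Finset σ => T.card = k ∧ A ⊆ T ∧ Disjoint T B).card

open Classical in
theorem pairInc_le (r m : ℕ) (A A' T T' : Finset σ) :
    pairInc r m A A' T T' ≤
      if T \ T' = A \ A' ∧ T' \ T = A' \ A ∧ T.card = m + (A.card - r) then
        ∑ G ∈ (A ∩ A').powersetCard r, if A \ G ⊆ T then 1 else 0 else 0 := by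
  rcases Nat.eq_zero_or_pos (pairInc r m A A' T T') with h0 | hpos
  · rw [h0]
    exact Nat.zero_le _
  · obtain ⟨⟨G, S⟩, hR⟩ := Finset.card_pos.mp hpos
    obtain ⟨⟨hG, hS, hGA, hd, hT⟩, ⟨-, -, hGA', hd', hT'⟩⟩ := (Finset.mem_filter.mp hR).2
    dsimp only at hG hS hGA hd hT hGA' hd' hT'
    have h1 : T \ T' = A \ A' := by
      rw [hT, hT']
      ext v
      have e1 := fun h : v ∈ S => Finset.disjoint_left.mp hd h
      have e3 := @hGA' v
      simp only [Finset.mem_sdiff, Finset.mem_union] at e1 ⊢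
      tauto
    have h2 : T' \ T = A' \ A := by
      rw [hT, hT']
      ext v
      have e1 := fun h : v ∈ S => Finset.disjoint_left.mp hd' h
      have e3 := @hGA v
      simp only [Finset.mem_sdiff, Finset.mem_union] at e1 ⊢
      tauto
    have h3 : T.card = m + (A.card - r) := by
      rw [hT, Finset.card_union_of_disjoint hd, hS, Finset.card_sdiff_of_subset hGA, hG]
    rw [if_pos ⟨h1, h2, h3⟩, ← Finset.sum_filter, Finset.sum_const, smul_eq_mul, mul_one]
    refine Finset.card_le_card_of_injOn Prod.fst ?_ ?_
    · rintro ⟨G, S⟩ hR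
      obtain ⟨⟨hG, hS, hGA, hd, hT⟩, ⟨-, -, hGA', hd', hT'⟩⟩ := (Finset.mem_filter.mp hR).2
      dsimp only at hG hS hGA hd hT hGA' hd' hT'
      simp only [Finset.coe_filter, Finset.mem_powersetCard, Set.mem_ofPred_eq]
      exact ⟨⟨Finset.subset_inter hGA hGA', hG⟩, hT ▸ Finset.subset_union_right⟩
    · rintro ⟨G, S⟩ hR ⟨G', S'⟩ hR' hGG
      obtain ⟨⟨-, -, -, hd, hT⟩, -⟩ := (Finset.mem_filter.mp hR).2
      obtain ⟨⟨-, -, -, hd', hT'⟩, -⟩ := (Finset.mem_filter.mp hR').2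
      dsimp only at hd hT hd' hT' hGG
      subst hGG
      have hS : S = T \ (A \ G) := by
        rw [hT, Finset.union_sdiff_right, Finset.sdiff_eq_self_of_disjoint hd]
      have hS' : S' = T \ (A \ G) := by
        rw [hT', Finset.union_sdiff_right, Finset.sdiff_eq_self_of_disjoint hd']
      rw [hS, hS']

open Classical in
theorem sum_pairInc_mul_le (r m : ℕ) (A₁ A₁' A₂ A₂' : Finset σ) :
    ∑ T, ∑ T', pairInc r m A₁ A₁' T T' * pairInc r m A₂ A₂' T T' ≤
      if A₁ \ A₁' = A₂ \ A₂' ∧ A₁' \ A₁ = A₂' \ A₂ then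
        ∑ G₁ ∈ (A₁ ∩ A₁').powersetCard r, ∑ G₂ ∈ (A₂ ∩ A₂').powersetCard r,
          tcount (m + (A₁.card - r)) (A₁ \ G₁ ∪ A₂ \ G₂) (A₁' \ A₁) else 0 := by
  have hle : ∀ T T', pairInc r m A₁ A₁' T T' * pairInc r m A₂ A₂' T T' ≤
      (if T \ T' = A₁ \ A₁' ∧ T' \ T = A₁' \ A₁ ∧ T.card = m + (A₁.card - r) then
        ∑ G ∈ (A₁ ∩ A₁').powersetCard r, if A₁ \ G ⊆ T then 1 else 0 else 0) *
      (if T \ T' = A₂ \ A₂' ∧ T' \ T = A₂' \ A₂ ∧ T.card = m + (A₂.card - r) then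
        ∑ G ∈ (A₂ ∩ A₂').powersetCard r, if A₂ \ G ⊆ T then 1 else 0 else 0) :=
    fun T T' => Nat.mul_le_mul (pairInc_le ..) (pairInc_le ..)
  refine (Finset.sum_le_sum fun T _ => Finset.sum_le_sum fun T' _ => hle T T').trans ?_
  split_ifs with hs
  · have hT : ∀ T : Finset σ, (∑ T' : Finset σ,
        (if T \ T' = A₁ \ A₁' ∧ T' \ T = A₁' \ A₁ ∧ T.card = m + (A₁.card - r) then
          ∑ G ∈ (A₁ ∩ A₁').powersetCard r, if A₁ \ G ⊆ T then 1 else 0 else 0) *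
        (if T \ T' = A₂ \ A₂' ∧ T' \ T = A₂' \ A₂ ∧ T.card = m + (A₂.card - r) then
          ∑ G ∈ (A₂ ∩ A₂').powersetCard r, if A₂ \ G ⊆ T then 1 else 0 else 0)) ≤
        if T.card = m + (A₁.card - r) ∧ Disjoint T (A₁' \ A₁) then
          (∑ G ∈ (A₁ ∩ A₁').powersetCard r, if A₁ \ G ⊆ T then 1 else 0) *
          (∑ G ∈ (A₂ ∩ A₂').powersetCard r, if A₂ \ G ⊆ T then 1 else 0) else 0 := by
      intro T
      set a := ∑ G ∈ (A₁ ∩ A₁').powersetCard r, if A₁ \ G ⊆ T then 1 else 0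
      set b := ∑ G ∈ (A₂ ∩ A₂').powersetCard r, if A₂ \ G ⊆ T then 1 else 0
      have hpt : ∀ T' : Finset σ,
          (if T \ T' = A₁ \ A₁' ∧ T' \ T = A₁' \ A₁ ∧ T.card = m + (A₁.card - r) then a else 0) *
          (if T \ T' = A₂ \ A₂' ∧ T' \ T = A₂' \ A₂ ∧ T.card = m + (A₂.card - r) then b else 0) ≤
          if T' = T \ (A₁ \ A₁') ∪ A₁' \ A₁ then
            (if T.card = m + (A₁.card - r) ∧ Disjoint T (A₁' \ A₁) then a * b else 0) else 0 := by
        intro T'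
        by_cases h1 : T \ T' = A₁ \ A₁' ∧ T' \ T = A₁' \ A₁ ∧ T.card = m + (A₁.card - r)
        · have e1 : T' = T \ (A₁ \ A₁') ∪ A₁' \ A₁ := by
            rw [← h1.1, ← h1.2.1]
            ext v
            simp only [Finset.mem_union, Finset.mem_sdiff]
            tauto
          have e2 : Disjoint T (A₁' \ A₁) := by
            rw [← h1.2.1]
            exact Finset.disjoint_sdiff
          have e3 : (if T.card = m + (A₁.card - r) ∧ Disjoint T (A₁' \ A₁) then a * b else 0)
              = a * b := if_pos ⟨h1.2.2, e2⟩
          rw [if_pos h1, if_pos e1, e3]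
          refine Nat.mul_le_mul_left _ ?_
          split_ifs
          · exact le_rfl
          · exact Nat.zero_le _
        · rw [if_neg h1, zero_mul]
          exact Nat.zero_le _
      refine (Finset.sum_le_sum fun T' _ => hpt T').trans ?_
      rw [Finset.sum_ite_eq' Finset.univ]
      simp
    refine (Finset.sum_le_sum fun T _ => hT T).trans (le_of_eq ?_)
    simp only [tcount, Finset.card_filter]
    rw [Finset.sum_congr rfl fun G₁ _ => Finset.sum_comm, Finset.sum_comm]
    refine Finset.sum_congr rfl fun T _ => ?_
    split_ifs with h
    · rw [Finset.sum_mul_sum]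
      refine Finset.sum_congr rfl fun G₁ _ => Finset.sum_congr rfl fun G₂ _ => ?_
      rw [ite_zero_mul_ite_zero, mul_one]
      simp only [h, Finset.union_subset_iff, true_and, and_true]
    · symm
      refine Finset.sum_eq_zero fun G₁ _ => Finset.sum_eq_zero fun G₂ _ => if_neg ?_
      exact fun h' => h ⟨h'.1, h'.2.2⟩
  · refine (Finset.sum_eq_zero fun T _ => Finset.sum_eq_zero fun T' _ => ?_).le
    by_cases h1 : T \ T' = A₁ \ A₁' ∧ T' \ T = A₁' \ A₁ ∧ T.card = m + (A₁.card - r)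
    · rw [if_neg (c := T \ T' = A₂ \ A₂' ∧ _), mul_zero]
      exact fun h2 => hs ⟨h1.1.symm.trans h2.1, h1.2.1.symm.trans h2.2.1⟩
    · rw [if_neg h1, zero_mul]

open Classical in
theorem gram_entCount {K : Type*} [Fintype K] (gr : K → Finset σ) (r m : ℕ) (V T T' : Finset σ) :
    ∑ R, entCount gr r m V R T * entCount gr r m V R T' =
      ∑ x : K × K, (if gr x.1 ∪ gr x.2 ⊆ V then 1 else 0) * pairInc r m (gr x.1) (gr x.2) T T' := by
  have h : ∀ R : Finset σ × Finset σ, entCount gr r m V R T * entCount gr r m V R T' =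
      ∑ x : K × K, (if gr x.1 ⊆ V ∧ Incid r m (gr x.1) R.1 R.2 T then 1 else 0) *
        (if gr x.2 ⊆ V ∧ Incid r m (gr x.2) R.1 R.2 T' then 1 else 0) := by
    intro R
    rw [entCount, entCount, Finset.sum_mul_sum, ← Fintype.sum_prod_type']
  rw [Finset.sum_congr rfl fun R _ => h R, Finset.sum_comm]
  simp only [pairInc, Finset.card_filter, Finset.mul_sum]
  refine Finset.sum_congr rfl fun x _ => Finset.sum_congr rfl fun R _ => ?_
  rw [ite_zero_mul_ite_zero, ite_zero_mul_ite_zero, mul_one]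
  refine if_congr ?_ rfl rfl
  rw [Finset.union_subset_iff]
  tauto

open Classical in
theorem sum_sq_gram_entCount {K : Type*} [Fintype K] (gr : K → Finset σ) (r m : ℕ)
    (V : Finset σ) :
    ∑ T, ∑ T', (∑ R, entCount gr r m V R T * entCount gr r m V R T') ^ 2 =
      ∑ x : K × K, ∑ y : K × K,
        (if (gr x.1 ∪ gr x.2) ∪ (gr y.1 ∪ gr y.2) ⊆ V then 1 else 0) *
          ∑ T, ∑ T', pairInc r m (gr x.1) (gr x.2) T T' * pairInc r m (gr y.1) (gr y.2) T T' := by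
  have h : ∀ T T' : Finset σ, (∑ R, entCount gr r m V R T * entCount gr r m V R T') ^ 2 =
      ∑ x : K × K, ∑ y : K × K,
        ((if gr x.1 ∪ gr x.2 ⊆ V then 1 else 0) * pairInc r m (gr x.1) (gr x.2) T T') *
        ((if gr y.1 ∪ gr y.2 ⊆ V then 1 else 0) * pairInc r m (gr y.1) (gr y.2) T T') := by
    intro T T'
    rw [gram_entCount, sq, Finset.sum_mul_sum]
  have hcomm : ∀ f : Finset σ → Finset σ → K × K → ℕ,
      ∑ T, ∑ T', ∑ x, f T T' x = ∑ x, ∑ T, ∑ T', f T T' x := by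
    intro f
    rw [Finset.sum_congr rfl fun T (_ : T ∈ Finset.univ) =>
      Finset.sum_comm (f := fun T' x => f T T' x), Finset.sum_comm]
  rw [Finset.sum_congr rfl fun T _ => Finset.sum_congr rfl fun T' _ => h T T', hcomm]
  refine Finset.sum_congr rfl fun x _ => ?_
  rw [hcomm]
  refine Finset.sum_congr rfl fun y _ => ?_
  rw [Finset.mul_sum]
  refine Finset.sum_congr rfl fun T _ => ?_
  rw [Finset.mul_sum]
  refine Finset.sum_congr rfl fun T' _ => ?_
  rw [mul_mul_mul_comm, ite_zero_mul_ite_zero, mul_one]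
  congr 1
  refine if_congr ?_ rfl rfl
  rw [Finset.union_subset_iff (s := gr x.1 ∪ gr x.2)]

open Classical in
theorem sum_entCount {K : Type*} [Fintype K] (gr : K → Finset σ) (r m n : ℕ)
    (hgr : ∀ c, (gr c).card = n) (V : Finset σ) :
    ∑ R, ∑ T, entCount gr r m V R T =
      (∑ c, if gr c ⊆ V then 1 else 0) *
        (n.choose r * (Fintype.card σ - (n - r)).choose m) := by
  have h1 : ∀ c, ∑ R : Finset σ × Finset σ, ∑ T : Finset σ,
      (if Incid r m (gr c) R.1 R.2 T then 1 else 0)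
      = n.choose r * (Fintype.card σ - (n - r)).choose m := by
    intro c
    have h2 : ∀ R : Finset σ × Finset σ, (∑ T : Finset σ,
        (if Incid r m (gr c) R.1 R.2 T then 1 else 0)) =
        if R.1 ∈ (gr c).powersetCard r then
          (if R.2 ∈ ((gr c \ R.1)ᶜ).powersetCard m then 1 else 0) else 0 := by
      rintro ⟨G, S⟩
      have h3 : ∀ T : Finset σ, (if Incid r m (gr c) G S T then 1 else 0) =
          if T = S ∪ (gr c \ G) then (if G ∈ (gr c).powersetCard r then
          (if S ∈ ((gr c \ G)ᶜ).powersetCard m then 1 else 0) else 0) else 0 := by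
        intro T
        rw [← ite_and, ← ite_and]
        refine if_congr ?_ rfl rfl
        rw [Incid, Finset.mem_powersetCard, Finset.mem_powersetCard,
          Finset.subset_compl_iff_disjoint_right]
        tauto
      simp only [h3, Finset.sum_ite_eq', Finset.mem_univ, if_true]
    simp only [h2]
    rw [Fintype.sum_prod_type]
    simp only
    have h4 : ∀ G : Finset σ, (∑ S : Finset σ, if G ∈ (gr c).powersetCard r then
        (if S ∈ ((gr c \ G)ᶜ).powersetCard m then 1 else 0) else 0) =
        if G ∈ (gr c).powersetCard r then (Fintype.card σ - (n - r)).choose m else 0 := by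
      intro G
      split_ifs with hG
      · rw [Finset.sum_ite_mem, Finset.univ_inter, Finset.sum_const, smul_eq_mul, mul_one,
          Finset.card_powersetCard, Finset.card_compl]
        rw [Finset.mem_powersetCard] at hG
        rw [Finset.card_sdiff_of_subset hG.1, hgr, hG.2]
      · simp
    simp only [h4]
    rw [Finset.sum_ite_mem, Finset.univ_inter, Finset.sum_const, smul_eq_mul,
      Finset.card_powersetCard, hgr]
  simp only [entCount]
  rw [Finset.sum_congr rfl fun R _ => Finset.sum_comm, Finset.sum_comm, Finset.sum_mul]
  refine Finset.sum_congr rfl fun c _ => ?_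
  rw [← h1 c, Finset.mul_sum]
  refine Finset.sum_congr rfl fun R _ => ?_
  rw [Finset.mul_sum]
  refine Finset.sum_congr rfl fun T _ => ?_
  rw [ite_and]
  split_ifs <;> simp

end

section
variable {n : ℕ} {A : Type*} [DecidableEq A]

/-- The graph of `f` over the index set `I`. -/
def graphOn (f : Fin n → A) (I : Finset (Fin n)) : Finset (Fin n × A) :=
  I.image fun i => (i, f i)

@[simp]
theorem mem_graphOn {f : Fin n → A} {I : Finset (Fin n)} {v : Fin n × A} :
    v ∈ graphOn f I ↔ v.1 ∈ I ∧ f v.1 = v.2 := by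
  simp only [graphOn, Finset.mem_image, Prod.ext_iff]
  constructor
  · rintro ⟨i, hi, rfl, h⟩
    exact ⟨hi, h⟩
  · rintro ⟨h1, h2⟩
    exact ⟨v.1, h1, rfl, h2⟩

theorem card_graphOn (f : Fin n → A) (I : Finset (Fin n)) : (graphOn f I).card = I.card :=
  Finset.card_image_of_injective _ fun _ _ h => (Prod.ext_iff.mp h).1

variable [AddCommGroup A]

theorem mem_zeroSet {f : Fin n → A} {i : Fin n} : i ∈ zeroSet f ↔ f i = 0 := by
  simp [zeroSet]

theorem graphOn_inter (f g : Fin n → A) :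
    graphOn f Finset.univ ∩ graphOn g Finset.univ = graphOn f (zeroSet (f - g)) := by
  ext v
  simp only [Finset.mem_inter, mem_graphOn, mem_zeroSet, Finset.mem_univ, true_and,
    Pi.sub_apply, sub_eq_zero]
  constructor
  · rintro ⟨h1, h2⟩
    exact ⟨h1.trans h2.symm, h1⟩
  · rintro ⟨h1, h2⟩
    exact ⟨h2, h1 ▸ h2⟩

theorem graphOn_sdiff (f g : Fin n → A) :
    graphOn f Finset.univ \ graphOn g Finset.univ = graphOn f (zeroSet (f - g))ᶜ := by
  ext v
  simp only [Finset.mem_sdiff, mem_graphOn, mem_zeroSet, Finset.mem_univ, true_and,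
    Finset.mem_compl, Pi.sub_apply, sub_eq_zero]
  constructor
  · rintro ⟨h1, h2⟩
    exact ⟨fun h => h2 (h ▸ h1), h1⟩
  · rintro ⟨h1, h2⟩
    exact ⟨h2, fun h => h1 (h2.trans h.symm)⟩

theorem zeroSet_sub_comm (f g : Fin n → A) : zeroSet (f - g) = zeroSet (g - f) := by
  ext i
  simp only [mem_zeroSet, Pi.sub_apply, sub_eq_zero]
  exact eq_comm

theorem eq_sub_and_union_eq_univ_of_graphOn {f f' g g' : Fin n → A}
    (h1 : graphOn f Finset.univ \ graphOn f' Finset.univ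
      = graphOn g Finset.univ \ graphOn g' Finset.univ)
    (h2 : graphOn f' Finset.univ \ graphOn f Finset.univ
      = graphOn g' Finset.univ \ graphOn g Finset.univ) :
    g' = g - (f - f') ∧ zeroSet (f - f') ∪ zeroSet (f - g) = Finset.univ := by
  have key : ∀ i, (f i = f' i ∧ g i = g' i) ∨ (g i = f i ∧ g' i = f' i) := by
    intro i
    rw [graphOn_sdiff, graphOn_sdiff] at h1 h2
    have e1 := Finset.ext_iff.mp h1 (i, f i)
    have e2 := Finset.ext_iff.mp h2 (i, f' i)
    have e3 := Finset.ext_iff.mp h1 (i, g i)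
    simp only [mem_graphOn, mem_zeroSet, Finset.mem_compl, Pi.sub_apply, sub_eq_zero, and_true]
      at e1 e2 e3
    by_cases h : f i = f' i
    · left
      refine ⟨h, ?_⟩
      by_contra hg
      exact (e3.mpr hg).1 h
    · right
      exact ⟨(e1.mp h).2, (e2.mp fun h' => h h'.symm).2⟩
  constructor
  · funext i
    rcases key i with ⟨h, h'⟩ | ⟨h, h'⟩
    · simp [h, h']
    · simp [h, h']
  · refine Finset.eq_univ_of_forall fun i => ?_
    simp only [Finset.mem_union, mem_zeroSet, Pi.sub_apply, sub_eq_zero]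
    rcases key i with ⟨h, -⟩ | ⟨h, -⟩
    · exact Or.inl h
    · exact Or.inr h.symm

theorem card_graphOn_union (f g : Fin n → A) :
    (graphOn f Finset.univ ∪ graphOn g Finset.univ).card = 2 * n - (zeroSet (f - g)).card := by
  have h := Finset.card_union_add_card_inter (graphOn f Finset.univ) (graphOn g Finset.univ)
  rw [graphOn_inter, card_graphOn, card_graphOn, card_graphOn, Finset.card_fin] at h
  omega

theorem le_card_graphOn_union {f f' g g' : Fin n → A}
    (hu : zeroSet (f - f') ∪ zeroSet (f - g) = Finset.univ) :
    3 * n - (zeroSet (f - f')).card - (zeroSet (f - g)).card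
      ≤ ((graphOn f Finset.univ ∪ graphOn f' Finset.univ)
        ∪ (graphOn g Finset.univ ∪ graphOn g' Finset.univ)).card := by
  have hd1 : Disjoint (graphOn f Finset.univ) (graphOn f' (zeroSet (f - f'))ᶜ) := by
    rw [zeroSet_sub_comm, ← graphOn_sdiff]
    exact Finset.disjoint_sdiff
  have hd2 : Disjoint (graphOn f Finset.univ) (graphOn g (zeroSet (f - g))ᶜ) := by
    rw [zeroSet_sub_comm, ← graphOn_sdiff]
    exact Finset.disjoint_sdiff
  have hd3 : Disjoint (graphOn f' (zeroSet (f - f'))ᶜ) (graphOn g (zeroSet (f - g))ᶜ) := by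
    rw [Finset.disjoint_left]
    intro v h1 h2
    have h := hu ▸ Finset.mem_univ v.1
    rw [mem_graphOn, Finset.mem_compl] at h1 h2
    exact (Finset.mem_union.mp h).elim h1.1 h2.1
  have hc : (graphOn f Finset.univ ∪ graphOn f' (zeroSet (f - f'))ᶜ
      ∪ graphOn g (zeroSet (f - g))ᶜ).card
      = n + (n - (zeroSet (f - f')).card) + (n - (zeroSet (f - g)).card) := by
    rw [Finset.card_union_of_disjoint (Finset.disjoint_union_left.mpr ⟨hd2, hd3⟩),
      Finset.card_union_of_disjoint hd1]
    simp [card_graphOn, Finset.card_compl]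
  calc _ ≤ _ := by omega
    _ = _ := hc.symm
    _ ≤ _ := Finset.card_le_card fun v => by
      simp only [Finset.mem_union, mem_graphOn, Finset.mem_univ, true_and]
      tauto

theorem max_le_card_graphOn_sdiff_union {r : ℕ} {f g : Fin n → A} {G₁ G₂ : Finset (Fin n × A)}
    (h₁ : G₁ ⊆ graphOn f Finset.univ) (h₂ : G₂ ⊆ graphOn g Finset.univ)
    (c₁ : G₁.card = r) (c₂ : G₂.card = r) :
    max (n - r) (2 * (n - r) - (zeroSet (f - g)).card)
      ≤ (graphOn f Finset.univ \ G₁ ∪ graphOn g Finset.univ \ G₂).card := by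
  have e1 : (graphOn f Finset.univ \ G₁).card = n - r := by
    rw [Finset.card_sdiff_of_subset h₁, card_graphOn, Finset.card_fin, c₁]
  have e2 : (graphOn g Finset.univ \ G₂).card = n - r := by
    rw [Finset.card_sdiff_of_subset h₂, card_graphOn, Finset.card_fin, c₂]
  have h := Finset.card_union_add_card_inter (graphOn f Finset.univ \ G₁)
    (graphOn g Finset.univ \ G₂)
  have h3 : ((graphOn f Finset.univ \ G₁) ∩ (graphOn g Finset.univ \ G₂)).card
      ≤ (zeroSet (f - g)).card := by
    rw [← card_graphOn f (zeroSet (f - g)), ← graphOn_inter]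
    exact Finset.card_le_card (Finset.inter_subset_inter Finset.sdiff_subset Finset.sdiff_subset)
  refine max_le ?_ (by omega)
  rw [← e1]
  exact Finset.card_le_card Finset.subset_union_left

/-- The contribution of a quadruple of graphs to the second moment of the Gram matrix, in terms of
the index sets on which the differences vanish. -/
noncomputable def quadWeight (n r : ℕ) (p q C : ℝ) (J I : Finset (Fin n)) : ℝ :=
  if J ∪ I = Finset.univ then
    p ^ (3 * n - J.card - I.card) * ((J.card.choose r : ℝ) ^ 2 *
      (C * q ^ max (n - r) (2 * (n - r) - I.card) * (1 - q) ^ (n - J.card)))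
  else 0

theorem quadWeight_nonneg {r : ℕ} {p q C : ℝ} (hp : 0 ≤ p) (hq0 : 0 ≤ q) (hq1 : q ≤ 1)
    (hC : 0 ≤ C) (J I : Finset (Fin n)) : 0 ≤ quadWeight n r p q C J I := by
  unfold quadWeight
  have := sub_nonneg.mpr hq1
  split_ifs <;> positivity

variable [Fintype A]

theorem pow_mul_sum_pairInc_le {r m : ℕ} {p q C : ℝ} (hp0 : 0 ≤ p) (hp1 : p ≤ 1) (hq0 : 0 ≤ q)
    (hq1 : q ≤ 1) (hC : 0 ≤ C)
    (hT : ∀ S B : Finset (Fin n × A), S.card ≤ 2 * n → B.card ≤ n →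
      (tcount (m + (n - r)) S B : ℝ) ≤ C * q ^ S.card * (1 - q) ^ B.card)
    (f f' g g' : Fin n → A) :
    p ^ ((graphOn f Finset.univ ∪ graphOn f' Finset.univ)
        ∪ (graphOn g Finset.univ ∪ graphOn g' Finset.univ)).card *
      ((∑ T, ∑ T', pairInc r m (graphOn f Finset.univ) (graphOn f' Finset.univ) T T' *
        pairInc r m (graphOn g Finset.univ) (graphOn g' Finset.univ) T T' : ℕ) : ℝ)
      ≤ if g' = g - (f - f') then
          quadWeight n r p q C (zeroSet (f - f')) (zeroSet (f - g)) else 0 := by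
  have hs := sum_pairInc_mul_le r m (graphOn f Finset.univ) (graphOn f' Finset.univ)
    (graphOn g Finset.univ) (graphOn g' Finset.univ)
  split_ifs at hs with hcond
  · obtain ⟨hg, hu⟩ := eq_sub_and_union_eq_univ_of_graphOn hcond.1 hcond.2
    rw [if_pos hg, quadWeight, if_pos hu]
    have hz : zeroSet (g - g') = zeroSet (f - f') := by
      rw [hg, sub_sub_cancel]
    have hq1' := sub_nonneg.mpr hq1
    refine mul_le_mul (pow_le_pow_of_le_one hp0 hp1 (le_card_graphOn_union hu)) ?_
      (Nat.cast_nonneg _) (pow_nonneg hp0 _)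
    refine (Nat.cast_le.mpr hs).trans ?_
    push_cast
    rw [graphOn_inter, graphOn_inter, hz]
    refine (Finset.sum_le_card_nsmul _ _ _ fun G₁ h₁ => Finset.sum_le_card_nsmul _ _
      (C * q ^ max (n - r) (2 * (n - r) - (zeroSet (f - g)).card) *
        (1 - q) ^ (n - (zeroSet (f - f')).card)) fun G₂ h₂ => ?_).trans (le_of_eq ?_)
    · rw [Finset.mem_powersetCard] at h₁ h₂
      have s₁ : G₁ ⊆ graphOn f Finset.univ := h₁.1.trans fun v => by
        simp only [mem_graphOn, Finset.mem_univ, true_and]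
        exact fun h => h.2
      have s₂ : G₂ ⊆ graphOn g Finset.univ := h₂.1.trans fun v => by
        simp only [mem_graphOn, Finset.mem_univ, true_and]
        exact fun h => h.2
      have hB : (graphOn f' Finset.univ \ graphOn f Finset.univ).card
          = n - (zeroSet (f - f')).card := by
        rw [graphOn_sdiff, zeroSet_sub_comm, card_graphOn, Finset.card_compl, Fintype.card_fin]
      have h := hT (graphOn f Finset.univ \ G₁ ∪ graphOn g Finset.univ \ G₂)
        (graphOn f' Finset.univ \ graphOn f Finset.univ) ?_ (by omega)
      · rw [card_graphOn, Finset.card_fin]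
        refine h.trans ?_
        rw [hB]
        have := pow_le_pow_of_le_one hq0 hq1
          (max_le_card_graphOn_sdiff_union s₁ s₂ h₁.2 h₂.2)
        gcongr
      · refine (Finset.card_union_le _ _).trans ?_
        have e1 := Finset.card_le_card
          (Finset.sdiff_subset : graphOn f Finset.univ \ G₁ ⊆ graphOn f Finset.univ)
        have e2 := Finset.card_le_card
          (Finset.sdiff_subset : graphOn g Finset.univ \ G₂ ⊆ graphOn g Finset.univ)
        rw [card_graphOn, Finset.card_fin] at e1 e2
        omega
    · simp only [Finset.card_powersetCard, card_graphOn, nsmul_eq_mul]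
      ring
  · rw [Nat.le_zero.mp hs, Nat.cast_zero, mul_zero]
    split_ifs
    · exact quadWeight_nonneg hp0 hq0 hq1 hC _ _
    · exact le_rfl

end

section
variable {n : ℕ} {A K : Type*} [DecidableEq A] [Fintype A] [AddCommGroup A] [Fintype K]
  [AddCommGroup K]

theorem sum_bernWeight_mul_card_graphOn (p : ℝ) (ev : K →+ (Fin n → A)) :
    ∑ V, bernWeight p V *
      ((∑ c, if graphOn (ev c) Finset.univ ⊆ V then 1 else 0 : ℕ) : ℝ)
      = Fintype.card K * p ^ n := by
  push_cast
  simp only [Finset.mul_sum]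
  rw [Finset.sum_comm]
  simp only [sum_bernWeight_of_subset, card_graphOn, Finset.sum_const, Finset.card_univ,
    nsmul_eq_mul, Fintype.card_fin]

theorem sum_bernWeight_mul_card_graphOn_sq (p : ℝ) (ev : K →+ (Fin n → A)) :
    ∑ V, bernWeight p V *
      ((∑ c, if graphOn (ev c) Finset.univ ⊆ V then 1 else 0 : ℕ) : ℝ) ^ 2
      = Fintype.card K * ∑ h, p ^ (2 * n - (zeroSet (ev h)).card) := by
  have h1 : ∀ V : Finset (Fin n × A),
      ((∑ c, if graphOn (ev c) Finset.univ ⊆ V then 1 else 0 : ℕ) : ℝ) ^ 2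
      = ∑ c, ∑ c', if graphOn (ev c) Finset.univ ∪ graphOn (ev c') Finset.univ ⊆ V
        then 1 else 0 := by
    intro V
    push_cast
    rw [sq, Finset.sum_mul_sum]
    refine Finset.sum_congr rfl fun c _ => Finset.sum_congr rfl fun c' _ => ?_
    simp only [Finset.union_subset_iff, ite_and]
    split_ifs <;> simp
  simp only [h1, Finset.mul_sum]
  rw [Finset.sum_comm]
  have h2 : ∀ c : K, ∑ V, ∑ c', bernWeight p V *
      (if graphOn (ev c) Finset.univ ∪ graphOn (ev c') Finset.univ ⊆ V then 1 else 0)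
      = ∑ h, p ^ (2 * n - (zeroSet (ev h)).card) := by
    intro c
    rw [Finset.sum_comm, ← Equiv.sum_comp (Equiv.subLeft c)]
    refine Finset.sum_congr rfl fun h _ => ?_
    rw [sum_bernWeight_of_subset, card_graphOn_union, ← map_sub, Equiv.subLeft_apply,
      sub_sub_cancel]
  simp only [h2, Finset.sum_const, Finset.card_univ, nsmul_eq_mul, Finset.mul_sum]

theorem sum_bernWeight_mul_gram_le {r m : ℕ} {p q C : ℝ} (hp0 : 0 ≤ p) (hp1 : p ≤ 1) (hq0 : 0 ≤ q)
    (hq1 : q ≤ 1) (hC : 0 ≤ C)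
    (hT : ∀ S B : Finset (Fin n × A), S.card ≤ 2 * n → B.card ≤ n →
      (tcount (m + (n - r)) S B : ℝ) ≤ C * q ^ S.card * (1 - q) ^ B.card)
    (ev : K →+ (Fin n → A)) (hev : Function.Injective ev) :
    ∑ V, bernWeight p V * ((∑ T, ∑ T', (∑ R,
      entCount (fun c => graphOn (ev c) Finset.univ) r m V R T *
      entCount (fun c => graphOn (ev c) Finset.univ) r m V R T') ^ 2 : ℕ) : ℝ)
      ≤ Fintype.card K *
        ∑ h, ∑ g, quadWeight n r p q C (zeroSet (ev h)) (zeroSet (ev g)) := by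
  classical
  simp only [sum_sq_gram_entCount]
  have h1 : ∀ x y : K × K, ∀ c : ℕ, ∑ V, bernWeight p V *
      (((if (graphOn (ev x.1) Finset.univ ∪ graphOn (ev x.2) Finset.univ) ∪
        (graphOn (ev y.1) Finset.univ ∪ graphOn (ev y.2) Finset.univ) ⊆ V then 1 else 0) * c : ℕ)
        : ℝ) = p ^ ((graphOn (ev x.1) Finset.univ ∪ graphOn (ev x.2) Finset.univ) ∪
        (graphOn (ev y.1) Finset.univ ∪ graphOn (ev y.2) Finset.univ)).card * c := by
    intro x y c
    rw [← sum_bernWeight_of_subset, Finset.sum_mul]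
    refine Finset.sum_congr rfl fun V _ => ?_
    push_cast
    ring
  rw [Finset.sum_congr rfl fun V _ => by rw [Nat.cast_sum, Finset.mul_sum], Finset.sum_comm,
    Finset.sum_congr rfl fun x _ => by
      rw [Finset.sum_congr rfl fun V _ => by rw [Nat.cast_sum, Finset.mul_sum], Finset.sum_comm,
        Finset.sum_congr rfl fun y _ => h1 x y _]]
  have h2 : ∀ x y : K × K, _ ≤ _ := fun x y =>
    pow_mul_sum_pairInc_le hp0 hp1 hq0 hq1 hC hT (ev x.1) (ev x.2) (ev y.1) (ev y.2)
  refine (Finset.sum_le_sum fun x _ => Finset.sum_le_sum fun y _ => h2 x y).trans ?_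
  simp only [← map_sub, hev.eq_iff]
  rw [Fintype.sum_prod_type, ← Finset.card_univ, ← nsmul_eq_mul]
  refine Finset.sum_le_card_nsmul _ _ _ fun c _ => ?_
  rw [← Equiv.sum_comp (Equiv.subLeft c)]
  refine Finset.sum_le_sum fun h _ => ?_
  rw [Fintype.sum_prod_type, ← Equiv.sum_comp (Equiv.subLeft c)]
  refine Finset.sum_le_sum fun g _ => ?_
  simp [Equiv.subLeft_apply]

end

theorem cast_choose_sub_succ {N k a : ℕ} (hk : a < k) (hN : k ≤ N) :
    ((N - (a + 1)).choose (k - (a + 1)) : ℝ)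
      = (N - a).choose (k - a) * (((k : ℝ) - a) / ((N : ℝ) - a)) := by
  have h := Nat.add_one_mul_choose_eq (N - (a + 1)) (k - (a + 1))
  have e1 : N - (a + 1) + 1 = N - a := by omega
  have e2 : k - (a + 1) + 1 = k - a := by omega
  rw [e1, e2] at h
  have h' : ((N - a : ℕ) : ℝ) * ((N - (a + 1)).choose (k - (a + 1)) : ℝ)
      = (N - a).choose (k - a) * ((k - a : ℕ) : ℝ) := by exact_mod_cast h
  rw [Nat.cast_sub (by omega), Nat.cast_sub hk.le] at h'
  have hpos : (0 : ℝ) < (N : ℝ) - a := sub_pos.mpr (by exact_mod_cast hk.trans_le hN)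
  rw [mul_div_assoc', eq_div_iff hpos.ne', ← h', mul_comm]

theorem cast_choose_sub_le {N k : ℕ} (hN : k ≤ N) {a : ℕ} (ha : a ≤ k) :
    ((N - a).choose (k - a) : ℝ) ≤ N.choose k * ((k : ℝ) / N) ^ a := by
  induction a with
  | zero => simp
  | succ a ih =>
    have hN' : (k : ℝ) ≤ N := by exact_mod_cast hN
    have hak : (a : ℝ) < k := by exact_mod_cast ha
    have ha0 : (0 : ℝ) ≤ a := a.cast_nonneg
    rw [cast_choose_sub_succ ha hN, pow_succ, ← mul_assoc]
    refine mul_le_mul (ih (by omega)) ?_ (div_nonneg (by linarith) (by linarith)) (by positivity)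
    rw [div_le_div_iff₀ (by linarith) (by linarith)]
    nlinarith

theorem le_cast_choose_sub {N k a : ℕ} (hN : k ≤ N) (ha : a ≤ k) {i : ℕ} (hi : i ≤ a) :
    N.choose k * (((k : ℝ) - a) / N) ^ i ≤ ((N - i).choose (k - i) : ℝ) := by
  induction i with
  | zero => simp
  | succ i ih =>
    have hN' : (k : ℝ) ≤ N := by exact_mod_cast hN
    have hak : (a : ℝ) ≤ k := by exact_mod_cast ha
    have hia : (i : ℝ) < a := by exact_mod_cast hi
    have hi0 : (0 : ℝ) ≤ i := i.cast_nonneg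
    rw [cast_choose_sub_succ (by omega) hN, pow_succ, ← mul_assoc]
    refine mul_le_mul (ih (by omega)) ?_ (div_nonneg (by linarith) (by linarith)) (by positivity)
    exact div_le_div₀ (by linarith) (by linarith) (by linarith) (by linarith)

theorem half_mul_pow_le_choose {N k a : ℕ} (hN : k ≤ N) (hk : 2 * a ^ 2 ≤ k) (hk0 : 0 < k) :
    N.choose k * ((k : ℝ) / N) ^ a / 2 ≤ ((N - a).choose (k - a) : ℝ) := by
  have ha : a ≤ k := by nlinarith
  refine le_trans ?_ (le_cast_choose_sub hN ha le_rfl)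
  have hk0' : (0 : ℝ) < k := by exact_mod_cast hk0
  have hN0 : (0 : ℝ) < N := by exact_mod_cast hk0.trans_le hN
  have hk' : 2 * (a : ℝ) ^ 2 ≤ k := by exact_mod_cast hk
  have hak : (a : ℝ) ≤ k := by exact_mod_cast ha
  have h1 : ((k : ℝ) - a) / N = k / N * (1 - a / k) := by
    field_simp
  have h2 : 1 + (a : ℝ) * (-(a / k)) ≤ (1 + -(a / k)) ^ a := by
    refine one_add_mul_le_pow ?_ a
    have := (div_le_one hk0').mpr hak
    linarith
  have h3 : (a : ℝ) * (a / k) ≤ 1 / 2 := by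
    rw [mul_div_assoc', div_le_div_iff₀ hk0' two_pos]
    nlinarith
  rw [h1, mul_pow, mul_div_assoc, sub_eq_add_neg]
  refine mul_le_mul_of_nonneg_left ?_ (Nat.cast_nonneg _)
  rw [div_eq_mul_one_div]
  exact mul_le_mul_of_nonneg_left (by linarith) (by positivity)

theorem tcount_le_choose {σ : Type*} [Fintype σ] [DecidableEq σ] (k : ℕ) (A B : Finset σ)
    (hAB : Disjoint A B) :
    tcount k A B ≤ (Fintype.card σ - A.card - B.card).choose (k - A.card) := by
  have h : Fintype.card σ - A.card - B.card = (A ∪ B)ᶜ.card := by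
    rw [Finset.card_compl, Finset.card_union_of_disjoint hAB]
    omega
  rw [h, ← Finset.card_powersetCard]
  refine Finset.card_le_card_of_injOn (fun T => T \ A) ?_ ?_
  · intro T hT
    obtain ⟨hk, hA, hB⟩ := (Finset.mem_filter.mp hT).2
    rw [Finset.mem_coe, Finset.mem_powersetCard, Finset.card_sdiff_of_subset hA, hk]
    refine ⟨fun v hv => ?_, rfl⟩
    rw [Finset.mem_sdiff] at hv
    rw [Finset.mem_compl, Finset.mem_union]
    exact fun h => h.elim hv.2 (Finset.disjoint_left.mp hB hv.1)
  · intro T hT T' hT' hTT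
    have hA := (Finset.mem_filter.mp hT).2.2.1
    have hA' := (Finset.mem_filter.mp hT').2.2.1
    dsimp only at hTT
    rw [← Finset.sdiff_union_of_subset hA, hTT, Finset.sdiff_union_of_subset hA']

theorem tcount_le {σ : Type*} [Fintype σ] [DecidableEq σ] {n k : ℕ}
    (hk : k ≤ Fintype.card σ) (hnk : 2 * n ≤ k) (hN : 4 * n ^ 2 ≤ Fintype.card σ) (hn : 0 < n)
    {A B : Finset σ} (hA : A.card ≤ 2 * n) (hB : B.card ≤ n) :
    (tcount k A B : ℝ) ≤ 2 * (Fintype.card σ).choose k * ((k : ℝ) / Fintype.card σ) ^ A.card *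
      (1 - (k : ℝ) / Fintype.card σ) ^ B.card := by
  generalize hNN : Fintype.card σ = N at *
  have hN0 : (0 : ℝ) < N := by
    have : 0 < N := by nlinarith
    exact_mod_cast this
  have hk' : (k : ℝ) ≤ N := by exact_mod_cast hk
  have hs : 0 ≤ 1 - (k : ℝ) / N := sub_nonneg.mpr ((div_le_one hN0).mpr hk')
  by_cases hAB : Disjoint A B
  swap
  · have : tcount k A B = 0 := by
      refine Finset.card_eq_zero.mpr (Finset.filter_eq_empty_iff.mpr fun T _ h => ?_)
      exact hAB (h.2.2.mono_left h.2.1)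
    rw [this, Nat.cast_zero]
    positivity
  have h0 := tcount_le_choose k A B hAB
  have hab : A.card + B.card ≤ N := by
    rw [← Finset.card_union_of_disjoint hAB, ← hNN]
    exact Finset.card_le_univ _
  rw [hNN] at h0
  generalize A.card = a at *
  generalize B.card = b at *
  have hN4 : 4 * (n : ℝ) ^ 2 ≤ N := by exact_mod_cast hN
  have hn1 : (1 : ℝ) ≤ n := by exact_mod_cast hn
  have ha' : (a : ℝ) ≤ 2 * n := by exact_mod_cast hA
  have hNa : (0 : ℝ) < (N : ℝ) - a := by nlinarith
  refine (Nat.cast_le.mpr h0).trans ?_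
  by_cases hb : b ≤ N - k
  swap
  · rw [Nat.choose_eq_zero_of_lt (by omega), Nat.cast_zero]
    positivity
  have h1 : ((N - a - b).choose (k - a) : ℝ)
      ≤ (N - a).choose (k - a) * (((N - k : ℕ) : ℝ) / ((N - a : ℕ) : ℝ)) ^ b := by
    have h := cast_choose_sub_le (N := N - a) (k := N - k) (by omega) hb
    rw [← Nat.choose_symm (show k - a ≤ N - a by omega),
      ← Nat.choose_symm (show k - a ≤ N - a - b by omega)]
    have e1 : N - a - (k - a) = N - k := by omega
    have e2 : N - a - b - (k - a) = N - k - b := by omega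
    rwa [e1, e2]
  have h2 : (((N - k : ℕ) : ℝ) / ((N - a : ℕ) : ℝ)) ^ b ≤ 2 * (1 - (k : ℝ) / N) ^ b := by
    rw [Nat.cast_sub hk, Nat.cast_sub (by omega)]
    have e : ((N : ℝ) - k) / (N - a) = (1 - (k : ℝ) / N) * (N / (N - a)) := by
      field_simp
    rw [e, mul_pow, mul_comm]
    refine mul_le_mul_of_nonneg_right ?_ (pow_nonneg hs _)
    have hle : (N : ℝ) / (N - a) ≤ (1 - 2 * (n : ℝ) / N)⁻¹ := by
      have : (1 - 2 * (n : ℝ) / N)⁻¹ = N / (N - 2 * n) := by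
        field_simp
      rw [this]
      exact div_le_div_of_nonneg_left hN0.le (by nlinarith) (by linarith)
    have hge : 1 ≤ (N : ℝ) / (N - a) := by
      rw [one_le_div hNa]
      linarith [(Nat.cast_nonneg a : (0 : ℝ) ≤ a)]
    calc ((N : ℝ) / (N - a)) ^ b ≤ ((N : ℝ) / (N - a)) ^ n := pow_le_pow_right₀ hge hB
      _ ≤ ((1 - 2 * (n : ℝ) / N)⁻¹) ^ n := pow_le_pow_left₀ (by linarith) hle n
      _ = ((1 - 2 * (n : ℝ) / N) ^ n)⁻¹ := inv_pow _ _
      _ ≤ (1 / 2 : ℝ)⁻¹ := by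
        refine inv_anti₀ (by norm_num) ?_
        have hb : 1 + (n : ℝ) * (-(2 * (n : ℝ) / N)) ≤ (1 + -(2 * (n : ℝ) / N)) ^ n := by
          refine one_add_mul_le_pow ?_ n
          have : 2 * (n : ℝ) / N ≤ 1 := (div_le_one hN0).mpr (by nlinarith)
          linarith
        have h3 : (n : ℝ) * (2 * (n : ℝ) / N) ≤ 1 / 2 := by
          rw [mul_div_assoc', div_le_div_iff₀ hN0 two_pos]
          nlinarith
        rw [sub_eq_add_neg]
        linarith
      _ = 2 := by norm_num
  calc ((N - a - b).choose (k - a) : ℝ) ≤ _ := h1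
    _ ≤ (N.choose k * ((k : ℝ) / N) ^ a) * (2 * (1 - (k : ℝ) / N) ^ b) :=
      mul_le_mul (cast_choose_sub_le hk (by omega)) h2 (by positivity) (by positivity)
    _ = _ := by ring

theorem one_add_pow_le {x : ℝ} {n : ℕ} (hx : 0 ≤ x) (h : n * x ≤ 1 / 2) :
    (1 + x) ^ n ≤ 1 + 2 * (n * x) := by
  have h1 : (1 + x) ^ n ≤ Real.exp (n * x) := by
    rw [Real.exp_nat_mul]
    exact pow_le_pow_left₀ (by linarith) ((add_comm 1 x).trans_le (Real.add_one_le_exp x)) n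
  have h2 : Real.exp (n * x) * Real.exp (-(n * x)) = 1 := by
    rw [← Real.exp_add, add_neg_cancel, Real.exp_zero]
  have h3 := Real.add_one_le_exp (-(n * x))
  have h4 := Real.exp_pos (n * x)
  have h5 : 0 ≤ n * x := by positivity
  generalize n * x = y at *
  have h6 : Real.exp y * (1 - y) ≤ (1 + 2 * y) * (1 - y) := by nlinarith
  exact h1.trans (le_of_mul_le_mul_right h6 (by linarith))

theorem one_add_pow_le_two {x : ℝ} {n : ℕ} (hx : 0 ≤ x) (h : n * x ≤ 1 / 2) :
    (1 + x) ^ n ≤ 2 :=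
  (one_add_pow_le hx h).trans (by linarith)

theorem sum_pow_card (n : ℕ) (x : ℝ) :
    ∑ J : Finset (Fin n), x ^ J.card = (1 + x) ^ n := by
  have h := Fintype.sum_pow_mul_eq_add_pow (Fin n) x 1
  simpa [add_comm] using h

theorem sum_choose_mul_pow {n r : ℕ} (hr : r ≤ n) (x : ℝ) :
    ∑ J : Finset (Fin n), (J.card.choose r : ℝ) * x ^ (J.card - r)
      = n.choose r * (1 + x) ^ (n - r) := by
  have h := Finset.sum_powerset_apply_card (fun j => (j.choose r : ℝ) * x ^ (j - r))
    (x := (Finset.univ : Finset (Fin n)))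
  rw [Finset.powerset_univ, Finset.card_fin] at h
  rw [h, show n + 1 = r + (n - r + 1) by omega, Finset.sum_range_add,
    Finset.sum_eq_zero fun j hj => by
      rw [Nat.choose_eq_zero_of_lt (Finset.mem_range.mp hj), Nat.cast_zero, zero_mul, smul_zero],
    zero_add, add_comm 1 x, add_pow, Finset.mul_sum]
  refine Finset.sum_congr rfl fun i hi => ?_
  have hi' := Finset.mem_range.mp hi
  have h2 := Nat.choose_mul (n := n) (k := r + i) (s := r) (by omega)
  rw [Nat.add_sub_cancel_left] at h2 ⊢
  have h3 : (n.choose (r + i) : ℝ) * ((r + i).choose r : ℝ)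
      = n.choose r * (n - r).choose i := by exact_mod_cast h2
  rw [nsmul_eq_mul, ← mul_assoc, h3, one_pow]
  ring

theorem sum_zeroSet_le {n ψ d : ℕ} [NeZero ψ] (hψ : ψ.Prime) (hn : n ≤ ψ) (hd : d ≤ n)
    (φ : Finset (Fin n) → ℝ) (hφ : ∀ J, 0 ≤ φ J) :
    ∑ c, φ (zeroSet (evalPts n ψ d c))
      ≤ φ Finset.univ + ∑ J : Finset (Fin n), (ψ : ℝ) ^ d / (ψ : ℝ) ^ J.card * φ J := by
  have hψ0 : (ψ : ℝ) ≠ 0 := Nat.cast_ne_zero.mpr hψ.ne_zero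
  have h := sum_zeroSet_evalPts_le hψ hn hd φ hφ
  simp only [zpow_sub₀ hψ0, zpow_natCast] at h
  have h0 : zeroSet (evalPts n ψ d 0) = Finset.univ := by
    simp [zeroSet]
  have h1 : ∑ c, φ (zeroSet (evalPts n ψ d c)) = φ Finset.univ +
      ∑ c, if c = 0 then 0 else φ (zeroSet (evalPts n ψ d c)) := by
    rw [← Fintype.sum_ite_eq (0 : Fin d → ZMod ψ) fun _ => φ Finset.univ,
      ← Finset.sum_add_distrib]
    refine Finset.sum_congr rfl fun c _ => ?_
    by_cases hc : c = 0
    · rw [hc, h0]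
      simp
    · rw [if_neg hc, if_neg (Ne.symm hc), zero_add]
  rw [h1]
  gcongr

section
variable {n r d : ℕ} {Ψ p q C : ℝ}

theorem quadWeight_univ_univ_le (hr : r ≤ n) (hp0 : 0 < p) (hq0 : 0 < q) (hq1 : q ≤ 1)
    (hC : 0 ≤ C) (h1 : 1 ≤ Ψ ^ d * p ^ n * q ^ n) :
    quadWeight n r p q C Finset.univ Finset.univ
      ≤ C * Ψ ^ d * p ^ (2 * n) * (n.choose r : ℝ) ^ 2 * q ^ (2 * (n - r)) := by
  have hm : max (n - r) (2 * (n - r) - n) = n - r := by omega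
  have he : 3 * n - n - n = n := by omega
  rw [quadWeight, if_pos (Finset.union_self _), Finset.card_fin, hm, he, Nat.sub_self, pow_zero]
  have h2 : 1 ≤ Ψ ^ d * p ^ n * q ^ (n - r) := by
    have h3 : q ^ n ≤ q ^ (n - r) := pow_le_pow_of_le_one hq0.le hq1 (Nat.sub_le _ _)
    have h4 : 0 < q ^ n := pow_pos hq0 _
    have h5 : 0 < Ψ ^ d * p ^ n := by
      by_contra h
      nlinarith
    nlinarith
  calc _ = p ^ n * (n.choose r : ℝ) ^ 2 * C * q ^ (n - r) * 1 := by ring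
    _ ≤ p ^ n * (n.choose r : ℝ) ^ 2 * C * q ^ (n - r) * (Ψ ^ d * p ^ n * q ^ (n - r)) := by
      gcongr
    _ = _ := by ring

theorem card_le_of_finset (J : Finset (Fin n)) : J.card ≤ n := by
  simpa using Finset.card_le_univ J

theorem sum_quadWeight_univ_left_le (hn : 8 ≤ n) (hp0 : 0 < p) (hq0 : 1 / 4 ≤ q)
    (hq1 : q ≤ 1) (hC : 0 ≤ C) (hΨ : 0 < Ψ) (hΨp : (n : ℝ) ^ 2 ≤ Ψ * p) :
    ∑ I : Finset (Fin n), Ψ ^ d / Ψ ^ I.card * quadWeight n r p q C Finset.univ I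
      ≤ 2 * (C * Ψ ^ d * p ^ (2 * n) * (n.choose r : ℝ) ^ 2 * q ^ (2 * (n - r))) := by
  have hq : 0 < q := by linarith
  have hn' : (8 : ℝ) ≤ n := by exact_mod_cast hn
  have h1 : ∀ I : Finset (Fin n), Ψ ^ d / Ψ ^ I.card * quadWeight n r p q C Finset.univ I
      ≤ (C * Ψ ^ d * p ^ (2 * n) * (n.choose r : ℝ) ^ 2 * q ^ (2 * (n - r))) *
        (1 / (Ψ * p * q)) ^ I.card := by
    intro I
    have hI := card_le_of_finset I
    rw [quadWeight, if_pos (Finset.union_eq_left.mpr (Finset.subset_univ I)), Finset.card_fin, Nat.sub_self,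
      pow_zero]
    have e : 3 * n - n - I.card = 2 * n - I.card := by omega
    have hp : p ^ (2 * n) = p ^ (2 * n - I.card) * p ^ I.card := by
      rw [← pow_add]
      congr 1
      omega
    have hqm : q ^ max (n - r) (2 * (n - r) - I.card) * q ^ I.card ≤ q ^ (2 * (n - r)) := by
      rw [← pow_add]
      exact pow_le_pow_of_le_one hq.le hq1 (by omega)
    rw [e, hp, div_pow, one_pow, mul_pow, mul_pow]
    calc _ = C * Ψ ^ d * p ^ (2 * n - I.card) * (n.choose r : ℝ) ^ 2 / (Ψ ^ I.card * q ^ I.card) *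
          (q ^ max (n - r) (2 * (n - r) - I.card) * q ^ I.card) := by
          field_simp
      _ ≤ C * Ψ ^ d * p ^ (2 * n - I.card) * (n.choose r : ℝ) ^ 2 / (Ψ ^ I.card * q ^ I.card) *
          q ^ (2 * (n - r)) := by gcongr
      _ = _ := by field_simp
  refine (Finset.sum_le_sum fun I _ => h1 I).trans ?_
  rw [← Finset.mul_sum, sum_pow_card, mul_comm]
  refine mul_le_mul_of_nonneg_right (one_add_pow_le_two (by positivity) ?_) (by positivity)
  have h2 : (n : ℝ) ^ 2 * (1 / 4) ≤ Ψ * p * q := by gcongr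
  rw [mul_one_div, div_le_div_iff₀ (by positivity) two_pos]
  nlinarith

theorem sum_quadWeight_univ_right_le (hn : 8 ≤ n) (hr : r ≤ n) (hp0 : 0 < p) (hq0 : 1 / 4 ≤ q)
    (hq1 : q ≤ 1) (hC : 0 ≤ C) (hΨ : 0 < Ψ) (hΨp : (n : ℝ) ^ 2 ≤ Ψ * p)
    (hs : ∀ i ≤ n, (1 - q) ^ i ≤ 2 * (n : ℝ) ^ (2 * r) * q ^ i) :
    ∑ J : Finset (Fin n), Ψ ^ d / Ψ ^ J.card * quadWeight n r p q C J Finset.univ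
      ≤ 4 * (C * Ψ ^ d * p ^ (2 * n) * (n.choose r : ℝ) ^ 2 * q ^ (2 * (n - r))) := by
  have hq : 0 < q := by linarith
  have hn' : (8 : ℝ) ≤ n := by exact_mod_cast hn
  have hn0 : (0 : ℝ) < n := by linarith
  have h1 : ∀ J : Finset (Fin n), Ψ ^ d / Ψ ^ J.card * quadWeight n r p q C J Finset.univ
      ≤ (2 * (C * Ψ ^ d * p ^ (2 * n) * n.choose r * q ^ (2 * (n - r)))) *
        ((J.card.choose r : ℝ) * (4 / (n : ℝ) ^ 2) ^ (J.card - r)) := by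
    intro J
    have hJ := card_le_of_finset J
    rcases lt_or_ge J.card r with hjr | hjr
    · rw [quadWeight, Nat.choose_eq_zero_of_lt hjr]
      simp
    rw [quadWeight, if_pos (Finset.union_eq_right.mpr (Finset.subset_univ J)), Finset.card_fin]
    have e : 3 * n - J.card - n = 2 * n - J.card := by omega
    have hm : max (n - r) (2 * (n - r) - n) = n - r := by omega
    generalize J.card = j at *
    have hp : p ^ (2 * n) = p ^ (2 * n - j) * p ^ j := by
      rw [← pow_add]
      congr 1
      omega
    have hqq : q ^ (2 * (n - r)) = q ^ (n - r) * (q ^ (n - j) * q ^ (j - r)) := by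
      rw [← pow_add, ← pow_add]
      congr 1
      omega
    have hnj : (n : ℝ) ^ (2 * r) * ((n : ℝ) ^ 2) ^ (j - r) = ((n : ℝ) ^ 2) ^ j := by
      rw [pow_mul, ← pow_add]
      congr 1
      omega
    have hc : (j.choose r : ℝ) ≤ n.choose r := by exact_mod_cast Nat.choose_le_choose r hJ
    have hk : (n : ℝ) ^ (2 * r) * ((n : ℝ) ^ 2) ^ (j - r) ≤ Ψ ^ j * p ^ j := by
      rw [hnj, ← mul_pow]
      exact pow_le_pow_left₀ (by positivity) hΨp j
    have hq4 : 1 ≤ 4 ^ (j - r) * q ^ (j - r) := by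
      rw [← mul_pow]
      exact one_le_pow₀ (by linarith)
    rw [e, hm, hp, hqq, div_pow]
    calc _ = (C * Ψ ^ d * p ^ (2 * n - j) * q ^ (n - r) / Ψ ^ j) * (j.choose r : ℝ) *
          (j.choose r : ℝ) * (1 - q) ^ (n - j) * 1 := by field_simp
      _ ≤ (C * Ψ ^ d * p ^ (2 * n - j) * q ^ (n - r) / Ψ ^ j) * (j.choose r : ℝ) *
          (n.choose r : ℝ) * (2 * (n : ℝ) ^ (2 * r) * q ^ (n - j)) * (4 ^ (j - r) * q ^ (j - r)) := by
          have := hs (n - j) (Nat.sub_le _ _)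
          have := sub_nonneg.mpr hq1
          gcongr
      _ = (2 * C * Ψ ^ d * p ^ (2 * n - j) * q ^ (n - r) * (j.choose r : ℝ) * (n.choose r : ℝ) *
          q ^ (n - j) * (4 ^ (j - r) * q ^ (j - r)) / Ψ ^ j / ((n : ℝ) ^ 2) ^ (j - r)) *
          ((n : ℝ) ^ (2 * r) * ((n : ℝ) ^ 2) ^ (j - r)) := by field_simp
      _ ≤ (2 * C * Ψ ^ d * p ^ (2 * n - j) * q ^ (n - r) * (j.choose r : ℝ) * (n.choose r : ℝ) *
          q ^ (n - j) * (4 ^ (j - r) * q ^ (j - r)) / Ψ ^ j / ((n : ℝ) ^ 2) ^ (j - r)) *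
          (Ψ ^ j * p ^ j) := by gcongr
      _ = _ := by field_simp
  refine (Finset.sum_le_sum fun J _ => h1 J).trans ?_
  rw [← Finset.mul_sum, sum_choose_mul_pow hr]
  have h2 : (1 + 4 / (n : ℝ) ^ 2) ^ (n - r) ≤ 2 := by
    refine one_add_pow_le_two (by positivity) ?_
    rw [Nat.cast_sub hr, mul_div_assoc', div_le_div_iff₀ (by positivity) two_pos]
    nlinarith [(Nat.cast_nonneg r : (0 : ℝ) ≤ r)]
  calc _ ≤ 2 * (C * Ψ ^ d * p ^ (2 * n) * n.choose r * q ^ (2 * (n - r))) *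
        (n.choose r * 2) := by gcongr
    _ = _ := by ring

theorem sum_sum_quadWeight_le (hd : d ≤ n) (hp0 : 0 < p)
    (hq0 : 1 / 4 ≤ q) (hq1 : q ≤ 1) (hC : 0 ≤ C) (hΨ : 0 < Ψ) (hΨp : 1 ≤ Ψ * p)
    (hΨd : 16 ^ n ≤ Ψ ^ (n - d)) :
    ∑ J : Finset (Fin n), Ψ ^ d / Ψ ^ J.card * ∑ I : Finset (Fin n), Ψ ^ d / Ψ ^ I.card *
      quadWeight n r p q C J I
      ≤ C * Ψ ^ d * p ^ (2 * n) * (n.choose r : ℝ) ^ 2 * q ^ (2 * (n - r)) := by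
  have hq : 0 < q := by linarith
  have h1 : ∀ J I : Finset (Fin n), Ψ ^ d / Ψ ^ J.card * (Ψ ^ d / Ψ ^ I.card *
      quadWeight n r p q C J I)
      ≤ C * Ψ ^ d * p ^ (2 * n) * (n.choose r : ℝ) ^ 2 * q ^ (2 * (n - r)) / 4 ^ n := by
    intro J I
    unfold quadWeight
    split_ifs with hu
    swap
    · simp only [mul_zero]
      positivity
    have hJ := card_le_of_finset J
    have hI := card_le_of_finset I
    have hJI : n ≤ J.card + I.card := by
      have := Finset.card_union_le J I
      rwa [hu, Finset.card_fin] at this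
    generalize J.card = j at *
    generalize I.card = i at *
    obtain ⟨t, ht⟩ := Nat.exists_eq_add_of_le hJI
    have hΨji : Ψ ^ j * Ψ ^ i = Ψ ^ d * Ψ ^ (n - d) * Ψ ^ t := by
      rw [← pow_add, ← pow_add, ← pow_add, ht]
      congr 1
      omega
    have hp : p ^ (3 * n - j - i) * p ^ t = p ^ (2 * n) := by
      rw [← pow_add]
      congr 1
      omega
    have hc : (j.choose r : ℝ) ≤ n.choose r := by exact_mod_cast Nat.choose_le_choose r hJ
    have hqm : q ^ max (n - r) (2 * (n - r) - i) ≤ 4 ^ n * q ^ (2 * (n - r)) := by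
      calc q ^ max (n - r) (2 * (n - r) - i) ≤ q ^ (n - r) :=
            pow_le_pow_of_le_one hq.le hq1 (le_max_left _ _)
        _ = 1 * q ^ (n - r) := (one_mul _).symm
        _ ≤ (4 * q) ^ (n - r) * q ^ (n - r) := by
          gcongr
          exact one_le_pow₀ (by linarith)
        _ = 4 ^ (n - r) * q ^ (2 * (n - r)) := by rw [mul_pow, mul_assoc, ← pow_add, two_mul]
        _ ≤ _ := by
          gcongr
          · norm_num
          · exact Nat.sub_le _ _
    have hs1 : (1 - q) ^ (n - j) ≤ 1 := pow_le_one₀ (by linarith) (by linarith)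
    have hs0 : 0 ≤ 1 - q := by linarith
    have hpt : 1 ≤ Ψ ^ t * p ^ t := by
      rw [← mul_pow]
      exact one_le_pow₀ hΨp
    have h16 : (16 : ℝ) ^ n = 4 ^ n * 4 ^ n := by
      rw [← mul_pow]
      norm_num
    calc _ = Ψ ^ d * Ψ ^ d / (Ψ ^ j * Ψ ^ i) * p ^ (3 * n - j - i) * (j.choose r : ℝ) ^ 2 * C *
          q ^ max (n - r) (2 * (n - r) - i) * (1 - q) ^ (n - j) * 1 := by
          field_simp
      _ ≤ Ψ ^ d * Ψ ^ d / (Ψ ^ j * Ψ ^ i) * p ^ (3 * n - j - i) * (n.choose r : ℝ) ^ 2 * C *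
          (4 ^ n * q ^ (2 * (n - r))) * 1 * (Ψ ^ t * p ^ t) := by gcongr
      _ = C * Ψ ^ d * p ^ (2 * n) * (n.choose r : ℝ) ^ 2 * q ^ (2 * (n - r)) * 4 ^ n /
          Ψ ^ (n - d) := by
          rw [hΨji, ← hp]
          field_simp
      _ ≤ C * Ψ ^ d * p ^ (2 * n) * (n.choose r : ℝ) ^ 2 * q ^ (2 * (n - r)) * 4 ^ n /
          16 ^ n := by gcongr
      _ = _ := by
          rw [h16]
          field_simp
  simp only [Finset.mul_sum]
  refine (Finset.sum_le_sum fun J _ => Finset.sum_le_sum fun I _ => h1 J I).trans ?_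
  simp only [Finset.sum_const, Finset.card_univ, Fintype.card_finset, Fintype.card_fin,
    nsmul_eq_mul]
  have h4 : (4 : ℝ) ^ n = 2 ^ n * 2 ^ n := by
    rw [← mul_pow]
    norm_num
  rw [h4]
  push_cast
  refine le_of_eq ?_
  field_simp

end

theorem sum_quadWeight_evalPts_le {n r d ψ : ℕ} [NeZero ψ] {p q C : ℝ} (hψ : ψ.Prime)
    (hnψ : n ≤ ψ) (hd : d ≤ n) (hr : r ≤ n) (hn : 8 ≤ n) (hp0 : 0 < p) (hq0 : 1 / 4 ≤ q)
    (hq1 : q ≤ 1) (hC : 0 ≤ C) (hψp : (n : ℝ) ^ 2 ≤ ψ * p)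
    (hs : ∀ i ≤ n, (1 - q) ^ i ≤ 2 * (n : ℝ) ^ (2 * r) * q ^ i)
    (h1 : 1 ≤ (ψ : ℝ) ^ d * p ^ n * q ^ n) (hψd : 16 ^ n ≤ (ψ : ℝ) ^ (n - d)) :
    ∑ h, ∑ g, quadWeight n r p q C (zeroSet (evalPts n ψ d h)) (zeroSet (evalPts n ψ d g))
      ≤ 8 * (C * (ψ : ℝ) ^ d * p ^ (2 * n) * (n.choose r : ℝ) ^ 2 * q ^ (2 * (n - r))) := by
  have hq : 0 < q := by linarith
  have hψ0 : (0 : ℝ) < ψ := Nat.cast_pos.mpr hψ.pos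
  have hW : ∀ J I : Finset (Fin n), 0 ≤ quadWeight n r p q C J I :=
    quadWeight_nonneg hp0.le hq.le hq1 hC
  have hφ : ∀ J : Finset (Fin n), 0 ≤ quadWeight n r p q C J Finset.univ +
      ∑ I : Finset (Fin n), (ψ : ℝ) ^ d / (ψ : ℝ) ^ I.card * quadWeight n r p q C J I :=
    fun J => add_nonneg (hW _ _) (Finset.sum_nonneg fun I _ => mul_nonneg (by positivity) (hW _ _))
  refine (Finset.sum_le_sum fun h _ => sum_zeroSet_le hψ hnψ hd
    (quadWeight n r p q C (zeroSet (evalPts n ψ d h))) (hW _)).trans ?_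
  refine (sum_zeroSet_le hψ hnψ hd _ hφ).trans ?_
  simp only [mul_add, Finset.sum_add_distrib]
  have hn1 : (1 : ℝ) ≤ n := by exact_mod_cast (by omega : 1 ≤ n)
  have b1 := quadWeight_univ_univ_le hr hp0 hq hq1 hC h1
  have b2 := sum_quadWeight_univ_left_le (r := r) (d := d) hn hp0 hq0 hq1 hC hψ0 hψp
  have b3 := sum_quadWeight_univ_right_le (d := d) hn hr hp0 hq0 hq1 hC hψ0 hψp hs
  have b4 := sum_sum_quadWeight_le (r := r) hd hp0 hq0 hq1 hC hψ0 (by nlinarith) hψd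
  linarith

theorem evalPts_injective {n ψ d : ℕ} (hψ : ψ.Prime) (hn : n ≤ ψ) (hd : d ≤ n) :
    Function.Injective (evalPts n ψ d) := by
  rw [injective_iff_map_eq_zero]
  intro c hc
  exact evalPts_eq_zero hψ hn (J := Finset.univ) (by simpa using hd) fun i _ => congrFun hc i

theorem sum_bernWeight_mul_sub_sq_le {n ψ d : ℕ} [NeZero ψ] {p : ℝ} (hψ : ψ.Prime)
    (hnψ : n ≤ ψ) (hd : d ≤ n) (hn : 2 ≤ n) (hp0 : 0 < p) (hψp : (n : ℝ) ^ 2 ≤ ψ * p)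
    (hZ : n ≤ (ψ : ℝ) ^ d * p ^ n) :
    ∑ V, bernWeight p V * (((∑ c, if graphOn (evalPts n ψ d c) Finset.univ ⊆ V then 1 else 0 : ℕ)
      : ℝ) - (ψ : ℝ) ^ d * p ^ n) ^ 2 ≤ 3 * ((ψ : ℝ) ^ d * p ^ n) ^ 2 / n := by
  have hψ0 : (0 : ℝ) < ψ := Nat.cast_pos.mpr hψ.pos
  have hn' : (2 : ℝ) ≤ n := by exact_mod_cast hn
  have hK : (Fintype.card (Fin d → ZMod ψ) : ℝ) = (ψ : ℝ) ^ d := by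
    rw [Fintype.card_fun, ZMod.card, Fintype.card_fin, Nat.cast_pow]
  have e1 := sum_bernWeight_mul_card_graphOn p (evalPts n ψ d)
  have e2 := sum_bernWeight_mul_card_graphOn_sq p (evalPts n ψ d)
  have e0 := sum_bernWeight (σ := Fin n × ZMod ψ) p
  have h1 := sum_zeroSet_le hψ hnψ hd (fun J => p ^ (2 * n - J.card)) fun J => by positivity
  have h2 : ∀ J : Finset (Fin n), (ψ : ℝ) ^ d / (ψ : ℝ) ^ J.card * p ^ (2 * n - J.card)
      = (ψ : ℝ) ^ d * p ^ (2 * n) * (1 / (ψ * p)) ^ J.card := by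
    intro J
    have hJ := card_le_of_finset J
    have hp : p ^ (2 * n) = p ^ (2 * n - J.card) * p ^ J.card := by
      rw [← pow_add]
      congr 1
      omega
    rw [hp, div_pow, one_pow, mul_pow]
    field_simp
  simp only [h2, ← Finset.mul_sum, sum_pow_card, Finset.card_fin] at h1
  have h3 : (1 + 1 / ((ψ : ℝ) * p)) ^ n ≤ 1 + 2 / n := by
    have h4 : (n : ℝ) * (1 / (ψ * p)) ≤ 1 / n := by
      rw [mul_one_div, div_le_div_iff₀ (by positivity) (by linarith)]
      linarith
    have h5 : (1 : ℝ) / n ≤ 1 / 2 := one_div_le_one_div_of_le two_pos hn'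
    refine (one_add_pow_le (by positivity) (h4.trans h5)).trans ?_
    have : (2 : ℝ) / n = 2 * (1 / n) := by ring
    linarith
  rw [hK] at e1 e2
  have e3 : ∑ h, p ^ (2 * n - (zeroSet (evalPts n ψ d h)).card)
      ≤ p ^ n + (ψ : ℝ) ^ d * p ^ (2 * n) * (1 + 2 / n) := by
    refine h1.trans (add_le_add (le_of_eq (by congr 1; omega)) ?_)
    gcongr
  have e4 := mul_le_mul_of_nonneg_left e3 (pow_nonneg hψ0.le d)
  rw [← e2] at e4
  generalize hZZ : (ψ : ℝ) ^ d * p ^ n = Z at *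
  have hZ2 : (ψ : ℝ) ^ d * ((ψ : ℝ) ^ d * p ^ (2 * n) * (1 + 2 / n)) = Z ^ 2 * (1 + 2 / n) := by
    rw [← hZZ]
    ring
  rw [mul_add, hZZ, hZ2] at e4
  have h6 : ∀ (w x : ℝ), w * (x - Z) ^ 2 = w * x ^ 2 - 2 * Z * (w * x) + Z ^ 2 * w := by
    intro w x
    ring
  simp only [h6, Finset.sum_add_distrib, Finset.sum_sub_distrib, ← Finset.mul_sum]
  rw [e1, e0]
  have h7 : Z ≤ Z ^ 2 / n := by
    rw [le_div_iff₀ (by linarith)]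
    nlinarith
  have h8 : Z ^ 2 * (1 + 2 / n) = Z ^ 2 + 2 * (Z ^ 2 / n) := by ring
  have h9 : 3 * Z ^ 2 / n = 3 * (Z ^ 2 / n) := by ring
  linarith

theorem choose_div_le_of_gram_le {σ K : Type*} [Fintype σ] [DecidableEq σ] [Fintype K]
    (gr : K → Finset σ) {n r m : ℕ} (hgr : ∀ c, (gr c).card = n) (V : Finset σ)
    (hN : m + (n - r) ≤ Fintype.card σ) (hk : 2 * (n - r) ^ 2 ≤ m + (n - r))
    (hk0 : 0 < m + (n - r)) {q Z w : ℝ} (hq : q = ((m + (n - r) : ℕ) : ℝ) / Fintype.card σ)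
    (hr : r ≤ n) (hZ0 : 0 < Z)
    (hZ : Z / 2 ≤ ((∑ c, if gr c ⊆ V then 1 else 0 : ℕ) : ℝ)) (hw : 0 < w)
    (hX : ((∑ T, ∑ T', (∑ R, entCount gr r m V R T * entCount gr r m V R T') ^ 2 : ℕ) : ℝ)
      ≤ w * (16 * ((Fintype.card σ).choose (m + (n - r)) * Z ^ 2 * (n.choose r : ℝ) ^ 2 *
        q ^ (2 * (n - r))))) :
    ((Fintype.card σ).choose (m + (n - r)) : ℝ) / (256 * w)
      ≤ (Matrix.of fun R T => (entCount gr r m V R T : ℝ)).rank := by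
  have h := sq_sum_sq_le_rank_mul (Matrix.of fun R T => (entCount gr r m V R T : ℝ))
  have hX' : ∑ T, ∑ T', (((Matrix.of fun R T => (entCount gr r m V R T : ℝ)).transpose *
      Matrix.of fun R T => (entCount gr r m V R T : ℝ)) T T') ^ 2
      = ((∑ T, ∑ T', (∑ R, entCount gr r m V R T * entCount gr r m V R T') ^ 2 : ℕ) : ℝ) := by
    push_cast
    simp only [Matrix.mul_apply, Matrix.transpose_apply, Matrix.of_apply]
  rw [hX'] at h
  have hq0 : 0 < q := by
    rw [hq]
    have : 0 < Fintype.card σ := hk0.trans_le hN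
    positivity
  have hC : (0 : ℝ) < (Fintype.card σ).choose (m + (n - r)) := by
    exact_mod_cast Nat.choose_pos hN
  have hc : (0 : ℝ) < n.choose r := by exact_mod_cast Nat.choose_pos hr
  have hI : (n.choose r : ℝ) * Z * (Fintype.card σ).choose (m + (n - r)) * q ^ (n - r) / 4
      ≤ ∑ R, ∑ T, (Matrix.of fun R T => (entCount gr r m V R T : ℝ)) R T ^ 2 := by
    have h1 := sum_entCount gr r m n hgr V
    have h2 := half_mul_pow_le_choose hN hk hk0
    rw [← hq, Nat.add_sub_cancel] at h2
    have h3 : ((∑ R, ∑ T, entCount gr r m V R T : ℕ) : ℝ)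
        ≤ ∑ R, ∑ T, (Matrix.of fun R T => (entCount gr r m V R T : ℝ)) R T ^ 2 := by
      push_cast
      refine Finset.sum_le_sum fun R _ => Finset.sum_le_sum fun T _ => ?_
      rw [Matrix.of_apply]
      exact_mod_cast Nat.le_self_pow two_ne_zero _
    refine le_trans ?_ h3
    rw [h1, Nat.cast_mul, Nat.cast_mul]
    calc _ = Z / 2 * (n.choose r * ((Fintype.card σ).choose (m + (n - r)) * q ^ (n - r) / 2)) := by
          ring
      _ ≤ _ := by gcongr
  have h4 := pow_le_pow_left₀ (by positivity) hI 2
  have h5 := (h4.trans h).trans (mul_le_mul_of_nonneg_left hX (Nat.cast_nonneg _))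
  generalize hCN : ((Fintype.card σ).choose (m + (n - r)) : ℝ) = CN at *
  generalize ((Matrix.of fun R T => (entCount gr r m V R T : ℝ)).rank : ℝ) = ρ at *
  have hD : 0 < CN * Z ^ 2 * (n.choose r : ℝ) ^ 2 * q ^ (2 * (n - r)) := by positivity
  rw [div_le_iff₀ (by positivity)]
  refine le_of_mul_le_mul_right ?_ hD
  calc CN * (CN * Z ^ 2 * (n.choose r : ℝ) ^ 2 * q ^ (2 * (n - r)))
      = 16 * ((n.choose r : ℝ) * Z * CN * q ^ (n - r) / 4) ^ 2 := by ring
    _ ≤ 16 * (ρ * (w * (16 * (CN * Z ^ 2 * (n.choose r : ℝ) ^ 2 * q ^ (2 * (n - r)))))) := by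
      gcongr
    _ = _ := by ring

theorem le_restrictProb_of_moments {σ : Type*} [Fintype σ] [DecidableEq σ] {p : ℝ} (h0 : 0 ≤ p)
    (h1 : p ≤ 1) (E : Finset σ → Prop) (S G : Finset σ → ℝ) (hG0 : ∀ V, 0 ≤ G V) {Z D w η : ℝ}
    (hZ : 0 < Z) (hD : 0 < D) (hw : 0 < w)
    (hS : ∑ V, bernWeight p V * (S V - Z) ^ 2 ≤ η * Z ^ 2) (hG : ∑ V, bernWeight p V * G V ≤ D)
    (hE : ∀ V, Z / 2 ≤ S V → G V ≤ w * D → E V) :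
    1 - (4 * η + 1 / w) ≤ restrictProb σ p E := by
  refine le_restrictProb_of_markov h0 h1 E
    (fun V => 4 / Z ^ 2 * (S V - Z) ^ 2 + 1 / (w * D) * G V)
    (fun V => add_nonneg (by positivity) (mul_nonneg (by positivity) (hG0 V))) (fun V hY => ?_) ?_
  · have hY1 : 4 / Z ^ 2 * (S V - Z) ^ 2 < 1 :=
      lt_of_le_of_lt (le_add_of_nonneg_right (mul_nonneg (by positivity) (hG0 V))) hY
    have hY2 : 1 / (w * D) * G V < 1 :=
      lt_of_le_of_lt (le_add_of_nonneg_left (by positivity)) hY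
    rw [div_mul_eq_mul_div, div_lt_one (by positivity)] at hY1
    rw [one_div_mul_eq_div, div_lt_one (by positivity)] at hY2
    refine hE V ?_ hY2.le
    by_contra hlt
    push Not at hlt
    nlinarith
  · simp only [mul_add, Finset.sum_add_distrib, mul_left_comm (bernWeight p _), ← Finset.mul_sum]
    have e1 := mul_le_mul_of_nonneg_left hS (by positivity : 0 ≤ 4 / Z ^ 2)
    have e2 := mul_le_mul_of_nonneg_left hG (by positivity : 0 ≤ 1 / (w * D))
    refine (add_le_add e1 e2).trans (le_of_eq ?_)
    field_simp

theorem le_restrictProb_choose_div_le_Phi (F : Type*) [Field F] [CharZero F] {n ψ d r m : ℕ}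
    [NeZero ψ] {p q : ℝ} (hψ : ψ.Prime) (hnψ : n ≤ ψ) (hd : d ≤ n) (hr : r ≤ n) (hn : 65536 ≤ n)
    (hp0 : 0 < p) (hp1 : p ≤ 1) (hψp : (n : ℝ) ^ 2 ≤ ψ * p)
    (hq : q = ((m + (n - r) : ℕ) : ℝ) / ((n * ψ : ℕ) : ℝ)) (hq0 : 1 / 4 ≤ q) (hq1 : q ≤ 1)
    (hs : ∀ i ≤ n, (1 - q) ^ i ≤ 2 * (n : ℝ) ^ (2 * r) * q ^ i)
    (h1 : 1 ≤ (ψ : ℝ) ^ d * p ^ n * q ^ n) (hZ : n ≤ (ψ : ℝ) ^ d * p ^ n)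
    (hψd : 16 ^ n ≤ (ψ : ℝ) ^ (n - d)) :
    1 - (12 / n + 1 / Real.sqrt n) ≤ restrictProb (Fin n × ZMod ψ) p (fun V =>
      ((n * ψ).choose (m + (n - r)) : ℝ) / n ≤
        (Phi F {γ : (Fin n × ZMod ψ) →₀ ℕ | (∀ v, γ v ≤ 1) ∧ (∑ v, γ v) = r} m
          (restrictPoly V (∑ c : Fin d → ZMod ψ, ∏ i : Fin n,
            X (i, evalPts n ψ d c i))) : ℝ)) := by
  have hn' : (65536 : ℝ) ≤ n := by exact_mod_cast hn
  have hψ0 : (0 : ℝ) < ψ := Nat.cast_pos.mpr hψ.pos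
  have hq' : 0 < q := by linarith
  have hcard : Fintype.card (Fin n × ZMod ψ) = n * ψ := by
    rw [Fintype.card_prod, Fintype.card_fin, ZMod.card]
  have hN0 : (0 : ℝ) < ((n * ψ : ℕ) : ℝ) := by
    push_cast
    exact mul_pos (by linarith) hψ0
  have hψn : (n : ℝ) ^ 2 ≤ ψ := hψp.trans (mul_le_of_le_one_right hψ0.le hp1)
  have hkN : m + (n - r) ≤ n * ψ := by
    rw [hq, div_le_one hN0] at hq1
    exact_mod_cast hq1
  have hk : 2 * n ^ 2 ≤ m + (n - r) := by
    rw [hq, div_le_div_iff₀ (by norm_num) hN0] at hq0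
    push_cast at hq0
    have : 2 * (n : ℝ) ^ 2 ≤ ((m + (n - r) : ℕ) : ℝ) := by
      push_cast
      nlinarith
    exact_mod_cast this
  have hk0 : 0 < m + (n - r) := by
    have : 0 < n := by omega
    exact lt_of_lt_of_le (by positivity) hk
  have hN : 4 * n ^ 2 ≤ n * ψ := by
    have : 4 * (n : ℝ) ^ 2 ≤ ((n * ψ : ℕ) : ℝ) := by
      push_cast
      nlinarith
    exact_mod_cast this
  have hT : ∀ S B : Finset (Fin n × ZMod ψ), S.card ≤ 2 * n → B.card ≤ n →
      (tcount (m + (n - r)) S B : ℝ)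
        ≤ (2 * (n * ψ).choose (m + (n - r))) * q ^ S.card * (1 - q) ^ B.card := by
    intro S B hS hB
    have h := tcount_le (k := m + (n - r)) (hcard ▸ hkN) (by nlinarith) (hcard ▸ hN) (by omega)
      hS hB
    rwa [hcard, ← hq] at h
  have hX := sum_bernWeight_mul_gram_le hp0.le hp1 hq'.le hq1 (by positivity) hT (evalPts n ψ d)
    (evalPts_injective hψ hnψ hd)
  have hW := sum_quadWeight_evalPts_le (C := 2 * (n * ψ).choose (m + (n - r))) hψ hnψ hd hr
    (by omega) hp0 hq0 hq1 (by positivity) hψp hs h1 hψd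
  have hK : (Fintype.card (Fin d → ZMod ψ) : ℝ) = (ψ : ℝ) ^ d := by
    rw [Fintype.card_fun, ZMod.card, Fintype.card_fin, Nat.cast_pow]
  have hV := sum_bernWeight_mul_sub_sq_le hψ hnψ hd (by omega) hp0 hψp hZ
  have hX2 := hX.trans (mul_le_mul_of_nonneg_left hW (Nat.cast_nonneg _))
  rw [hK] at hX2
  set Z := (ψ : ℝ) ^ d * p ^ n with hZdef
  have hZ0 : 0 < Z := by linarith
  set D := 16 * ((n * ψ).choose (m + (n - r)) * Z ^ 2 * (n.choose r : ℝ) ^ 2 *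
    q ^ (2 * (n - r))) with hD
  have hCpos : (0 : ℝ) < (n * ψ).choose (m + (n - r)) := by exact_mod_cast Nat.choose_pos hkN
  have hcpos : (0 : ℝ) < n.choose r := by exact_mod_cast Nat.choose_pos hr
  have hD0 : 0 < D := by positivity
  have hDeq : (ψ : ℝ) ^ d * (8 * (2 * (n * ψ).choose (m + (n - r)) * (ψ : ℝ) ^ d * p ^ (2 * n) *
      (n.choose r : ℝ) ^ 2 * q ^ (2 * (n - r)))) = D := by
    rw [hD, hZdef]
    ring
  rw [hDeq] at hX2
  have hsq0 : 0 < Real.sqrt n := Real.sqrt_pos.mpr (by linarith)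
  have hsq : 256 * Real.sqrt n ≤ n := by
    have h2 : (256 : ℝ) ≤ Real.sqrt n := Real.le_sqrt_of_sq_le (by linarith)
    have h3 := Real.mul_self_sqrt (by linarith : (0 : ℝ) ≤ n)
    nlinarith
  have h12 : 12 / (n : ℝ) + 1 / Real.sqrt n = 4 * (3 / n) + 1 / Real.sqrt n := by ring
  rw [h12]
  refine le_restrictProb_of_moments hp0.le hp1 _ _ _ (fun V => Nat.cast_nonneg _) hZ0 hD0 hsq0
    (hV.trans_eq (by ring)) hX2 fun V hS hG => ?_
  have h := choose_div_le_of_gram_le (fun c => graphOn (evalPts n ψ d c) Finset.univ) (n := n)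
    (r := r) (m := m) (fun c => by rw [card_graphOn, Finset.card_fin]) V (by rwa [hcard])
    (le_trans (by gcongr; exact Nat.sub_le _ _) hk) hk0
    (q := q) (Z := Z) (w := Real.sqrt n) (by rw [hcard, hq]) hr hZ0 hS hsq0 (by rwa [hcard])
  rw [hcard] at h
  have hP : (∑ c : Fin d → ZMod ψ, ∏ i : Fin n, X (i, evalPts n ψ d c i) :
      MvPolynomial (Fin n × ZMod ψ) F)
      = ∑ c, ∏ v ∈ graphOn (evalPts n ψ d c) Finset.univ, X v := by
    refine Finset.sum_congr rfl fun c _ => ?_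
    rw [graphOn, Finset.prod_image fun _ _ _ _ h => (Prod.ext_iff.mp h).1]
  rw [hP]
  refine le_trans ?_ (h.trans (Nat.cast_le.mpr (rank_le_Phi _ r m V)))
  exact div_le_div_of_nonneg_left hCpos.le (by positivity) hsq

theorem one_add_div_one_sub_le_exp {x : ℝ} (h0 : 0 ≤ x) (h1 : x ≤ 1 / 2) :
    (1 + x) / (1 - x) ≤ Real.exp (2 * x + 2 * x ^ 3) := by
  have h := Real.quadratic_le_exp_of_nonneg (show 0 ≤ 2 * x + 2 * x ^ 3 by positivity)
  refine le_trans ?_ h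
  rw [div_le_iff₀ (by linarith)]
  have h2 : 0 ≤ x ^ 4 * (1 - 2 * x) := mul_nonneg (by positivity) (by linarith)
  have h3 : 0 ≤ x ^ 6 * (1 - x) := mul_nonneg (by positivity) (by linarith)
  nlinarith

/-- The degree bound of the Nisan–Wigderson polynomial lies well between the two exponents at which
the expected number of surviving monomials becomes small and at which the design property fails. -/
theorem design_exponent_bounds {a G l n P D d : ℝ} (ha : a < 1) (ha0 : 0 ≤ a)
    (hG : (1 - a) * (2 + G) = 3) (hG0 : 0 ≤ G) (hl : 11 ≤ l) (hn : 4 * (2 + G) ≤ n)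
    (hP : (1 + G) * l ≤ P) (hP' : P ≤ 1 + (1 + G) * l)
    (hD : D = (G + a * (l + P) / l) / (2 * (1 + G)) * n) (hdD : d ≤ D) (hDd : D ≤ d + 1) :
    D ≤ n ∧ 3 * n ≤ (n - d) * P ∧ 2 * n ≤ d * P - n * (a * (l + P)) := by
  have hl0 : l ≠ 0 := by linarith
  have hG1 : 0 < 1 + G := by linarith
  have hn0 : 0 < n := by linarith
  have hDl : D * ((1 + G) * l) = n / 2 * (G * l + a * (l + P)) := by
    rw [hD]
    field_simp
  have haP : a * (l + P) ≤ a * (1 + (2 + G) * l) := mul_le_mul_of_nonneg_left (by linarith) ha0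
  have hpos : 0 < (1 + G) * l := by positivity
  have hD0 : 0 ≤ D := by
    rw [hD]
    have : 0 ≤ l + P := by linarith
    positivity
  have hgap : n / 2 * (3 * l - 1) ≤ (n - D) * ((1 + G) * l) := by
    have e : (n - D) * ((1 + G) * l) = n / 2 * ((2 + G) * l - a * (l + P)) := by
      rw [sub_mul, hDl]
      ring
    rw [e]
    refine mul_le_mul_of_nonneg_left ?_ (by linarith)
    have : (1 - a) * (2 + G) * l = 3 * l := by rw [hG]
    linarith
  have h1 : D ≤ n := by
    by_contra! h
    have : (n - D) * ((1 + G) * l) < 0 := mul_neg_of_neg_of_pos (by linarith) hpos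
    nlinarith
  refine ⟨h1, ?_, ?_⟩
  · calc 3 * n ≤ n / 2 * (3 * l - 1) := by nlinarith
      _ ≤ (n - D) * ((1 + G) * l) := hgap
      _ ≤ (n - d) * P := mul_le_mul (by linarith) hP hpos.le (by linarith)
  · have h2 : D * ((1 + G) * l) ≤ D * P := mul_le_mul_of_nonneg_left hP hD0
    have h3 : D * P ≤ (d + 1) * P := mul_le_mul_of_nonneg_right hDd (by linarith)
    have h4 : n / 2 * (G * l - a * (1 + (2 + G) * l)) ≤ n / 2 * (G * l - a * (l + P)) :=
      mul_le_mul_of_nonneg_left (by linarith) (by linarith)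
    have h5 : G * l - a * (1 + (2 + G) * l) = l - a := by
      have : (1 - a) * (2 + G) * l = 3 * l := by rw [hG]
      linarith
    rw [h5] at h4
    have h6 : n / 2 * (l - 1) ≤ n / 2 * (l - a) :=
      mul_le_mul_of_nonneg_left (by linarith) (by linarith)
    have h7 : 4 * (2 + G) * (l / 4) ≤ n * (l / 4) :=
      mul_le_mul_of_nonneg_right hn (by linarith)
    nlinarith

theorem one_sub_pow_le_of_half_le {n r i : ℕ} {q x : ℝ} (hn : 0 < n) (hx0 : 0 ≤ x) (hx1 : x ≤ 1 / 2)
    (hx : x * n = r * Real.log n) (hx3 : x ^ 3 * n ≤ 1 / 3) (hq : (1 - x) / 2 ≤ q) (hq1 : q ≤ 1)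
    (hi : i ≤ n) : (1 - q) ^ i ≤ 2 * (n : ℝ) ^ (2 * r) * q ^ i := by
  have hn0 : (0 : ℝ) < n := Nat.cast_pos.mpr hn
  have hq0 : 0 < q := by linarith
  have h1 : (1 - q) / q ≤ (1 + x) / (1 - x) := by
    rw [div_le_div_iff₀ hq0 (by linarith)]
    nlinarith
  have h2 : ((1 - q) / q) ^ i ≤ 2 * (n : ℝ) ^ (2 * r) := by
    calc ((1 - q) / q) ^ i ≤ ((1 + x) / (1 - x)) ^ i :=
          pow_le_pow_left₀ (div_nonneg (by linarith) hq0.le) h1 i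
      _ ≤ ((1 + x) / (1 - x)) ^ n :=
          pow_le_pow_right₀ ((one_le_div (by linarith)).mpr (by linarith)) hi
      _ ≤ Real.exp (2 * x + 2 * x ^ 3) ^ n := pow_le_pow_left₀
          (div_nonneg (by linarith) (by linarith)) (one_add_div_one_sub_le_exp hx0 hx1) n
      _ = Real.exp (2 * (x ^ 3 * n)) * Real.exp ((2 * r : ℕ) * Real.log n) := by
          rw [← Real.exp_nat_mul, ← Real.exp_add]
          congr 1
          push_cast
          linear_combination 2 * hx
      _ = Real.exp (2 * (x ^ 3 * n)) * (n : ℝ) ^ (2 * r) := by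
          rw [Real.exp_nat_mul, Real.exp_log hn0]
      _ ≤ 2 * (n : ℝ) ^ (2 * r) := by
          refine mul_le_mul_of_nonneg_right ?_ (by positivity)
          rw [← Real.le_log_iff_exp_le two_pos]
          have := Real.log_two_gt_d9
          linarith
  rwa [div_pow, div_le_iff₀ (pow_pos hq0 i)] at h2

theorem restrictProb_mono {σ : Type*} [Fintype σ] [DecidableEq σ] {p : ℝ} (h0 : 0 ≤ p) (h1 : p ≤ 1)
    {E E' : Finset σ → Prop} (h : ∀ V, E V → E' V) : restrictProb σ p E ≤ restrictProb σ p E' := by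
  unfold restrictProb
  have h1' := sub_nonneg.mpr h1
  refine Finset.sum_le_sum fun V _ => ?_
  split_ifs with hE hE'
  · exact le_rfl
  · exact absurd (h V hE) hE'
  · positivity
  · exact le_rfl

theorem eventually_log_pow_three_le_sqrt :
    ∀ᶠ n : ℕ in Filter.atTop, Real.log n ^ 3 ≤ 1 / 3 * Real.sqrt n := by
  have h := (isLittleO_log_rpow_rpow_atTop (s := 1 / 2) 3 (by norm_num)).bound
    (show (0 : ℝ) < 1 / 3 by norm_num)
  filter_upwards [tendsto_natCast_atTop_atTop.eventually h] with n hn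
  rw [← Real.sqrt_eq_rpow, Real.norm_of_nonneg (Real.sqrt_nonneg _)] at hn
  have e : Real.log n ^ (3 : ℝ) = Real.log n ^ 3 := by
    exact_mod_cast Real.rpow_natCast (Real.log n) 3
  rw [e] at hn
  exact (le_abs_self _).trans hn

theorem twelve_div_add_le_rpow {n : ℕ} (hn : 65536 ≤ n) :
    12 / (n : ℝ) + 1 / Real.sqrt n ≤ (n : ℝ) ^ (-(1 / 4) : ℝ) := by
  have hn' : (65536 : ℝ) ≤ n := by exact_mod_cast hn
  have hn0 : (0 : ℝ) ≤ n := by linarith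
  set u := (n : ℝ) ^ (1 / 4 : ℝ) with hu
  have hu0 : 0 ≤ u := Real.rpow_nonneg hn0 _
  have hu4 : u ^ 4 = n := by
    rw [hu, ← Real.rpow_natCast, ← Real.rpow_mul hn0]
    norm_num
  have hsq : Real.sqrt n = u ^ 2 := by
    rw [← hu4, show u ^ 4 = (u ^ 2) ^ 2 by ring, Real.sqrt_sq (by positivity)]
  have hu16 : 16 ≤ u := by
    by_contra! h
    have : u ^ 4 < 16 ^ 4 := pow_lt_pow_left₀ h hu0 (by norm_num)
    linarith
  rw [Real.rpow_neg hn0, ← hu, hsq, ← hu4, inv_eq_one_div, div_add_div _ _ (by positivity)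
    (by positivity), div_le_div_iff₀ (by positivity) (by positivity)]
  have h3 : 12 * u ^ 2 * u ≤ u ^ 4 * u ^ 1 := by nlinarith [pow_pos (by linarith : 0 < u) 3]
  nlinarith [pow_pos (by linarith : 0 < u) 5, pow_pos (by linarith : 0 < u) 3, sq_nonneg u,
    mul_le_mul_of_nonneg_left hu16 (pow_pos (by linarith : 0 < u) 5).le]

/-- The numerical hypotheses of `le_restrictProb_choose_div_le_Phi` for the parameters of the
Nisan–Wigderson polynomial. -/
theorem nw_parameter_bounds {μ : ℝ} (hμ0 : 0 ≤ μ) (hμ1 : μ < 1) {n ψ : ℕ} (hn : 65536 ≤ n)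
    (hnG : 4 * (2 + nwGamma μ) ≤ n) (hψ : 0 < ψ)
    (hlo : (n : ℝ) ^ (1 + nwGamma μ) ≤ (ψ : ℝ)) (hhi : (ψ : ℝ) ≤ 2 * (n : ℝ) ^ (1 + nwGamma μ))
    {d : ℕ} (hd : d = ⌊nwDreal μ n (n * ψ)⌋₊) {p : ℝ}
    (hp : p = ((n * ψ : ℕ) : ℝ) ^ (-(μ + (1 - μ) / 2))) :
    n ≤ ψ ∧ d ≤ n ∧ 0 < p ∧ p ≤ 1 ∧ (n : ℝ) ^ 2 ≤ ψ * p ∧ 4 ^ n ≤ (ψ : ℝ) ^ d * p ^ n ∧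
      16 ^ n ≤ (ψ : ℝ) ^ (n - d) := by
  obtain ⟨a, ha⟩ : ∃ a, a = μ + (1 - μ) / 2 := ⟨_, rfl⟩
  obtain ⟨G, hGdef⟩ : ∃ G, G = nwGamma μ := ⟨_, rfl⟩
  have hG' : G = (2 * a + 1) / (1 - a) := by rw [hGdef, nwGamma, ha]
  have ha1 : a < 1 := by linarith
  have ha0 : 0 ≤ a := by linarith
  have h1a : 0 < 1 - a := by linarith
  have hG : (1 - a) * (2 + G) = 3 := by
    rw [hG']
    field_simp
    ring
  have hG0 : 0 ≤ G := by
    rw [hG']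
    positivity
  have hn' : (65536 : ℝ) ≤ n := by exact_mod_cast hn
  have hn0 : (0 : ℝ) < n := by linarith
  have hψ0 : (0 : ℝ) < ψ := by exact_mod_cast hψ
  have h2l := Real.log_two_gt_d9
  have h2u := Real.log_two_lt_d9
  rw [← hGdef] at hnG hlo hhi
  rw [← ha] at hp
  obtain ⟨l, hldef⟩ : ∃ l, l = Real.log n := ⟨_, rfl⟩
  obtain ⟨P, hPdef⟩ : ∃ P, P = Real.log ψ := ⟨_, rfl⟩
  have hl : 11 ≤ l := by
    have h := Real.log_le_log (by norm_num) hn'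
    have e : Real.log 65536 = 16 * Real.log 2 := by
      rw [show (65536 : ℝ) = 2 ^ 16 by norm_num, Real.log_pow]
      norm_num
    linarith
  have hP : (1 + G) * l ≤ P := by
    have h := Real.log_le_log (Real.rpow_pos_of_pos hn0 _) hlo
    rwa [Real.log_rpow hn0, ← hldef, ← hPdef] at h
  have hP' : P ≤ 1 + (1 + G) * l := by
    have h := Real.log_le_log hψ0 hhi
    rw [Real.log_mul two_ne_zero (Real.rpow_pos_of_pos hn0 _).ne', Real.log_rpow hn0, ← hldef,
      ← hPdef] at h
    linarith
  have hN : Real.log ((n * ψ : ℕ) : ℝ) = l + P := by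
    rw [Nat.cast_mul, Real.log_mul hn0.ne' hψ0.ne', hldef, hPdef]
  have hN1 : (1 : ℝ) ≤ ((n * ψ : ℕ) : ℝ) := by
    exact_mod_cast Nat.mul_pos (by omega) hψ
  have hD : nwDreal μ n (n * ψ) = (G + a * (l + P) / l) / (2 * (1 + G)) * n := by
    rw [nwDreal, hN, ← hGdef, ← ha, ← hldef]
  have hD0 : 0 ≤ nwDreal μ n (n * ψ) := by
    rw [hD]
    have : 0 ≤ P := le_trans (by positivity) hP
    positivity
  obtain ⟨b1, b2, b3⟩ := design_exponent_bounds (d := d) ha1 ha0 hG hG0 hl hnG hP hP' hD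
    (by rw [hd]; exact Nat.floor_le hD0) (by rw [hd]; exact (Nat.lt_floor_add_one _).le)
  have hdn : d ≤ n := by
    have : (d : ℝ) ≤ n := by
      rw [hd]
      exact (Nat.floor_le hD0).trans b1
    exact_mod_cast this
  have hp0 : 0 < p := by
    rw [hp]
    exact Real.rpow_pos_of_pos (by linarith) _
  have hlogp : Real.log p = -(a * (l + P)) := by
    rw [hp, Real.log_rpow (by linarith), hN]
    ring
  refine ⟨?_, hdn, hp0, ?_, ?_, ?_, ?_⟩
  · have h : (n : ℝ) ≤ (n : ℝ) ^ (1 + G) :=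
      Real.self_le_rpow_of_one_le (by linarith) (by linarith)
    exact_mod_cast h.trans hlo
  · rw [hp]
    exact Real.rpow_le_one_of_one_le_of_nonpos hN1 (by linarith)
  · rw [← Real.log_le_log_iff (by positivity) (by positivity),
      Real.log_mul hψ0.ne' hp0.ne', hlogp, Real.log_pow, ← hldef, ← hPdef]
    have h3 : (1 - a) * ((2 + G) * l) ≤ (1 - a) * (l + P) :=
      mul_le_mul_of_nonneg_left (by linarith) h1a.le
    have h4 : (1 - a) * (2 + G) * l = 3 * l := by rw [hG]
    push_cast
    linarith
  · rw [← Real.log_le_log_iff (by positivity) (by positivity),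
      Real.log_mul (by positivity) (by positivity), Real.log_pow, Real.log_pow, Real.log_pow, hlogp,
      ← hPdef, show (4 : ℝ) = 2 ^ 2 by norm_num, Real.log_pow]
    push_cast
    nlinarith
  · rw [← Real.log_le_log_iff (by positivity) (by positivity), Real.log_pow, Real.log_pow,
      ← hPdef, show (16 : ℝ) = 2 ^ 4 by norm_num, Real.log_pow, Nat.cast_sub hdn]
    push_cast
    nlinarith

/-- The density of the supports counted by the measure, in terms of the shift parameter. -/
theorem shift_density_bounds {ε : ℝ} (hε0 : 0 < ε) (hε1 : ε ≤ 1) {n ψ r m : ℕ} (hn : 65536 ≤ n)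
    (hψ : 2 ≤ ψ) (hlog : Real.log n ^ 3 ≤ 1 / 3 * Real.sqrt n) (hr : r = ⌊ε * Real.sqrt n⌋₊)
    (hm : m = ⌊((n * ψ : ℕ) : ℝ) / 2 * (1 - (r : ℝ) * Real.log n / n)⌋₊) {q : ℝ}
    (hq : q = ((m + (n - r) : ℕ) : ℝ) / ((n * ψ : ℕ) : ℝ)) :
    r ≤ n ∧ 1 / 4 ≤ q ∧ q ≤ 1 ∧ ∀ i ≤ n, (1 - q) ^ i ≤ 2 * (n : ℝ) ^ (2 * r) * q ^ i := by
  have hn' : (65536 : ℝ) ≤ n := by exact_mod_cast hn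
  have hn0 : (0 : ℝ) < n := by linarith
  obtain ⟨s, hs⟩ : ∃ s, s = Real.sqrt n := ⟨_, rfl⟩
  have hs0 : 0 ≤ s := hs ▸ Real.sqrt_nonneg _
  have hss : s ^ 2 = n := by rw [hs, Real.sq_sqrt hn0.le]
  have hs256 : 256 ≤ s := by
    rw [hs]
    exact Real.le_sqrt_of_sq_le (by linarith)
  have hrs : (r : ℝ) ≤ s := by
    rw [hr]
    refine (Nat.floor_le (by positivity)).trans ?_
    rw [← hs]
    nlinarith
  have hrn' : (r : ℝ) + 1 ≤ n := by nlinarith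
  have hrn : r ≤ n := by
    have : (r : ℝ) ≤ n := by linarith
    exact_mod_cast this
  obtain ⟨l, hl⟩ : ∃ l, l = Real.log n := ⟨_, rfl⟩
  have hl1 : 1 ≤ l := by
    rw [hl, Real.le_log_iff_exp_le hn0]
    have := Real.exp_one_lt_d9
    linarith
  obtain ⟨x, hx⟩ : ∃ x, x = (r : ℝ) * Real.log n / n := ⟨_, rfl⟩
  have hxn : x * n = r * Real.log n := by
    rw [hx]
    field_simp
  rw [← hx] at hm
  rw [← hl, ← hs] at hlog
  have hx0 : 0 ≤ x := by
    rw [hx, ← hl]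
    positivity
  have hxs : x * s ≤ l := by
    have h : x * s * s ≤ l * s := by
      rw [mul_assoc, ← sq, hss, hxn, ← hl, mul_comm]
      gcongr
    exact le_of_mul_le_mul_right h (by linarith)
  have hx3 : x ^ 3 * n ≤ 1 / 3 := by
    have h : x ^ 3 * n * s ≤ 1 / 3 * s := by
      calc x ^ 3 * n * s = (x * s) ^ 3 := by
            rw [← hss]
            ring
        _ ≤ l ^ 3 := pow_le_pow_left₀ (by positivity) hxs 3
        _ ≤ _ := hlog
    exact le_of_mul_le_mul_right h (by linarith)
  have hx1 : x ≤ 1 / 2 := by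
    have h2 : l ≤ l ^ 3 := le_self_pow₀ hl1 (by norm_num)
    have h : x * s ≤ 1 / 2 * s := by linarith
    exact le_of_mul_le_mul_right h (by linarith)
  have hψ' : (2 : ℝ) ≤ ψ := by exact_mod_cast hψ
  have hN0 : (0 : ℝ) < ((n * ψ : ℕ) : ℝ) := by
    push_cast
    positivity
  have hN2 : 2 * (n : ℝ) ≤ ((n * ψ : ℕ) : ℝ) := by
    push_cast
    nlinarith
  have hm1 : (m : ℝ) ≤ ((n * ψ : ℕ) : ℝ) / 2 * (1 - x) := by
    rw [hm]
    exact Nat.floor_le (mul_nonneg (by positivity) (by linarith))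
  have hm2 : ((n * ψ : ℕ) : ℝ) / 2 * (1 - x) ≤ m + 1 := by
    rw [hm]
    exact (Nat.lt_floor_add_one _).le
  generalize ((n * ψ : ℕ) : ℝ) = N at *
  have hq1 : q ≤ 1 := by
    rw [hq, div_le_one hN0]
    push_cast [Nat.cast_sub hrn]
    nlinarith
  have hqx : (1 - x) / 2 ≤ q := by
    rw [hq, le_div_iff₀ hN0]
    push_cast [Nat.cast_sub hrn]
    linarith
  exact ⟨hrn, by linarith, hq1, fun i hi =>
    one_sub_pow_le_of_half_le (by omega) hx0 hx1 hxn hx3 hqx hq1 hi⟩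

/-- Kayal–Saha. For `0 ≤ μ < 1`, `δ = (1-μ)/2`, with `r = ⌊ε₁√n⌋`,
`s = ⌊ε₂√n⌋` for sufficiently small positive constants `ε₁, ε₂` with `ε₁·ε₂ ≤ 0.001`,
`m = ⌊(N/2)(1 - r·ln n/n)⌋`, `p = N^{-(μ+δ)}` and `M` the set of all multilinear monomials
of degree `r`, there are constants `c₁, c₂ > 0` such that for all sufficiently large `n`,
with probability at least `1 - n^{-c₂}` over `V ← D_p`,
`Φ_{M,m}(NW_{n,μ}|_V) ≥ n^{-c₁} · min((p^r/4^r)·binom(N,r)·binom(N,m), binom(N, m+n-r))`. -/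
theorem stmt12 (F : Type*) [Field F] [CharZero F] (μ : ℝ) (hμ0 : 0 ≤ μ) (hμ1 : μ < 1) :
    ∃ ε₀ : ℝ, 0 < ε₀ ∧
    ∀ ε₁ ε₂ : ℝ, 0 < ε₁ → ε₁ ≤ ε₀ → 0 < ε₂ → ε₂ ≤ ε₀ → ε₁ * ε₂ ≤ 0.001 →
    ∃ c₁ c₂ : ℝ, 0 < c₁ ∧ 0 < c₂ ∧ ∃ n₀ : ℕ, ∀ n : ℕ, n₀ ≤ n →
    ∀ (ψ : ℕ) [NeZero ψ], ψ.Prime →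
      (n : ℝ) ^ (1 + nwGamma μ) ≤ (ψ : ℝ) →
      (ψ : ℝ) ≤ 2 * (n : ℝ) ^ (1 + nwGamma μ) →
      (∀ ψ' : ℕ, ψ'.Prime → (n : ℝ) ^ (1 + nwGamma μ) ≤ (ψ' : ℝ) →
        (ψ' : ℝ) ≤ 2 * (n : ℝ) ^ (1 + nwGamma μ) → ψ ≤ ψ') →
      let N : ℕ := n * ψ
      let r : ℕ := ⌊ε₁ * Real.sqrt n⌋₊
      let m : ℕ := ⌊(N : ℝ) / 2 * (1 - (r : ℝ) * Real.log n / n)⌋₊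
      let p : ℝ := (N : ℝ) ^ (-(μ + (1 - μ) / 2))
      1 - (n : ℝ) ^ (-c₂) ≤
        restrictProb (Fin n × ZMod ψ) p (fun V =>
          (n : ℝ) ^ (-c₁) *
              min (p ^ r / 4 ^ r * (N.choose r : ℝ) * (N.choose m : ℝ))
                (N.choose (m + n - r) : ℝ) ≤
            (Phi F {γ : (Fin n × ZMod ψ) →₀ ℕ | (∀ v, γ v ≤ 1) ∧ (∑ v, γ v) = r} m
              (restrictPoly V (NWpoly F μ n ψ)) : ℝ)) := by
  obtain ⟨n₁, hn₁⟩ := Filter.eventually_atTop.mp eventually_log_pow_three_le_sqrt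
  refine ⟨1, one_pos, fun ε₁ ε₂ hε₁ hε₁' _ _ _ => ⟨1, 1 / 4, one_pos, by norm_num,
    max (max 65536 n₁) ⌈4 * (2 + nwGamma μ)⌉₊, ?_⟩⟩
  intro n hn ψ _ hψ hlo hhi _ N r m p
  have hn0 : 65536 ≤ n := le_trans (le_trans (le_max_left _ _) (le_max_left _ _)) hn
  have hlog := hn₁ n (le_trans (le_trans (le_max_right _ _) (le_max_left _ _)) hn)
  have hnG : 4 * (2 + nwGamma μ) ≤ n :=
    (Nat.le_ceil _).trans (by exact_mod_cast (le_max_right _ _).trans hn)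
  obtain ⟨hnψ, hd, hp0, hp1, hψp, h4, h16⟩ :=
    nw_parameter_bounds hμ0 hμ1 hn0 hnG hψ.pos hlo hhi rfl (p := p) rfl
  obtain ⟨hr, hq0, hq1, hs⟩ :=
    shift_density_bounds hε₁ hε₁' hn0 hψ.two_le hlog (r := r) rfl (m := m) rfl rfl
  have hone : (1 : ℝ) ≤ (ψ : ℝ) ^ ⌊nwDreal μ n (n * ψ)⌋₊ * p ^ n *
      (((m + (n - r) : ℕ) : ℝ) / ((n * ψ : ℕ) : ℝ)) ^ n :=
    calc (1 : ℝ) = 4 ^ n * (1 / 4) ^ n := by rw [← mul_pow]; norm_num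
      _ ≤ _ := by gcongr
  have hZ : (n : ℝ) ≤ (ψ : ℝ) ^ ⌊nwDreal μ n (n * ψ)⌋₊ * p ^ n :=
    le_trans (by exact_mod_cast (Nat.lt_pow_self (by norm_num : 1 < 4)).le) h4
  have hcore := le_restrictProb_choose_div_le_Phi F hψ hnψ hd hr hn0 hp0 hp1 hψp rfl hq0 hq1 hs
    hone hZ h16
  have hc := twelve_div_add_le_rpow hn0
  refine le_trans (by linarith) (hcore.trans (restrictProb_mono hp0.le hp1 fun V hV => ?_))
  refine le_trans ?_ hV
  rw [Real.rpow_neg_one, inv_mul_eq_div, Nat.add_sub_assoc hr]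
  gcongr
  exact min_le_right _ _
end
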